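/- arXiv:1006.4318 — 5 statements merged into one kernel-verified Lean document; each statement's English description precedes it below -/
import Mathlib

section
/- There exists a constant A < ∞ such that for every α ∈ (0,1) and all h₁, h₂, h₃ ∈ Λ_α(S²), ‖(h₁σ*h₂σ*h₃σ)|_{S²}‖_{Λ_α} ≤ A ‖h₁‖_{Λ_α} ‖h₂‖_{Λ_α} ‖h₃‖_{Λ_α}. -/
open MeasureTheory Metric Filter
open scoped ENNReal RealInnerProductSpace

noncomputable section

/-- `ℝ³`, i.e. three-dimensional Euclidean space. -/
abbrev E3 : Type := EuclideanSpace ℝ (Fin 3)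

/-- The unit sphere `S² ⊂ ℝ³`. -/
def sph : Set E3 := Metric.sphere 0 1

/-- Surface measure `σ` on the unit sphere `S²`, realized as the two-dimensional
Hausdorff measure on `ℝ³` restricted to the sphere. -/
def sphMeasure : Measure E3 := (μH[2]).restrict sph

/-- `Q` is (a representative of) the density, with respect to Lebesgue measure on `ℝ³`,
of the convolution `fσ * gσ` of the two finite measures `f dσ` and `g dσ`:
`Q ∈ L¹(ℝ³)` and `∫ φ Q = ∬ φ(x+y) f(x) g(y) dσ dσ` for all test functions `φ`. -/
def IsConvPairDensity (f g Q : E3 → ℂ) : Prop :=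
  Integrable Q volume ∧
  ∀ φ : E3 → ℂ, Continuous φ → HasCompactSupport φ →
    ∫ z, φ z * Q z = ∫ x, ∫ y, φ (x + y) * (f x * g y) ∂sphMeasure ∂sphMeasure

/-- The Hölder norm of order `α` of a function on the sphere:
`sup_{S²} |f| + sup_{x ≠ x' ∈ S²} |x-x'|^{-α} |f(x)-f(x')|` (valued in `ℝ≥0∞`;
`f ∈ Λ_α(S²)` iff this is finite). -/
def holderNormE (α : ℝ) (f : E3 → ℂ) : ℝ≥0∞ :=
  (⨆ x : sph, ENNReal.ofReal ‖f x.1‖) +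
    ⨆ (x : sph) (y : sph), ENNReal.ofReal (‖f x.1 - f y.1‖ / ‖x.1 - y.1‖ ^ α)

/-! Up to an isometry of `ℝ³`, a pair of unit vectors is determined by the norm of its sum.
Averaging over the orthogonal group therefore disintegrates `σ × σ` along `(x, y) ↦ x + y`: the sum
has an explicit radial density, and given its value `z` the pair is uniform on a circle.
Consequently `(fσ * gσ * hσ)(x) = ∫ f ⊗ g ⊗ h dτ_x` for measures `τ_x` on triples of unit vectors
which satisfy `R_* τ_x = τ_{R x}` for every isometry `R` and whose mass is the same finite number
for all `x ∈ S²`; this gives the bound on the supremum. For the Hölder seminorm take `R` with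
`R x = x'` and `‖R y - y‖ ≤ 4 ‖x - x'‖` on the sphere, write the difference of the values at `x'`
and `x` as `∫ ((f ⊗ g ⊗ h) ∘ R - f ⊗ g ⊗ h) dτ_x`, and telescope the integrand. -/

open NormedSpace (normalize)
open scoped NNReal

section InnerProductSpace

variable {V : Type*} [NormedAddCommGroup V] [InnerProductSpace ℝ V]

lemma reflection_orthogonal_singleton_apply (v y : V) :
    (ℝ ∙ v)ᗮ.reflection y = y - (2 * ⟪normalize v, y⟫) • normalize v := by
  rw [Submodule.reflection_orthogonal_apply, Submodule.reflection_singleton_apply,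
    NormedSpace.normalize, real_inner_smul_left, smul_smul]
  simp only [RCLike.ofReal_real_eq_id, id_eq, neg_sub]
  rw [two_smul, ← add_smul]
  congr 2
  ring

lemma norm_normalize_le (v : V) : ‖normalize v‖ ≤ 1 := by
  rcases eq_or_ne v 0 with rfl | hv
  · simp
  · exact (NormedSpace.norm_normalize hv).le

lemma norm_sub_normalize_le {x : V} (hx : ‖x‖ = 1) (n : V) :
    ‖x - normalize n‖ ≤ 2 * ‖x - n‖ := by
  rcases eq_or_ne n 0 with rfl | hn
  · simp [hx]
  have hdist : ‖n - normalize n‖ ≤ ‖x - n‖ := by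
    have : n - normalize n = (‖n‖ - ‖x‖) • normalize n := by
      rw [sub_smul, NormedSpace.norm_smul_normalize, hx, one_smul]
    rw [this, norm_smul, NormedSpace.norm_normalize hn, mul_one, Real.norm_eq_abs, norm_sub_rev x n]
    exact abs_norm_sub_norm_le n x
  calc ‖x - normalize n‖ ≤ ‖x - n‖ + ‖n - normalize n‖ := norm_sub_le_norm_sub_add_norm_sub ..
    _ ≤ 2 * ‖x - n‖ := by linarith

lemma norm_inner_smul_sub_inner_smul_le {u v : V} (hu : ‖u‖ ≤ 1) (hv : ‖v‖ ≤ 1) (y : V) :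
    ‖⟪u, y⟫ • u - ⟪v, y⟫ • v‖ ≤ 2 * ‖u - v‖ * ‖y‖ := by
  have hsplit : ⟪u, y⟫ • u - ⟪v, y⟫ • v = ⟪u, y⟫ • (u - v) + ⟪u - v, y⟫ • v := by
    rw [inner_sub_left]
    module
  calc ‖⟪u, y⟫ • u - ⟪v, y⟫ • v‖
      ≤ ‖u‖ * ‖y‖ * ‖u - v‖ + ‖u - v‖ * ‖y‖ * ‖v‖ := by
        rw [hsplit]
        refine (norm_add_le _ _).trans ?_
        rw [norm_smul, norm_smul]
        gcongr <;> exact norm_inner_le_norm ..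
    _ ≤ 1 * ‖y‖ * ‖u - v‖ + ‖u - v‖ * ‖y‖ * 1 := by gcongr
    _ = 2 * ‖u - v‖ * ‖y‖ := by ring

lemma exists_linearIsometryEquiv_apply_eq_norm_sub_le {x x' : V} (hx : ‖x‖ = 1) (hx' : ‖x'‖ = 1) :
    ∃ R : V ≃ₗᵢ[ℝ] V, R x = x' ∧ ∀ y, ‖R y - y‖ ≤ 4 * ‖x - x'‖ * ‖y‖ := by
  set S := (ℝ ∙ x)ᗮ.reflection
  set T := (ℝ ∙ (x + x'))ᗮ.reflection with hT
  set m := normalize (x + x')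
  have hTx : T x = -x' := by
    rw [hT, ← sub_neg_eq_add]
    exact Submodule.reflection_sub (by rw [norm_neg, hx, hx'])
  have hm : ‖x - m‖ ≤ ‖x - x'‖ := by
    calc ‖x - m‖ = ‖x - normalize ((1 / 2 : ℝ) • (x + x'))‖ := by
          rw [NormedSpace.normalize_smul_of_pos one_half_pos]
      _ ≤ 2 * ‖x - (1 / 2 : ℝ) • (x + x')‖ := norm_sub_normalize_le hx _
      _ = 2 * ‖(1 / 2 : ℝ) • (x - x')‖ := by congr 2; module
      _ = ‖x - x'‖ := by rw [norm_smul]; norm_num; ring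
  refine ⟨S.trans T, ?_, fun y => ?_⟩
  · rw [LinearIsometryEquiv.trans_apply, Submodule.reflection_orthogonalComplement_singleton_eq_neg,
      map_neg, hTx, neg_neg]
  calc ‖T (S y) - y‖ = ‖T (S y) - T (T y)‖ := by rw [hT, Submodule.reflection_reflection]
    _ = ‖S y - T y‖ := by rw [← map_sub, LinearIsometryEquiv.norm_map]
    _ = ‖(2 : ℝ) • (⟪m, y⟫ • m - ⟪x, y⟫ • x)‖ := by
      rw [reflection_orthogonal_singleton_apply, reflection_orthogonal_singleton_apply,
        NormedSpace.normalize_eq_self_of_norm_eq_one hx]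
      congr 1
      module
    _ = 2 * ‖⟪x, y⟫ • x - ⟪m, y⟫ • m‖ := by rw [norm_smul, norm_sub_rev, Real.norm_two]
    _ ≤ 2 * (2 * ‖x - m‖ * ‖y‖) := by
      gcongr
      exact norm_inner_smul_sub_inner_smul_le hx.le (norm_normalize_le _) y
    _ ≤ 4 * ‖x - x'‖ * ‖y‖ := by nlinarith [norm_nonneg y]

lemma exists_linearIsometryEquiv_apply_eq {x x' : V} (h : ‖x‖ = ‖x'‖) :
    ∃ R : V ≃ₗᵢ[ℝ] V, R x = x' :=
  ⟨_, Submodule.reflection_sub h⟩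

lemma exists_linearIsometryEquiv_apply_eq_apply_eq {x y x' y' : V} (hx : ‖x‖ = ‖x'‖)
    (hy : ‖y‖ = ‖y'‖) (hadd : ‖x + y‖ = ‖x' + y'‖) :
    ∃ R : V ≃ₗᵢ[ℝ] V, R x = x' ∧ R y = y' := by
  obtain ⟨S, hS⟩ := exists_linearIsometryEquiv_apply_eq hx
  set T := (ℝ ∙ (S y - y'))ᗮ.reflection
  have hinner : ⟪x, y⟫ = ⟪x', y'⟫ := by
    simp only [real_inner_eq_norm_add_mul_self_sub_norm_mul_self_sub_norm_mul_self_div_two, hx, hy,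
      hadd]
  have hTx' : T x' = x' := by
    apply Submodule.reflection_mem_subspace_eq_self
    rw [Submodule.mem_orthogonal_singleton_iff_inner_left, inner_sub_right, sub_eq_zero, ← hinner,
      ← hS, LinearIsometryEquiv.inner_map_map]
  have hTy : T (S y) = y' := Submodule.reflection_sub (by rw [LinearIsometryEquiv.norm_map, hy])
  exact ⟨S.trans T, by simp [hS, hTx'], by simp [hTy]⟩

/-- A parametrization of the unit vectors `p` such that `z - p` is a unit vector as well: for
`‖z‖ ≤ 2` they form the sphere of centre `z / 2` and radius `√(1 - ‖z‖² / 4)` in the hyperplane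
through `z / 2` orthogonal to `z`, and `w` selects the direction of `p - z / 2`. -/
def circlePoint (z w : V) : V :=
  (1 / 2 : ℝ) • z + √(1 - ‖z‖ ^ 2 / 4) • normalize ((ℝ ∙ z)ᗮ.starProjection w)

lemma starProjection_orthogonal_singleton (z w : V) :
    (ℝ ∙ z)ᗮ.starProjection w = w - (⟪z, w⟫ / ‖z‖ ^ 2) • z := by
  rw [Submodule.starProjection_orthogonal_val, Submodule.starProjection_singleton,
    RCLike.ofReal_real_eq_id, id]

lemma circlePoint_map (R : V ≃ₗᵢ[ℝ] V) (z w : V) :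
    circlePoint (R z) (R w) = R (circlePoint z w) := by
  simp only [circlePoint, starProjection_orthogonal_singleton, NormedSpace.normalize,
    LinearIsometryEquiv.norm_map, LinearIsometryEquiv.inner_map_map, ← map_smul, ← map_sub,
    ← map_add]

lemma norm_circlePoint {z w : V} (hz : ‖z‖ ≤ 2) (hw : w ∉ ℝ ∙ z) :
    ‖circlePoint z w‖ = 1 ∧ ‖z - circlePoint z w‖ = 1 := by
  set p := (ℝ ∙ z)ᗮ.starProjection w with hp
  set r := √(1 - ‖z‖ ^ 2 / 4)
  have hcircle : circlePoint z w = (1 / 2 : ℝ) • z + r • normalize p := rfl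
  have hr_sq : r ^ 2 = 1 - ‖z‖ ^ 2 / 4 := Real.sq_sqrt (by nlinarith [norm_nonneg z])
  have hp_ne : p ≠ 0 := by
    rw [hp, Submodule.starProjection_orthogonal_val, sub_ne_zero]
    exact fun h => hw (Submodule.starProjection_eq_self_iff.1 h.symm)
  have horth : ⟪(1 / 2 : ℝ) • z, r • normalize p⟫ = 0 := by
    have hzp : ⟪z, p⟫ = 0 := Submodule.mem_orthogonal_singleton_iff_inner_right.1
      (Submodule.starProjection_apply_mem _ w)
    simp only [NormedSpace.normalize, real_inner_smul_left, real_inner_smul_right, hzp, mul_zero]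
  have hsum : ‖(1 / 2 : ℝ) • z‖ ^ 2 + ‖r • normalize p‖ ^ 2 = 1 := by
    rw [norm_smul, norm_smul, NormedSpace.norm_normalize hp_ne, mul_one,
      mul_pow, Real.norm_eq_abs r, sq_abs, hr_sq]
    norm_num
    ring
  have hsub : z - circlePoint z w = (1 / 2 : ℝ) • z - r • normalize p := by
    rw [hcircle]
    module
  constructor
  · rw [← pow_eq_one_iff_of_nonneg (norm_nonneg _) two_ne_zero, hcircle, norm_add_sq_real,
      horth, mul_zero, add_zero, hsum]
  · rw [← pow_eq_one_iff_of_nonneg (norm_nonneg _) two_ne_zero, hsub, norm_sub_sq_real, horth,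
      mul_zero, sub_zero, hsum]

lemma exists_linearIsometryEquiv_circlePoint_eq {e w x y : V} (he : ‖e‖ = 1) (hw : w ∉ ℝ ∙ e)
    (hx : ‖x‖ = 1) (hy : ‖y‖ = 1) :
    ∃ R : V ≃ₗᵢ[ℝ] V, R (circlePoint (‖x + y‖ • e) w) = x ∧
      R (‖x + y‖ • e - circlePoint (‖x + y‖ • e) w) = y := by
  have hnorm : ‖‖x + y‖ • e‖ = ‖x + y‖ := by rw [norm_smul, he, mul_one, norm_norm]
  have hle : ‖‖x + y‖ • e‖ ≤ 2 := by
    rw [hnorm]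
    linarith [norm_add_le x y]
  obtain ⟨hp, hq⟩ := norm_circlePoint hle fun h => hw (Submodule.span_singleton_smul_le ℝ _ e h)
  exact exists_linearIsometryEquiv_apply_eq_apply_eq (hp.trans hx.symm) (hq.trans hy.symm)
    (by rw [add_sub_cancel, hnorm])

lemma measurable_circlePoint [MeasurableSpace V] [BorelSpace V] [SecondCountableTopology V] :
    Measurable fun p : V × V => circlePoint p.1 p.2 := by
  simp only [circlePoint, starProjection_orthogonal_singleton, NormedSpace.normalize]
  fun_prop

end InnerProductSpace

section InvariantMeasure

/-- If almost every orbit of a group action is determined by `q`, then an invariant measure is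
determined by its image under `q`: both are averages, over a probability measure on the group, of
translates of a section `s`. -/
lemma measure_eq_of_map_eq_of_smulInvariant {G X Y : Type*} [Group G] [MulAction G X]
    [MeasurableSpace G] [MeasurableMul G] [MeasurableSpace X] [MeasurableSpace Y]
    [MeasurableSMul₂ G X] (m : Measure G) [IsProbabilityMeasure m] [m.IsMulRightInvariant]
    {μ ν : Measure X} [SFinite μ] [SFinite ν] [SMulInvariantMeasure G X μ]
    [SMulInvariantMeasure G X ν] {q : X → Y} {s : Y → X} (hq : Measurable q) (hs : Measurable s)
    (hμ : ∀ᵐ x ∂μ, x ∈ MulAction.orbit G (s (q x))) (hν : ∀ᵐ x ∂ν, x ∈ MulAction.orbit G (s (q x)))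
    (hmap : μ.map q = ν.map q) : μ = ν := by
  have haverage : ∀ (ρ : Measure X) [SFinite ρ] [SMulInvariantMeasure G X ρ],
      (∀ᵐ x ∂ρ, x ∈ MulAction.orbit G (s (q x))) → ∀ F : X → ℝ≥0∞, Measurable F →
      ∫⁻ x, F x ∂ρ = ∫⁻ y, ∫⁻ g, F (g • s y) ∂m ∂(ρ.map q) := by
    intro ρ _ _ hρ F hF
    calc ∫⁻ x, F x ∂ρ = ∫⁻ _ : G, ∫⁻ x, F x ∂ρ ∂m := by simp
      _ = ∫⁻ g : G, ∫⁻ x, F (g • x) ∂ρ ∂m :=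
        lintegral_congr fun g => ((measurePreserving_smul g ρ).lintegral_comp hF).symm
      _ = ∫⁻ x, ∫⁻ g : G, F (g • x) ∂m ∂ρ := lintegral_lintegral_swap (by fun_prop)
      _ = ∫⁻ x, ∫⁻ g : G, F (g • s (q x)) ∂m ∂ρ := by
        refine lintegral_congr_ae (hρ.mono ?_)
        rintro x ⟨g₀, hg₀⟩
        calc ∫⁻ g : G, F (g • x) ∂m = ∫⁻ g : G, F ((g * g₀) • s (q x)) ∂m := by
              simp only [mul_smul]
              rw [show g₀ • s (q x) = x from hg₀]
          _ = ∫⁻ g : G, F (g • s (q x)) ∂m :=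
            lintegral_mul_right_eq_self (fun g => F (g • s (q x))) g₀
      _ = ∫⁻ y, ∫⁻ g, F (g • s y) ∂m ∂(ρ.map q) := by
        rw [lintegral_map _ hq]
        exact Measurable.lintegral_prod_right' (f := fun p : Y × G => F (p.2 • s p.1)) (by fun_prop)
  refine Measure.ext_of_lintegral _ fun F hF => ?_
  rw [haverage μ hμ F hF, haverage ν hν F hF, hmap]

lemma exists_isProbabilityMeasure_isMulRightInvariant (G : Type*) [Group G] [TopologicalSpace G]
    [IsTopologicalGroup G] [CompactSpace G] [MeasurableSpace G] [BorelSpace G] :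
    ∃ m : Measure G, IsProbabilityMeasure m ∧ m.IsMulRightInvariant := by
  refine ⟨(Measure.haarMeasure ⊤).inv, ⟨?_⟩, inferInstance⟩
  rw [Measure.inv_apply, Set.inv_univ]
  exact Measure.haarMeasure_self

variable {V : Type*} [NormedAddCommGroup V] [InnerProductSpace ℝ V] [FiniteDimensional ℝ V]

instance : CompactSpace (unitary (V →L[ℝ] V)) := by
  have : ContinuousStar (V →L[ℝ] V) :=
    ⟨(ContinuousLinearMap.adjoint (𝕜 := ℝ) (E := V) (F := V)).continuous⟩
  have : ProperSpace (V →L[ℝ] V) := FiniteDimensional.proper ℝ _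
  refine isCompact_iff_compactSpace.1 (isCompact_of_isClosed_isBounded isClosed_unitary
    ((isBounded_closedBall (x := 0) (r := 1)).subset fun u hu => ?_))
  rw [mem_closedBall_zero_iff]
  exact ContinuousLinearMap.opNorm_le_bound _ zero_le_one fun x =>
    (Unitary.norm_map ⟨u, hu⟩ x).le.trans_eq (one_mul _).symm

instance : ContinuousSMul (unitary (V →L[ℝ] V)) V where
  continuous_smul := by
    change Continuous fun p : unitary (V →L[ℝ] V) × V => (p.1 : V →L[ℝ] V) p.2
    fun_prop

variable [MeasurableSpace V] [BorelSpace V]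

lemma measure_eq_of_map_linearIsometryEquiv_eq [Nontrivial V] {μ ν : Measure V} [SFinite μ]
    [SFinite ν] (hμ : ∀ R : V ≃ₗᵢ[ℝ] V, μ.map R = μ) (hν : ∀ R : V ≃ₗᵢ[ℝ] V, ν.map R = ν)
    (hμ_norm : ∀ᵐ x ∂μ, ‖x‖ = 1) (hν_norm : ∀ᵐ x ∂ν, ‖x‖ = 1) (h : μ Set.univ = ν Set.univ) :
    μ = ν := by
  let G := unitary (V →L[ℝ] V)
  obtain ⟨m, _, _⟩ := exists_isProbabilityMeasure_isMulRightInvariant G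
  have hinv : ∀ ρ : Measure V, (∀ R : V ≃ₗᵢ[ℝ] V, ρ.map R = ρ) → SMulInvariantMeasure G V ρ :=
    fun ρ hρ => ((smulInvariantMeasure_tfae G ρ).out 0 5).2 fun g =>
      hρ (Unitary.linearIsometryEquiv g)
  have := hinv μ hμ
  have := hinv ν hν
  obtain ⟨e, he⟩ := exists_norm_eq V zero_le_one
  have horbit : ∀ x : V, ‖x‖ = 1 → x ∈ MulAction.orbit G e := fun x hx => by
    obtain ⟨R, hR⟩ := exists_linearIsometryEquiv_apply_eq (he.trans hx.symm)
    exact ⟨Unitary.linearIsometryEquiv.symm R, hR⟩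
  refine measure_eq_of_map_eq_of_smulInvariant m (q := fun _ => ()) (s := fun _ => e)
    measurable_const measurable_const (hμ_norm.mono horbit) (hν_norm.mono horbit) ?_
  rw [Measure.map_const, Measure.map_const, h]

lemma measure_eq_of_map_norm_add_eq (hV : 1 < Module.finrank ℝ V) {μ ν : Measure (V × V)}
    [SFinite μ] [SFinite ν] (hμ : ∀ R : V ≃ₗᵢ[ℝ] V, μ.map (Prod.map R R) = μ)
    (hν : ∀ R : V ≃ₗᵢ[ℝ] V, ν.map (Prod.map R R) = ν)
    (hμ_norm : ∀ᵐ p ∂μ, ‖p.1‖ = 1 ∧ ‖p.2‖ = 1) (hν_norm : ∀ᵐ p ∂ν, ‖p.1‖ = 1 ∧ ‖p.2‖ = 1)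
    (h : μ.map (fun p => ‖p.1 + p.2‖) = ν.map (fun p => ‖p.1 + p.2‖)) : μ = ν := by
  let G := unitary (V →L[ℝ] V)
  obtain ⟨m, _, _⟩ := exists_isProbabilityMeasure_isMulRightInvariant G
  have hinv : ∀ ρ : Measure (V × V), (∀ R : V ≃ₗᵢ[ℝ] V, ρ.map (Prod.map R R) = ρ) →
      SMulInvariantMeasure G (V × V) ρ :=
    fun ρ hρ => ((smulInvariantMeasure_tfae G ρ).out 0 5).2 fun g =>
      hρ (Unitary.linearIsometryEquiv g)
  have := hinv μ hμ
  have := hinv ν hν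
  have : Nontrivial V := Module.nontrivial_of_finrank_pos (zero_lt_one.trans hV)
  obtain ⟨e, he⟩ := exists_norm_eq V zero_le_one
  obtain ⟨w, hw⟩ : ∃ w, w ∉ ℝ ∙ e := by
    refine SetLike.exists_not_mem_of_ne_top _ fun htop => ?_
    have he_ne : e ≠ 0 := norm_ne_zero_iff.1 (he.trans_ne one_ne_zero)
    rw [← finrank_top ℝ V, ← htop, finrank_span_singleton he_ne] at hV
    exact hV.false
  let s : ℝ → V × V := fun t => (circlePoint (t • e) w, t • e - circlePoint (t • e) w)
  have hs : Measurable s := by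
    have : Measurable fun t : ℝ => circlePoint (t • e) w :=
      measurable_circlePoint.comp (g := fun p : V × V => circlePoint p.1 p.2)
        (by fun_prop : Measurable fun t : ℝ => (t • e, w))
    fun_prop
  have horbit : ∀ p : V × V, ‖p.1‖ = 1 ∧ ‖p.2‖ = 1 → p ∈ MulAction.orbit G (s ‖p.1 + p.2‖) := by
    rintro ⟨x, y⟩ ⟨hx, hy⟩
    obtain ⟨R, hRx, hRy⟩ := exists_linearIsometryEquiv_circlePoint_eq he hw hx hy
    exact ⟨Unitary.linearIsometryEquiv.symm R, Prod.ext hRx hRy⟩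
  exact measure_eq_of_map_eq_of_smulInvariant m (by fun_prop) hs
    (hμ_norm.mono horbit) (hν_norm.mono horbit) h

end InvariantMeasure

section HausdorffMeasure

variable {V : Type*} [NormedAddCommGroup V] [InnerProductSpace ℝ V] [FiniteDimensional ℝ V]
  [MeasurableSpace V] [BorelSpace V]

lemma hausdorffMeasure_hemisphere_lt_top {n : ℕ} (hn : Module.finrank ℝ V = n + 1) {v : V}
    (hv : ‖v‖ = 1) : μH[n] {x : V | ‖x‖ = 1 ∧ ⟪v, x⟫ ≤ 0} < ⊤ := by
  let f : (ℝ ∙ v)ᗮ → V := fun w => stereoInvFunAux v w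
  have hf : ContDiff ℝ 1 f := contDiff_stereoInvFunAux.comp (ℝ ∙ v)ᗮ.subtypeL.contDiff
  have hcompact : IsCompact (closedBall (0 : (ℝ ∙ v)ᗮ) 2) := isCompact_closedBall _ _
  obtain ⟨K, hK⟩ :=
    hf.contDiffOn.exists_lipschitzOnWith one_ne_zero (convex_closedBall _ _) hcompact
  have hsubset : {x : V | ‖x‖ = 1 ∧ ⟪v, x⟫ ≤ 0} ⊆ f '' closedBall 0 2 := by
    rintro x ⟨hx, hvx⟩
    have hne : x ≠ v := by
      rintro rfl
      rw [real_inner_self_eq_norm_sq, hx] at hvx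
      norm_num at hvx
    refine ⟨stereoToFun v x, ?_,
      congrArg Subtype.val (stereo_left_inv hv (x := ⟨x, mem_sphere_zero_iff_norm.2 hx⟩) hne)⟩
    rw [mem_closedBall_zero_iff, stereoToFun_apply, norm_smul, innerSL_apply_apply,
      Real.norm_of_nonneg (div_nonneg zero_le_two (by linarith))]
    calc 2 / (1 - ⟪v, x⟫) * ‖(ℝ ∙ v)ᗮ.orthogonalProjectionOnto x‖ ≤ 2 / 1 * 1 := by
          gcongr
          · linarith
          · exact (Submodule.norm_orthogonalProjectionOnto_apply_le _ x).trans hx.le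
      _ = 2 := by norm_num
  have hfinrank : Module.finrank ℝ (ℝ ∙ v)ᗮ = n :=
    have : Fact (Module.finrank ℝ V = n + 1) := ⟨hn⟩
    Submodule.finrank_orthogonal_span_singleton (norm_ne_zero_iff.1 (hv.trans_ne one_ne_zero))
  have hlt : μH[n] (closedBall (0 : (ℝ ∙ v)ᗮ) 2) < ⊤ := by
    rw [← hfinrank]
    exact hcompact.measure_lt_top
  refine (measure_mono hsubset).trans_lt
    ((hK.hausdorffMeasure_image_le n.cast_nonneg).trans_lt (ENNReal.mul_lt_top ?_ hlt))
  simp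

lemma hausdorffMeasure_sphere_lt_top {n : ℕ} (hn : Module.finrank ℝ V = n + 1) :
    μH[n] (sphere (0 : V) 1) < ⊤ := by
  have : Nontrivial V := Module.nontrivial_of_finrank_pos (R := ℝ) (hn ▸ n.succ_pos)
  obtain ⟨v, hv⟩ := exists_norm_eq V zero_le_one
  have hcover : sphere (0 : V) 1 ⊆ {x | ‖x‖ = 1 ∧ ⟪v, x⟫ ≤ 0} ∪ {x | ‖x‖ = 1 ∧ ⟪-v, x⟫ ≤ 0} := by
    intro x hx
    have hx1 := mem_sphere_zero_iff_norm.1 hx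
    rcases le_total ⟪v, x⟫ 0 with h | h
    · exact .inl ⟨hx1, h⟩
    · exact .inr ⟨hx1, by rwa [inner_neg_left, neg_nonpos]⟩
  exact (measure_mono hcover).trans_lt (measure_union_lt_top
    (hausdorffMeasure_hemisphere_lt_top hn hv)
    (hausdorffMeasure_hemisphere_lt_top hn ((norm_neg v).trans hv)))

end HausdorffMeasure

section RadialIntegration

lemma lintegral_norm_eq_measure_ball_mul {V : Type*} [NormedAddCommGroup V] [NormedSpace ℝ V]
    [FiniteDimensional ℝ V] [Nontrivial V] [MeasurableSpace V] [BorelSpace V] (μ : Measure V)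
    [μ.IsAddHaarMeasure] {f : ℝ → ℝ≥0∞} (hf : Measurable f) :
    ∫⁻ x, f ‖x‖ ∂μ = Module.finrank ℝ V * μ (ball 0 1) *
      ∫⁻ r in Set.Ioi 0, ENNReal.ofReal (r ^ (Module.finrank ℝ V - 1)) * f r := by
  set n := Module.finrank ℝ V - 1
  calc ∫⁻ x, f ‖x‖ ∂μ = ∫⁻ x : ({0}ᶜ : Set V), f ‖x.1‖ ∂(μ.comap (↑)) := by
        rw [lintegral_subtype_comap (measurableSet_singleton _).compl fun x => f ‖x‖,
          restrict_compl_singleton]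
    _ = ∫⁻ p, f p.2.1 ∂(μ.toSphere.prod (.volumeIoiPow n)) := by
        rw [← μ.measurePreserving_homeomorphUnitSphereProd.lintegral_comp (by fun_prop)]
        simp only [homeomorphUnitSphereProd_apply_snd_coe]
    _ = μ.toSphere Set.univ * ∫⁻ r : Set.Ioi (0 : ℝ), f r ∂(.volumeIoiPow n) := by
        rw [lintegral_prod _ (by fun_prop)]
        simp only [lintegral_const]
        rw [mul_comm]
    _ = μ.toSphere Set.univ * ∫⁻ r in Set.Ioi 0, ENNReal.ofReal (r ^ n) * f r := by
        rw [Measure.volumeIoiPow,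
          lintegral_withDensity_eq_lintegral_mul _ (by fun_prop) (by fun_prop),
          ← lintegral_subtype_comap measurableSet_Ioi fun r => ENNReal.ofReal (r ^ n) * f r]
        rfl
    _ = _ := by rw [Measure.toSphere_apply_univ]

lemma lintegral_two_mul_comp_sq (g : ℝ → ℝ≥0∞) :
    ∫⁻ r in Set.Ioi 0, ENNReal.ofReal (2 * r) * g (r ^ 2) = ∫⁻ s in Set.Ioi 0, g s := by
  have himage : (fun r : ℝ => r ^ 2) '' Set.Ioi 0 = Set.Ioi 0 := by
    ext s
    refine ⟨?_, fun hs => ⟨√s, Real.sqrt_pos.2 hs, Real.sq_sqrt hs.le⟩⟩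
    rintro ⟨r, hr, rfl⟩
    exact pow_pos (Set.mem_Ioi.1 hr) 2
  have hinj : Set.InjOn (fun r : ℝ => r ^ 2) (Set.Ioi 0) :=
    (pow_left_strictMonoOn₀ two_ne_zero).injOn.mono fun r hr => hr.le
  have hderiv : ∀ r ∈ Set.Ioi (0 : ℝ), HasDerivWithinAt (fun r => r ^ 2) (2 * r) (Set.Ioi 0) r :=
    fun r _ => by simpa using (hasDerivAt_pow 2 r).hasDerivWithinAt
  have hsubst := lintegral_image_eq_lintegral_abs_deriv_mul measurableSet_Ioi hderiv hinj g
  rw [himage] at hsubst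
  rw [hsubst]
  refine setLIntegral_congr_fun measurableSet_Ioi fun r hr => ?_
  rw [abs_of_pos (mul_pos two_pos hr)]

lemma lintegral_normSq_euclideanPlane {g : ℝ → ℝ≥0∞} (hg : Measurable g) :
    ∫⁻ v : EuclideanSpace ℝ (Fin 2), g (‖v‖ ^ 2)
      = ENNReal.ofReal Real.pi * ∫⁻ s in Set.Ioi 0, g s := by
  rw [lintegral_norm_eq_measure_ball_mul volume (f := fun r => g (r ^ 2)) (by fun_prop),
    EuclideanSpace.volume_ball_fin_two, finrank_euclideanSpace_fin, ← lintegral_two_mul_comp_sq g]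
  have hcoeff : ∀ r : ℝ, ENNReal.ofReal (2 * r) * g (r ^ 2)
      = 2 * (ENNReal.ofReal (r ^ (2 - 1)) * g (r ^ 2)) := by
    intro r
    rw [pow_one, ENNReal.ofReal_mul zero_le_two, ENNReal.ofReal_ofNat, mul_assoc]
  simp only [hcoeff]
  rw [lintegral_const_mul _ (by fun_prop), ← mul_assoc, ← mul_assoc]
  congr 1
  simp [mul_comm]

lemma lintegral_Ioo_neg_comp_div {c : ℝ} (hc : 0 < c) (k : ℝ → ℝ≥0∞) :
    ∫⁻ a in Set.Ioo (-c) c, k (a / c) = ENNReal.ofReal c * ∫⁻ t in Set.Ioo (-1) 1, k t := by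
  have hderiv : ∀ t ∈ Set.Ioo (-1 : ℝ) 1,
      HasDerivWithinAt (fun t => c * t) c (Set.Ioo (-1 : ℝ) 1) t :=
    fun t _ => by simpa using ((hasDerivAt_id t).const_mul c).hasDerivWithinAt
  have hsubst := lintegral_image_eq_lintegral_abs_deriv_mul measurableSet_Ioo hderiv
    (mul_right_injective₀ hc.ne').injOn fun a => k (a / c)
  rw [Set.image_mul_left_Ioo hc, mul_neg, mul_one] at hsubst
  simp_rw [hsubst, abs_of_pos hc, mul_div_cancel_left₀ _ hc.ne']
  exact lintegral_const_mul' _ _ ENNReal.ofReal_ne_top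

end RadialIntegration

section Sphere

lemma measurePreserving_zero_succ (n : ℕ) :
    MeasurePreserving fun y : EuclideanSpace ℝ (Fin (n + 1)) =>
      (y 0, WithLp.toLp 2 fun i : Fin n => y i.succ) :=
  ((MeasurePreserving.id volume).prod (PiLp.volume_preserving_toLp (Fin n))).comp
    ((volume_preserving_piFinSuccAbove (fun _ => ℝ) 0).comp (PiLp.volume_preserving_ofLp _))

lemma lintegral_coord_normSq {G : ℝ × ℝ → ℝ≥0∞} (hG : Measurable G) :
    ∫⁻ y : E3, G (y 0, ‖y‖ ^ 2)
      = ENNReal.ofReal Real.pi * ∫⁻ p in {p : ℝ × ℝ | p.1 ^ 2 < p.2}, G p := by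
  have hnorm : ∀ y : E3, ‖y‖ ^ 2 = y 0 ^ 2 + ‖WithLp.toLp 2 fun i : Fin 2 => y i.succ‖ ^ 2 := by
    intro y
    simp only [EuclideanSpace.norm_sq_eq, Fin.sum_univ_succ (n := 2), Real.norm_eq_abs, sq_abs]
  have hshift : ∀ a : ℝ,
      ∫⁻ s in Set.Ioi 0, G (a, a ^ 2 + s) = ∫⁻ q in Set.Ioi (a ^ 2), G (a, q) := by
    intro a
    rw [← lintegral_indicator measurableSet_Ioi, ← lintegral_indicator measurableSet_Ioi,
      ← lintegral_add_left_eq_self ((Set.Ioi (a ^ 2)).indicator fun q => G (a, q)) (a ^ 2)]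
    simp [Set.indicator]
  have hregion : MeasurableSet {p : ℝ × ℝ | p.1 ^ 2 < p.2} :=
    measurableSet_lt (by fun_prop) (by fun_prop)
  calc ∫⁻ y : E3, G (y 0, ‖y‖ ^ 2)
      = ∫⁻ p : ℝ × EuclideanSpace ℝ (Fin 2), G (p.1, p.1 ^ 2 + ‖p.2‖ ^ 2) := by
        simp_rw [hnorm]
        exact (measurePreserving_zero_succ 2).lintegral_comp
          (f := fun p => G (p.1, p.1 ^ 2 + ‖p.2‖ ^ 2)) (by fun_prop)
    _ = ∫⁻ a, ENNReal.ofReal Real.pi * ∫⁻ q in Set.Ioi (a ^ 2), G (a, q) := by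
        rw [Measure.volume_eq_prod, lintegral_prod _ (by fun_prop)]
        refine lintegral_congr fun a => ?_
        rw [← hshift,
          ← lintegral_normSq_euclideanPlane (g := fun s => G (a, a ^ 2 + s)) (by fun_prop)]
    _ = ENNReal.ofReal Real.pi * ∫⁻ p in {p : ℝ × ℝ | p.1 ^ 2 < p.2}, G p := by
        rw [lintegral_const_mul' _ _ ENNReal.ofReal_ne_top, ← lintegral_indicator hregion,
          Measure.volume_eq_prod, lintegral_prod _ (hG.indicator hregion).aemeasurable]
        simp_rw [← lintegral_indicator measurableSet_Ioi]
        rfl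

lemma lintegral_ball_coord_div_norm {k : ℝ → ℝ≥0∞} (hk : Measurable k) :
    ∫⁻ y : E3 in ball 0 1, k (y 0 / ‖y‖) = ENNReal.ofReal Real.pi *
      (∫⁻ q in Set.Ioo 0 1, ENNReal.ofReal √q) * ∫⁻ t in Set.Ioo (-1) 1, k t := by
  let G : ℝ × ℝ → ℝ≥0∞ := fun p => (Set.Iio 1).indicator (fun q => k (p.1 / √q)) p.2
  have hG : Measurable G :=
    Measurable.indicator (f := fun p : ℝ × ℝ => k (p.1 / √p.2)) (by fun_prop)
      (measurable_snd measurableSet_Iio)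
  have hregion : MeasurableSet {p : ℝ × ℝ | p.1 ^ 2 < p.2} :=
    measurableSet_lt (by fun_prop) (by fun_prop)
  have hsection : ∀ q, ∫⁻ a, {p : ℝ × ℝ | p.1 ^ 2 < p.2}.indicator G (a, q)
      = (Set.Ioo 0 1).indicator
          (fun q => ENNReal.ofReal √q * ∫⁻ t in Set.Ioo (-1) 1, k t) q := by
    intro q
    by_cases hq : q ∈ Set.Ioo 0 1
    · rw [Set.indicator_of_mem hq, ← lintegral_Ioo_neg_comp_div (Real.sqrt_pos.2 hq.1),
        ← lintegral_indicator measurableSet_Ioo]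
      simp [Set.indicator, G, hq.2, Real.sq_lt]
    · rw [Set.indicator_of_notMem hq]
      refine (lintegral_congr fun a => Set.indicator_apply_eq_zero.2 fun ha => ?_).trans
        lintegral_zero
      have hle : ¬q < 1 := fun h => hq ⟨(sq_nonneg a).trans_lt ha, h⟩
      simp only [G, Set.indicator, Set.mem_Iio, hle, if_false]
  calc ∫⁻ y : E3 in ball 0 1, k (y 0 / ‖y‖) = ∫⁻ y : E3, G (y 0, ‖y‖ ^ 2) := by
        rw [← lintegral_indicator measurableSet_ball]
        simp [Set.indicator, G, Real.sqrt_sq]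
    _ = ENNReal.ofReal Real.pi * ∫⁻ q, ∫⁻ a, {p : ℝ × ℝ | p.1 ^ 2 < p.2}.indicator G (a, q) := by
        rw [lintegral_coord_normSq hG, ← lintegral_indicator hregion, Measure.volume_eq_prod,
          lintegral_prod_symm _ (hG.indicator hregion).aemeasurable]
    _ = _ := by
        simp_rw [hsection]
        rw [lintegral_indicator measurableSet_Ioo, lintegral_mul_const _ (by fun_prop), mul_assoc]

end Sphere

section SphereMeasure

instance : IsFiniteMeasure sphMeasure where
  measure_univ_lt_top := by
    rw [sphMeasure, Measure.restrict_apply_univ]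
    exact_mod_cast hausdorffMeasure_sphere_lt_top (V := E3) (n := 2) finrank_euclideanSpace_fin

lemma ae_norm_eq_one : ∀ᵐ x ∂sphMeasure, ‖x‖ = 1 := by
  filter_upwards [ae_restrict_mem isClosed_sphere.measurableSet] with x hx
  exact mem_sphere_zero_iff_norm.1 hx

lemma measurePreserving_sphMeasure (R : E3 ≃ₗᵢ[ℝ] E3) :
    MeasurePreserving R sphMeasure sphMeasure := by
  have h := (R.toIsometryEquiv.measurePreserving_hausdorffMeasure 2).restrict_preimage
    (isClosed_sphere (x := (0 : E3)) (ε := 1)).measurableSet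
  rwa [show R.toIsometryEquiv ⁻¹' sphere 0 1 = sphere 0 1 by ext; simp] at h

lemma measurable_normalize : Measurable fun y : E3 => normalize y := by
  simp only [NormedSpace.normalize]
  fun_prop

lemma map_map_normalize_restrict_ball (R : E3 ≃ₗᵢ[ℝ] E3) :
    ((volume.restrict (ball 0 1)).map fun y : E3 => normalize y).map R
      = (volume.restrict (ball 0 1)).map fun y : E3 => normalize y := by
  have hball : MeasurePreserving R (volume.restrict (ball 0 1)) (volume.restrict (ball 0 1)) := by
    have h := R.measurePreserving.restrict_preimage (measurableSet_ball (x := (0 : E3)) (ε := 1))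
    rwa [show R ⁻¹' ball 0 1 = ball 0 1 by ext; simp] at h
  have hcomm : (R ∘ fun y => normalize y) = (fun y : E3 => normalize y) ∘ R := by
    ext1 y
    simp only [Function.comp_apply, NormedSpace.normalize, map_smul, R.norm_map]
  rw [Measure.map_map R.continuous.measurable measurable_normalize, hcomm,
    ← Measure.map_map measurable_normalize R.continuous.measurable, hball.map_eq]

lemma lintegral_comp_normalize_ball {k : E3 → ℝ≥0∞} (hk : Measurable k) :
    sphMeasure Set.univ / volume (ball (0 : E3) 1) * ∫⁻ y in ball 0 1, k (normalize y)
      = ∫⁻ y, k y ∂sphMeasure := by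
  have hnorm : ∀ᵐ y ∂(volume.restrict (ball 0 1)).map fun y : E3 => normalize y, ‖y‖ = 1 := by
    refine (ae_map_iff measurable_normalize.aemeasurable
      (measurableSet_eq_fun (by fun_prop) (by fun_prop))).2 ?_
    filter_upwards [ae_restrict_of_ae (Measure.ae_ne volume 0)] with y hy
    exact NormedSpace.norm_normalize hy
  rw [← lintegral_map hk measurable_normalize, ← smul_eq_mul, ← lintegral_smul_measure]
  congr 1
  refine measure_eq_of_map_linearIsometryEquiv_eq (fun R => ?_)
    (fun R => (measurePreserving_sphMeasure R).map_eq)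
    (Measure.ae_smul_measure hnorm _) ae_norm_eq_one ?_
  · rw [Measure.map_smul, map_map_normalize_restrict_ball]
  · rw [Measure.smul_apply, Measure.map_apply measurable_normalize .univ, Set.preimage_univ,
      Measure.restrict_apply_univ, smul_eq_mul]
    exact ENNReal.div_mul_cancel (measure_ball_pos _ _ one_pos).ne' measure_ball_lt_top.ne

lemma lintegral_coord_sphMeasure {k : ℝ → ℝ≥0∞} (hk : Measurable k) :
    ∫⁻ y, k (y 0) ∂sphMeasure = sphMeasure Set.univ / 2 * ∫⁻ t in Set.Ioo (-1) 1, k t := by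
  obtain ⟨C, hC⟩ : ∃ C, ∀ k : ℝ → ℝ≥0∞, Measurable k →
      ∫⁻ y, k (y 0) ∂sphMeasure = C * ∫⁻ t in Set.Ioo (-1) 1, k t := by
    refine ⟨sphMeasure Set.univ / volume (ball (0 : E3) 1) * (ENNReal.ofReal Real.pi *
      ∫⁻ q in Set.Ioo 0 1, ENNReal.ofReal √q), fun k hk => ?_⟩
    have hcoord : ∀ y : E3, (normalize y) 0 = y 0 / ‖y‖ := fun y => (div_eq_inv_mul _ _).symm
    rw [← lintegral_comp_normalize_ball (k := fun y => k (y 0)) (by fun_prop)]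
    simp_rw [hcoord]
    rw [lintegral_ball_coord_div_norm hk, ← mul_assoc]
  have hmass : sphMeasure Set.univ = C * 2 := by
    simpa [show (1 : ℝ) + 1 = 2 by norm_num] using hC 1 measurable_one
  rw [hC k hk, hmass, ENNReal.mul_div_cancel_right two_ne_zero ENNReal.ofNat_ne_top]

/-- Archimedes' hat-box theorem. -/
lemma lintegral_inner_sphMeasure {x : E3} (hx : ‖x‖ = 1) {k : ℝ → ℝ≥0∞} (hk : Measurable k) :
    ∫⁻ y, k ⟪x, y⟫ ∂sphMeasure = sphMeasure Set.univ / 2 * ∫⁻ t in Set.Ioo (-1) 1, k t := by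
  obtain ⟨R, rfl⟩ := exists_linearIsometryEquiv_apply_eq
    (x := EuclideanSpace.single 0 (1 : ℝ)) (x' := x) (by simp [hx])
  rw [← lintegral_coord_sphMeasure hk,
    ← (measurePreserving_sphMeasure R).lintegral_comp (by fun_prop)]
  simp [EuclideanSpace.inner_single_left]

lemma lintegral_comp_sqrt_two_add (F : ℝ → ℝ≥0∞) :
    ∫⁻ t in Set.Ioo (-1) 1, F √(2 + 2 * t) = ∫⁻ r in Set.Ioo 0 2, ENNReal.ofReal r * F r := by
  have himage : (fun r : ℝ => r ^ 2 / 2 - 1) '' Set.Ioo 0 2 = Set.Ioo (-1) 1 := by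
    ext t
    constructor
    · rintro ⟨r, ⟨hr0, hr2⟩, rfl⟩
      constructor <;> nlinarith
    · rintro ⟨ht1, ht2⟩
      have hsq : √(2 + 2 * t) ^ 2 = 2 + 2 * t := Real.sq_sqrt (by linarith)
      refine ⟨√(2 + 2 * t), ⟨Real.sqrt_pos.2 (by linarith), ?_⟩, by linarith⟩
      exact lt_of_pow_lt_pow_left₀ 2 zero_le_two (by linarith)
  have hderiv : ∀ r ∈ Set.Ioo (0 : ℝ) 2,
      HasDerivWithinAt (fun r => r ^ 2 / 2 - 1) r (Set.Ioo (0 : ℝ) 2) r := fun r _ => by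
    simpa using (((hasDerivAt_pow 2 r).div_const 2).sub_const 1).hasDerivWithinAt
  have hinj : Set.InjOn (fun r : ℝ => r ^ 2 / 2 - 1) (Set.Ioo 0 2) := fun r hr s hs hrs =>
    (pow_left_inj₀ hr.1.le hs.1.le two_ne_zero).1 (by simp only at hrs; linarith)
  rw [← himage, lintegral_image_eq_lintegral_abs_deriv_mul measurableSet_Ioo hderiv hinj]
  refine setLIntegral_congr_fun measurableSet_Ioo fun r hr => ?_
  rw [abs_of_pos hr.1, show 2 + 2 * (r ^ 2 / 2 - 1) = r ^ 2 by ring, Real.sqrt_sq hr.1.le]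

lemma lintegral_norm_add_sphMeasure {x : E3} (hx : ‖x‖ = 1) {F : ℝ → ℝ≥0∞} (hF : Measurable F) :
    ∫⁻ y, F ‖x + y‖ ∂sphMeasure
      = sphMeasure Set.univ / 2 * ∫⁻ r in Set.Ioo 0 2, ENNReal.ofReal r * F r := by
  rw [← lintegral_comp_sqrt_two_add, ← lintegral_inner_sphMeasure hx (by fun_prop)]
  refine lintegral_congr_ae ?_
  filter_upwards [ae_norm_eq_one] with y hy
  congr 1
  rw [← Real.sqrt_sq (norm_nonneg (x + y)), norm_add_sq_real, hx, hy]
  ring_nf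

end SphereMeasure

section ConvolutionKernel

/-- The radial profile `convKernel ‖z‖` of the density of `σ * σ` divided by the mass of `σ`; the
division makes up for the average over circles being taken with the unnormalized `σ`. The mass of
`σ` is left symbolic, so the normalization of the Hausdorff measure plays no role. -/
def convKernel (r : ℝ) : ℝ≥0 :=
  if r < 2 then (sphMeasure Set.univ).toNNReal / (8 * NNReal.pi * r.toNNReal) else 0

@[fun_prop]
lemma measurable_convKernel : Measurable convKernel :=
  Measurable.ite measurableSet_Iio (by fun_prop) (by fun_prop)

lemma ofReal_mul_convKernel {r : ℝ} (hr : r ∈ Set.Ioo 0 2) :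
    ENNReal.ofReal r * convKernel r
      = ((sphMeasure Set.univ).toNNReal / (8 * NNReal.pi) : ℝ≥0) := by
  have hpos : r.toNNReal ≠ 0 := (Real.toNNReal_pos.2 hr.1).ne'
  rw [convKernel, if_pos hr.2, ENNReal.ofReal, ← ENNReal.coe_mul]
  congr 1
  field_simp

lemma convKernel_eq_zero {r : ℝ} (hr : 2 ≤ r) : convKernel r = 0 :=
  if_neg hr.not_gt

lemma lintegral_convKernel_mul_norm {F : ℝ → ℝ≥0∞} (hF : Measurable F) :
    ∫⁻ z : E3, convKernel ‖z‖ * F ‖z‖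
      = sphMeasure Set.univ / 2 * ∫⁻ r in Set.Ioo 0 2, ENNReal.ofReal r * F r := by
  have hconst : 3 * volume (ball (0 : E3) 1) *
      ((sphMeasure Set.univ).toNNReal / (8 * NNReal.pi) : ℝ≥0) = sphMeasure Set.univ / 2 := by
    have hball : volume (ball (0 : E3) 1) = (NNReal.pi * 4 / 3 : ℝ≥0) := by
      rw [EuclideanSpace.volume_ball_fin_three, ENNReal.ofReal_one, one_pow, one_mul,
        ENNReal.ofReal, ← NNReal.coe_real_pi]
      norm_cast
      rw [Real.toNNReal_coe]
    obtain ⟨s, hs⟩ : ∃ s : ℝ≥0, (s : ℝ≥0∞) = sphMeasure Set.univ :=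
      ⟨_, ENNReal.coe_toNNReal (measure_ne_top _ _)⟩
    rw [hball, ← hs, ENNReal.toNNReal_coe]
    norm_cast
    field_simp [NNReal.pi_ne_zero]
    ring
  have hradial : ∀ r ∈ Set.Ioi (0 : ℝ), 3 * volume (ball (0 : E3) 1) *
      (ENNReal.ofReal (r ^ 2) * (convKernel r * F r))
      = (Set.Iio 2).indicator
          (fun r => sphMeasure Set.univ / 2 * (ENNReal.ofReal r * F r)) r := by
    intro r hr
    by_cases hr2 : r < 2
    · rw [Set.indicator_of_mem (Set.mem_Iio.2 hr2), ← hconst, ← ofReal_mul_convKernel ⟨hr, hr2⟩,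
        ENNReal.ofReal_pow (le_of_lt hr)]
      ring
    · simp [Set.indicator, hr2, convKernel_eq_zero (not_lt.1 hr2)]
  rw [lintegral_norm_eq_measure_ball_mul volume (f := fun r => convKernel r * F r) (by fun_prop),
    finrank_euclideanSpace_fin, ← lintegral_const_mul' _ _ (by finiteness),
    ← lintegral_const_mul' _ _ (by finiteness), Nat.cast_ofNat,
    setLIntegral_congr_fun measurableSet_Ioi hradial, setLIntegral_indicator measurableSet_Iio,
    Set.Iio_inter_Ioi]

/-- The convolution `σ * σ` divided by the mass of `σ`, given by its density. -/
def kernelMeasure : Measure E3 := volume.withDensity fun z => convKernel ‖z‖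

lemma lintegral_norm_kernelMeasure {F : ℝ → ℝ≥0∞} (hF : Measurable F) {x : E3} (hx : ‖x‖ = 1) :
    ∫⁻ z, F ‖z‖ ∂kernelMeasure = ∫⁻ y, F ‖x + y‖ ∂sphMeasure := by
  rw [kernelMeasure, lintegral_withDensity_eq_lintegral_mul _ (by fun_prop) (by fun_prop),
    lintegral_norm_add_sphMeasure hx hF, ← lintegral_convKernel_mul_norm hF]
  rfl

instance : IsFiniteMeasure kernelMeasure where
  measure_univ_lt_top := by
    have h := lintegral_norm_kernelMeasure (F := 1) measurable_const
      (x := EuclideanSpace.single 0 1) (by simp)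
    simp only [Pi.one_apply, lintegral_one] at h
    exact h ▸ measure_lt_top _ _

lemma ae_norm_lt_two : ∀ᵐ z ∂kernelMeasure, ‖z‖ < 2 := by
  refine (ae_withDensity_iff (by fun_prop)).2 (ae_of_all _ fun z hz => ?_)
  by_contra hz2
  exact hz (by rw [convKernel_eq_zero (not_lt.1 hz2), ENNReal.coe_zero])

lemma measurePreserving_kernelMeasure (R : E3 ≃ₗᵢ[ℝ] E3) :
    MeasurePreserving R kernelMeasure kernelMeasure := by
  refine ⟨by fun_prop, Measure.ext_of_lintegral _ fun f hf => ?_⟩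
  rw [lintegral_map hf (by fun_prop), kernelMeasure,
    lintegral_withDensity_eq_lintegral_mul _ (by fun_prop) (by fun_prop),
    lintegral_withDensity_eq_lintegral_mul _ (by fun_prop) hf,
    ← R.measurePreserving.lintegral_comp (f := (fun z => (convKernel ‖z‖ : ℝ≥0∞)) * f)
      (by fun_prop)]
  simp only [Pi.mul_apply, R.norm_map]

lemma ae_notMem_span_singleton (z : E3) : ∀ᵐ w ∂sphMeasure, w ∉ ℝ ∙ z := by
  have hnull : ∀ᵐ w ∂sphMeasure, w ∉ ({normalize z, -normalize z} : Set E3) := by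
    have := Measure.nullSingletonClass_hausdorff E3 two_pos
    exact measure_eq_zero_iff_ae_notMem.1 (Measure.absolutelyContinuous_of_le
      Measure.restrict_le_self ((Set.toFinite _).measure_zero _))
  filter_upwards [hnull, ae_norm_eq_one] with w hw hw_norm hspan
  obtain ⟨c, rfl⟩ := Submodule.mem_span_singleton.1 hspan
  apply hw
  rw [← NormedSpace.normalize_eq_self_of_norm_eq_one hw_norm]
  rcases lt_trichotomy c 0 with hc | rfl | hc
  · exact Or.inr (NormedSpace.normalize_smul_of_neg hc z)
  · simp at hw_norm
  · exact Or.inl (NormedSpace.normalize_smul_of_pos hc z)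

lemma ae_norm_circlePoint {z : E3} (hz : ‖z‖ < 2) :
    ∀ᵐ w ∂sphMeasure, ‖circlePoint z w‖ = 1 ∧ ‖z - circlePoint z w‖ = 1 :=
  (ae_notMem_span_singleton z).mono fun _ hw => norm_circlePoint hz.le hw

lemma map_norm_kernelMeasure_prod :
    (kernelMeasure.prod sphMeasure).map (fun p => ‖p.1‖)
      = (sphMeasure.prod sphMeasure).map fun p => ‖p.1 + p.2‖ := by
  refine Measure.ext_of_lintegral _ fun F hF => ?_
  rw [lintegral_map hF (by fun_prop), lintegral_map hF (by fun_prop),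
    lintegral_prod (fun p => F ‖p.1‖) (by fun_prop), lintegral_prod _ (by fun_prop),
    lintegral_congr_ae (ae_norm_eq_one.mono fun x hx => (lintegral_norm_kernelMeasure hF hx).symm)]
  simp only [lintegral_const]
  rw [lintegral_mul_const _ (by fun_prop)]

lemma measurePreserving_circlePoint :
    MeasurePreserving (fun p : E3 × E3 => (circlePoint p.1 p.2, p.1 - circlePoint p.1 p.2))
      (kernelMeasure.prod sphMeasure) (sphMeasure.prod sphMeasure) := by
  have hmeas : Measurable fun p : E3 × E3 => (circlePoint p.1 p.2, p.1 - circlePoint p.1 p.2) :=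
    measurable_circlePoint.prodMk (measurable_fst.sub measurable_circlePoint)
  have hunit : MeasurableSet {p : E3 × E3 | ‖p.1‖ = 1 ∧ ‖p.2‖ = 1} :=
    (measurableSet_eq_fun (by fun_prop) (by fun_prop)).inter
      (measurableSet_eq_fun (by fun_prop) (by fun_prop))
  have := Measure.isFiniteMeasure_map (kernelMeasure.prod sphMeasure)
    fun p => (circlePoint p.1 p.2, p.1 - circlePoint p.1 p.2)
  refine ⟨hmeas, measure_eq_of_map_norm_add_eq (by simp) (fun R => ?_) (fun R => ?_)
    ?_ ?_ ?_⟩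
  · have hR := ((measurePreserving_kernelMeasure R).prod (measurePreserving_sphMeasure R)).map_eq
    rw [Measure.map_map (by fun_prop) hmeas]
    conv_rhs => rw [← hR, Measure.map_map hmeas (by fun_prop)]
    congr 1
    ext1 p
    simp [circlePoint_map]
  · exact ((measurePreserving_sphMeasure R).prod (measurePreserving_sphMeasure R)).map_eq
  · refine (ae_map_iff hmeas.aemeasurable hunit).2 ((Measure.ae_prod_iff_ae_ae (hmeas hunit)).2 ?_)
    exact ae_norm_lt_two.mono fun z hz => ae_norm_circlePoint hz
  · rw [Measure.ae_prod_iff_ae_ae hunit]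
    exact ae_norm_eq_one.mono fun x hx => ae_norm_eq_one.mono fun y hy => ⟨hx, hy⟩
  · rw [Measure.map_map (by fun_prop) hmeas, ← map_norm_kernelMeasure_prod]
    simp only [Function.comp_def, add_sub_cancel]

end ConvolutionKernel

section Convolution

variable {ψ : E3 × E3 → ℂ}

lemma integrable_convKernel_smul_integral_circlePoint
    (hψ : Integrable ψ (sphMeasure.prod sphMeasure)) :
    Integrable fun z => convKernel ‖z‖ •
      ∫ w, ψ (circlePoint z w, z - circlePoint z w) ∂sphMeasure := by
  have h := (measurePreserving_circlePoint.integrable_comp_of_integrable hψ).integral_prod_left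
  rwa [kernelMeasure, integrable_withDensity_iff_integrable_smul (by fun_prop)] at h

lemma integral_convKernel_smul_integral_circlePoint
    (hψ : Integrable ψ (sphMeasure.prod sphMeasure)) :
    ∫ z, convKernel ‖z‖ • ∫ w, ψ (circlePoint z w, z - circlePoint z w) ∂sphMeasure
      = ∫ x, ∫ y, ψ (x, y) ∂sphMeasure ∂sphMeasure := by
  have hmp := measurePreserving_circlePoint
  have hψ_meas := hψ.aestronglyMeasurable
  rw [← hmp.map_eq] at hψ_meas
  rw [← integral_prod _ hψ, ← hmp.map_eq, integral_map hmp.aemeasurable hψ_meas,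
    integral_prod (fun p : E3 × E3 => ψ (circlePoint p.1 p.2, p.1 - circlePoint p.1 p.2))
      (hmp.integrable_comp_of_integrable hψ), kernelMeasure,
    integral_withDensity_eq_integral_smul (by fun_prop)]

/-- The density of `fσ * gσ`: at `z` it averages `f ⊗ g` over the circle of pairs of unit vectors
with sum `z`. -/
def convDensity (f g : E3 → ℂ) (z : E3) : ℂ :=
  convKernel ‖z‖ • ∫ w, f (circlePoint z w) * g (z - circlePoint z w) ∂sphMeasure

lemma isConvPairDensity_convDensity {f g : E3 → ℂ} (hf : Integrable f sphMeasure)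
    (hg : Integrable g sphMeasure) : IsConvPairDensity f g (convDensity f g) := by
  refine ⟨integrable_convKernel_smul_integral_circlePoint (hf.mul_prod hg),
    fun φ hφ hφ_supp => ?_⟩
  obtain ⟨C, hC⟩ := hφ.bounded_above_of_compact_support hφ_supp
  have hint : Integrable (fun p : E3 × E3 => φ (p.1 + p.2) * (f p.1 * g p.2))
      (sphMeasure.prod sphMeasure) :=
    (hf.mul_prod hg).bdd_mul (by fun_prop) (ae_of_all _ fun p => hC _)
  rw [← integral_convKernel_smul_integral_circlePoint hint]
  simp only [convDensity, add_sub_cancel, integral_const_mul, mul_smul_comm]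

/-- The measure `τ_x` with `(fσ * gσ * hσ)(x) = ∫ f ⊗ g ⊗ h dτ_x`. It lives on the triples of unit
vectors with sum `x`. -/
def tripleMeasure (x : E3) : Measure (E3 × E3 × E3) :=
  ((sphMeasure.withDensity fun y => convKernel ‖x - y‖).prod sphMeasure).map fun p =>
    (circlePoint (x - p.1) p.2, x - p.1 - circlePoint (x - p.1) p.2, p.1)

lemma measurable_circlePoint_sub (x : E3) : Measurable fun p : E3 × E3 =>
    (circlePoint (x - p.1) p.2, x - p.1 - circlePoint (x - p.1) p.2, p.1) := by
  have h : Measurable fun p : E3 × E3 => circlePoint (x - p.1) p.2 :=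
    measurable_circlePoint.comp (f := fun p : E3 × E3 => (x - p.1, p.2)) (by fun_prop)
  exact h.prodMk (((measurable_const.sub measurable_fst).sub h).prodMk measurable_fst)

/-- The common mass of the measures `tripleMeasure x` for `x` in the sphere. -/
def tripleMass : ℝ≥0∞ :=
  sphMeasure Set.univ / 2 * (∫⁻ r in Set.Ioo 0 2, ENNReal.ofReal r * convKernel r) *
    sphMeasure Set.univ

lemma tripleMass_ne_top : tripleMass ≠ ⊤ := by
  rw [tripleMass, setLIntegral_congr_fun measurableSet_Ioo fun r hr => ofReal_mul_convKernel hr,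
    setLIntegral_const, Real.volume_Ioo]
  finiteness

lemma lintegral_convKernel_norm_sub {x : E3} (hx : ‖x‖ = 1) :
    ∫⁻ y, convKernel ‖x - y‖ ∂sphMeasure
      = sphMeasure Set.univ / 2 * ∫⁻ r in Set.Ioo 0 2, ENNReal.ofReal r * convKernel r := by
  rw [← lintegral_norm_add_sphMeasure hx (by fun_prop),
    ← (measurePreserving_sphMeasure (LinearIsometryEquiv.neg ℝ)).lintegral_comp (by fun_prop)]
  simp [sub_eq_add_neg]

lemma tripleMeasure_univ {x : E3} (hx : ‖x‖ = 1) : tripleMeasure x Set.univ = tripleMass := by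
  rw [tripleMeasure, Measure.map_apply (measurable_circlePoint_sub x) .univ, Set.preimage_univ,
    ← Set.univ_prod_univ, Measure.prod_prod, withDensity_apply _ .univ, setLIntegral_univ,
    lintegral_convKernel_norm_sub hx, tripleMass]

lemma isCompact_sph : IsCompact sph := isCompact_sphere _ _

lemma ae_mem_sph_tripleMeasure (x : E3) :
    ∀ᵐ p ∂tripleMeasure x, p ∈ sph ×ˢ sph ×ˢ sph := by
  have hmeas : MeasurableSet (sph ×ˢ sph ×ˢ sph) :=
    isCompact_sph.measurableSet.prod (isCompact_sph.measurableSet.prod isCompact_sph.measurableSet)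
  refine (ae_map_iff (measurable_circlePoint_sub x).aemeasurable hmeas).2
    ((Measure.ae_prod_iff_ae_ae (measurable_circlePoint_sub x hmeas)).2 ?_)
  refine (ae_withDensity_iff (by fun_prop)).2 (ae_norm_eq_one.mono fun y hy hkernel => ?_)
  have hlt : ‖x - y‖ < 2 := by
    by_contra hge
    exact hkernel (by rw [convKernel_eq_zero (not_lt.1 hge), ENNReal.coe_zero])
  filter_upwards [ae_norm_circlePoint hlt] with w hw
  simpa [sph, hy] using hw

lemma map_tripleMeasure (R : E3 ≃ₗᵢ[ℝ] E3) (x : E3) :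
    (tripleMeasure x).map (Prod.map R (Prod.map R R)) = tripleMeasure (R x) := by
  have hR := measurePreserving_sphMeasure R
  have hweighted : MeasurePreserving R (sphMeasure.withDensity fun y => convKernel ‖x - y‖)
      (sphMeasure.withDensity fun y => convKernel ‖R x - y‖) := by
    refine ⟨hR.measurable, Measure.ext_of_lintegral _ fun F hF => ?_⟩
    rw [lintegral_map hF hR.measurable,
      lintegral_withDensity_eq_lintegral_mul _ (by fun_prop) (by fun_prop),
      lintegral_withDensity_eq_lintegral_mul _ (by fun_prop) hF,
      ← hR.lintegral_comp (f := (fun y => (convKernel ‖R x - y‖ : ℝ≥0∞)) * F) (by fun_prop)]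
    simp only [Pi.mul_apply, ← map_sub, R.norm_map]
  rw [tripleMeasure, Measure.map_map (by fun_prop) (measurable_circlePoint_sub x), tripleMeasure,
    ← (hweighted.prod hR).map_eq, Measure.map_map (measurable_circlePoint_sub _) (by fun_prop)]
  congr 1
  ext1 p
  simp only [Function.comp_apply, Prod.map, ← map_sub, circlePoint_map]

lemma integral_mul_convDensity {f g h : E3 → ℂ} {x : E3}
    (hint : Integrable (fun p => f p.1 * g p.2.1 * h p.2.2) (tripleMeasure x)) :
    ∫ y, h y * convDensity f g (x - y) ∂sphMeasure
      = ∫ p, f p.1 * g p.2.1 * h p.2.2 ∂tripleMeasure x := by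
  rw [tripleMeasure, integral_map (measurable_circlePoint_sub x).aemeasurable
      hint.aestronglyMeasurable,
    integral_prod (fun p : E3 × E3 => f (circlePoint (x - p.1) p.2) *
      g (x - p.1 - circlePoint (x - p.1) p.2) * h p.1)
      (hint.comp_measurable (measurable_circlePoint_sub x)),
    integral_withDensity_eq_integral_smul (by fun_prop)]
  simp only [convDensity, integral_mul_const, mul_comm (h _), smul_mul_assoc]

end Convolution

section Holder

variable {α : ℝ} {f : E3 → ℂ}

lemma norm_le_toReal_holderNormE (hf : holderNormE α f < ⊤) {x : E3} (hx : x ∈ sph) :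
    ‖f x‖ ≤ (holderNormE α f).toReal := by
  rw [← ENNReal.ofReal_le_iff_le_toReal hf.ne]
  exact (le_iSup (fun x : sph => ENNReal.ofReal ‖f x.1‖) ⟨x, hx⟩).trans le_self_add

lemma norm_sub_le_toReal_holderNormE_mul (hf : holderNormE α f < ⊤) {x y : E3} (hx : x ∈ sph)
    (hy : y ∈ sph) : ‖f x - f y‖ ≤ (holderNormE α f).toReal * ‖x - y‖ ^ α := by
  rcases eq_or_ne x y with rfl | hxy
  · rw [sub_self, norm_zero]
    positivity
  · rw [← div_le_iff₀ (Real.rpow_pos_of_pos (norm_sub_pos_iff.2 hxy) α),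
      ← ENNReal.ofReal_le_iff_le_toReal hf.ne]
    exact (le_iSup₂ (f := fun x y : sph =>
      ENNReal.ofReal (‖f x.1 - f y.1‖ / ‖x.1 - y.1‖ ^ α)) ⟨x, hx⟩ ⟨y, hy⟩).trans le_add_self

lemma holderNormE_le_add {C D : ℝ} (hC : ∀ x ∈ sph, ‖f x‖ ≤ C)
    (hD : ∀ x ∈ sph, ∀ y ∈ sph, ‖f x - f y‖ ≤ D * ‖x - y‖ ^ α) :
    holderNormE α f ≤ ENNReal.ofReal C + ENNReal.ofReal D := by
  refine add_le_add (iSup_le fun x => ENNReal.ofReal_le_ofReal (hC x x.2))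
    (iSup₂_le fun x y => ?_)
  rcases eq_or_ne x y with rfl | hxy
  · simp
  · exact ENNReal.ofReal_le_ofReal ((div_le_iff₀ (Real.rpow_pos_of_pos
      (norm_sub_pos_iff.2 (Subtype.coe_ne_coe.2 hxy)) α)).2 (hD x x.2 y y.2))

lemma holderNormE_congr {g : E3 → ℂ} (hfg : ∀ x ∈ sph, f x = g x) :
    holderNormE α f = holderNormE α g := by
  have h : ∀ x : sph, f x = g x := fun x => hfg x x.2
  simp only [holderNormE, h]

lemma continuousOn_of_holderNormE_lt_top (hα : 0 < α) (hf : holderNormE α f < ⊤) :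
    ContinuousOn f sph := by
  refine fun x hx => tendsto_iff_norm_sub_tendsto_zero.2 (squeeze_zero'
    (Eventually.of_forall fun y => norm_nonneg _)
    (eventually_mem_nhdsWithin.mono fun y hy => norm_sub_le_toReal_holderNormE_mul hf hy hx) ?_)
  have hcont : Continuous fun y => (holderNormE α f).toReal * ‖y - x‖ ^ α :=
    continuous_const.mul (Continuous.rpow_const (by fun_prop) fun _ => Or.inr hα.le)
  simpa [Real.zero_rpow hα.ne'] using (hcont.tendsto x).mono_left nhdsWithin_le_nhds

lemma norm_map_sub_le_toReal_holderNormE_mul (hα : 0 ≤ α) (hf : holderNormE α f < ⊤)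
    {R : E3 ≃ₗᵢ[ℝ] E3} {d : ℝ} (hR : ∀ y, ‖R y - y‖ ≤ d * ‖y‖) {y : E3} (hy : y ∈ sph) :
    ‖f (R y) - f y‖ ≤ (holderNormE α f).toReal * d ^ α := by
  have hy_norm : ‖y‖ = 1 := mem_sphere_zero_iff_norm.1 hy
  have hRy : R y ∈ sph := mem_sphere_zero_iff_norm.2 ((R.norm_map y).trans hy_norm)
  refine (norm_sub_le_toReal_holderNormE_mul hf hRy hy).trans ?_
  gcongr
  simpa [hy_norm] using hR y

end Holder

section TrilinearEstimate

lemma integrable_of_continuousOn_of_ae_mem {X F : Type*} [TopologicalSpace X] [T2Space X]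
    [MeasurableSpace X] [OpensMeasurableSpace X] [NormedAddCommGroup F] {μ : Measure X}
    [IsFiniteMeasureOnCompacts μ] {K : Set X} {f : X → F} (hf : ContinuousOn f K)
    (hK : IsCompact K) (hμ : ∀ᵐ x ∂μ, x ∈ K) : Integrable f μ := by
  rw [← Measure.restrict_eq_self_of_ae_mem hμ]
  exact hf.integrableOn_compact hK

lemma norm_mul_mul_sub_mul_mul_le {A : Type*} [NormedRing A] {a a' b b' c c' : A} {M N P δ : ℝ}
    (ha : ‖a‖ ≤ M) (hb : ‖b‖ ≤ N) (hb' : ‖b'‖ ≤ N) (hc' : ‖c'‖ ≤ P) (haa' : ‖a' - a‖ ≤ M * δ)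
    (hbb' : ‖b' - b‖ ≤ N * δ) (hcc' : ‖c' - c‖ ≤ P * δ) :
    ‖a' * b' * c' - a * b * c‖ ≤ 3 * δ * (M * N * P) := by
  have hM := (norm_nonneg a).trans ha
  have hN := (norm_nonneg b).trans hb
  have hMδ := (norm_nonneg _).trans haa'
  have hNδ := (norm_nonneg _).trans hbb'
  calc ‖a' * b' * c' - a * b * c‖
      = ‖(a' - a) * b' * c' + a * (b' - b) * c' + a * b * (c' - c)‖ := by congr 1; noncomm_ring
    _ ≤ ‖a' - a‖ * ‖b'‖ * ‖c'‖ + ‖a‖ * ‖b' - b‖ * ‖c'‖ + ‖a‖ * ‖b‖ * ‖c' - c‖ :=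
        norm_add₃_le.trans (by gcongr <;> exact norm_mul₃_le)
    _ ≤ M * δ * N * P + M * (N * δ) * P + M * N * (P * δ) := by gcongr
    _ = 3 * δ * (M * N * P) := by ring

lemma isFiniteMeasure_tripleMeasure {x : E3} (hx : ‖x‖ = 1) : IsFiniteMeasure (tripleMeasure x) :=
  ⟨by rw [tripleMeasure_univ hx]; exact tripleMass_ne_top.lt_top⟩

lemma norm_integral_tripleMeasure_le {x : E3} (hx : ‖x‖ = 1) {F : E3 × E3 × E3 → ℂ} {C : ℝ}
    (hF : ∀ p ∈ sph ×ˢ sph ×ˢ sph, ‖F p‖ ≤ C) :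
    ‖∫ p, F p ∂tripleMeasure x‖ ≤ C * tripleMass.toReal := by
  have := isFiniteMeasure_tripleMeasure hx
  rw [← tripleMeasure_univ hx]
  exact norm_integral_le_of_norm_le_const ((ae_mem_sph_tripleMeasure x).mono hF)

lemma integral_tripleMeasure_map_sub {F : E3 × E3 × E3 → ℂ} {R : E3 ≃ₗᵢ[ℝ] E3} {x : E3}
    (hF : Integrable F (tripleMeasure x)) (hF_map : Integrable F (tripleMeasure (R x))) :
    ∫ p, F p ∂tripleMeasure (R x) - ∫ p, F p ∂tripleMeasure x
      = ∫ p, (F (R p.1, R p.2.1, R p.2.2) - F p) ∂tripleMeasure x := by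
  have hR : Measurable (Prod.map R (Prod.map R R)) := by fun_prop
  rw [← map_tripleMeasure R x] at hF_map ⊢
  rw [integral_map hR.aemeasurable hF_map.aestronglyMeasurable]
  exact (integral_sub (hF_map.comp_measurable hR) hF).symm

variable {f g h : E3 → ℂ} {x : E3}

lemma integrable_mul_mul_tripleMeasure (hf : ContinuousOn f sph) (hg : ContinuousOn g sph)
    (hh : ContinuousOn h sph) (hx : ‖x‖ = 1) :
    Integrable (fun p => f p.1 * g p.2.1 * h p.2.2) (tripleMeasure x) := by
  have := isFiniteMeasure_tripleMeasure hx
  refine integrable_of_continuousOn_of_ae_mem ?_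
    (isCompact_sph.prod (isCompact_sph.prod isCompact_sph)) (ae_mem_sph_tripleMeasure x)
  exact ((hf.comp continuousOn_fst fun p hp => hp.1).mul
    (hg.comp (by fun_prop) fun p hp => hp.2.1)).mul (hh.comp (by fun_prop) fun p hp => hp.2.2)

variable {α : ℝ}

lemma norm_integral_tripleMeasure_sub_le (hα : 0 < α) (hf : holderNormE α f < ⊤)
    (hg : holderNormE α g < ⊤) (hh : holderNormE α h < ⊤) (hx : ‖x‖ = 1) {x' : E3}
    (hx' : ‖x'‖ = 1) :
    ‖∫ p, f p.1 * g p.2.1 * h p.2.2 ∂tripleMeasure x'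
        - ∫ p, f p.1 * g p.2.1 * h p.2.2 ∂tripleMeasure x‖
      ≤ 3 * (4 * ‖x - x'‖) ^ α * ((holderNormE α f).toReal * (holderNormE α g).toReal *
        (holderNormE α h).toReal) * tripleMass.toReal := by
  have hint : ∀ {y : E3}, ‖y‖ = 1 →
      Integrable (fun p => f p.1 * g p.2.1 * h p.2.2) (tripleMeasure y) :=
    integrable_mul_mul_tripleMeasure (continuousOn_of_holderNormE_lt_top hα hf)
      (continuousOn_of_holderNormE_lt_top hα hg) (continuousOn_of_holderNormE_lt_top hα hh)
  obtain ⟨R, rfl, hR⟩ := exists_linearIsometryEquiv_apply_eq_norm_sub_le hx hx'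
  rw [integral_tripleMeasure_map_sub (hint hx) (hint hx')]
  refine norm_integral_tripleMeasure_le hx fun p ⟨hp₁, hp₂, hp₃⟩ => ?_
  have hR_sph : ∀ y ∈ sph, R y ∈ sph := fun y hy => by simpa [sph] using hy
  exact norm_mul_mul_sub_mul_mul_le (norm_le_toReal_holderNormE hf hp₁)
    (norm_le_toReal_holderNormE hg hp₂) (norm_le_toReal_holderNormE hg (hR_sph _ hp₂))
    (norm_le_toReal_holderNormE hh (hR_sph _ hp₃))
    (norm_map_sub_le_toReal_holderNormE_mul hα.le hf hR hp₁)
    (norm_map_sub_le_toReal_holderNormE_mul hα.le hg hR hp₂)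
    (norm_map_sub_le_toReal_holderNormE_mul hα.le hh hR hp₃)

lemma holderNormE_integral_tripleMeasure_le (hα : α ∈ Set.Ioc 0 1) (hf : holderNormE α f < ⊤)
    (hg : holderNormE α g < ⊤) (hh : holderNormE α h < ⊤) :
    holderNormE α (fun x => ∫ p, f p.1 * g p.2.1 * h p.2.2 ∂tripleMeasure x)
      ≤ 13 * tripleMass * holderNormE α f * holderNormE α g * holderNormE α h := by
  set N := (holderNormE α f).toReal * (holderNormE α g).toReal * (holderNormE α h).toReal with hN
  have : 0 ≤ N := by positivity
  have hsup : ∀ x ∈ sph, ‖∫ p, f p.1 * g p.2.1 * h p.2.2 ∂tripleMeasure x‖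
      ≤ N * tripleMass.toReal := fun x hx => by
    refine norm_integral_tripleMeasure_le (mem_sphere_zero_iff_norm.1 hx)
      fun p ⟨hp₁, hp₂, hp₃⟩ => ?_
    have hf_le := norm_le_toReal_holderNormE hf hp₁
    have hg_le := norm_le_toReal_holderNormE hg hp₂
    have hh_le := norm_le_toReal_holderNormE hh hp₃
    exact norm_mul₃_le.trans (by rw [hN]; gcongr)
  have hholder : ∀ x' ∈ sph, ∀ x ∈ sph, ‖∫ p, f p.1 * g p.2.1 * h p.2.2 ∂tripleMeasure x'
      - ∫ p, f p.1 * g p.2.1 * h p.2.2 ∂tripleMeasure x‖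
      ≤ 12 * (N * tripleMass.toReal) * ‖x' - x‖ ^ α := fun x' hx' x hx => by
    refine (norm_integral_tripleMeasure_sub_le hα.1 hf hg hh (mem_sphere_zero_iff_norm.1 hx)
      (mem_sphere_zero_iff_norm.1 hx')).trans ?_
    calc 3 * (4 * ‖x - x'‖) ^ α * N * tripleMass.toReal
        = 3 * (4 ^ α * ‖x' - x‖ ^ α) * N * tripleMass.toReal := by
          rw [Real.mul_rpow (by norm_num) (norm_nonneg _), norm_sub_rev]
      _ ≤ 3 * (4 * ‖x' - x‖ ^ α) * N * tripleMass.toReal := by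
          gcongr
          exact Real.rpow_le_self_of_one_le (by norm_num) hα.2
      _ = 12 * (N * tripleMass.toReal) * ‖x' - x‖ ^ α := by ring
  refine (holderNormE_le_add hsup hholder).trans_eq ?_
  have htop : 13 * tripleMass * holderNormE α f * holderNormE α g * holderNormE α h ≠ ⊤ := by
    have := tripleMass_ne_top
    finiteness
  rw [← ENNReal.ofReal_add (by positivity) (by positivity), ← ENNReal.ofReal_toReal htop]
  simp only [ENNReal.toReal_mul, ENNReal.toReal_ofNat, hN]
  ring_nf

end TrilinearEstimate

theorem trilinear_holder_bound_general {α : ℝ} (hα : α ∈ Set.Ioc 0 1) {h₁ h₂ h₃ : E3 → ℂ}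
    (hh₁ : holderNormE α h₁ < ⊤) (hh₂ : holderNormE α h₂ < ⊤) (hh₃ : holderNormE α h₃ < ⊤) :
    IsConvPairDensity h₁ h₂ (convDensity h₁ h₂) ∧
      holderNormE α (fun x => ∫ y, h₃ y * convDensity h₁ h₂ (x - y) ∂sphMeasure)
        ≤ 13 * tripleMass * holderNormE α h₁ * holderNormE α h₂ * holderNormE α h₃ := by
  have hc₁ := continuousOn_of_holderNormE_lt_top hα.1 hh₁
  have hc₂ := continuousOn_of_holderNormE_lt_top hα.1 hh₂
  have hc₃ := continuousOn_of_holderNormE_lt_top hα.1 hh₃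
  have hint : ∀ {h : E3 → ℂ}, ContinuousOn h sph → Integrable h sphMeasure := fun hc =>
    integrable_of_continuousOn_of_ae_mem hc isCompact_sph
      (ae_norm_eq_one.mono fun _ => mem_sphere_zero_iff_norm.2)
  have htriple : ∀ x ∈ sph, ∫ y, h₃ y * convDensity h₁ h₂ (x - y) ∂sphMeasure
      = ∫ p, h₁ p.1 * h₂ p.2.1 * h₃ p.2.2 ∂tripleMeasure x := fun x hx =>
    integral_mul_convDensity (integrable_mul_mul_tripleMeasure hc₁ hc₂ hc₃
      (mem_sphere_zero_iff_norm.1 hx))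
  exact ⟨isConvPairDensity_convDensity (hint hc₁) (hint hc₂),
    (holderNormE_congr htriple).trans_le (holderNormE_integral_tripleMeasure_le hα hh₁ hh₂ hh₃)⟩

/-- **Trilinear Hölder bound, uniform in `α`.** There is a constant `A < ∞` such that for all
`α ∈ (0,1)` and all `h₁, h₂, h₃ ∈ Λ_α(S²)`,
`‖(h₁σ*h₂σ*h₃σ)|_{S²}‖_{Λ_α} ≤ A ‖h₁‖_{Λ_α} ‖h₂‖_{Λ_α} ‖h₃‖_{Λ_α}`.  The triple convolution
restricted to the sphere is `x ↦ ∫ h₃(y) Q(x-y) dσ(y)` where `Q` is (the continuous choice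
of) the density of `h₁σ*h₂σ`. -/
theorem trilinear_holder_bound :
    ∃ A : ℝ≥0∞, A < ⊤ ∧
      ∀ α : ℝ, α ∈ Set.Ioo (0 : ℝ) 1 →
      ∀ h₁ h₂ h₃ : E3 → ℂ,
        holderNormE α h₁ < ⊤ → holderNormE α h₂ < ⊤ → holderNormE α h₃ < ⊤ →
        ∃ Q : E3 → ℂ, IsConvPairDensity h₁ h₂ Q ∧
          holderNormE α (fun x => ∫ y, h₃ y * Q (x - y) ∂sphMeasure)
            ≤ A * holderNormE α h₁ * holderNormE α h₂ * holderNormE α h₃ := by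
  refine ⟨13 * tripleMass, by have := tripleMass_ne_top; finiteness, ?_⟩
  exact fun α hα h₁ h₂ h₃ hh₁ hh₂ hh₃ => ⟨convDensity h₁ h₂,
    trilinear_holder_bound_general (Set.Ioo_subset_Ioc_self hα) hh₁ hh₂ hh₃⟩

end
end

section
/- Let a ∈ C⁰(S²) satisfy a(x) > 0 for every x ∈ S². Let f ∈ C⁰(S²) be a continuous, nonnegative, even function (f(−x) = f(x) for all x) which satisfies f(x) = a(x)·(fσ*fσ*fσ)(x) for every x ∈ S² and which does not vanish identically. Then f(x) > 0 for every x ∈ S². -/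
open MeasureTheory Metric Filter
open scoped ENNReal RealInnerProductSpace

noncomputable section

/-!
Write `σ` for the surface measure. If `f u, f v > 0` and `u, v` are linearly independent, addition
of two points of the sphere is a submersion near `(u, v)`, so `fσ ∗ fσ` has a density bounded below
near `u + v`. If moreover `f w > 0`, the equation bounds `f` below by a positive constant at
`fσ`-almost every point near `p = u + v + w`. Such points exist arbitrarily close to `p` as soon as
`p` is a limit of points of the sphere where `f > 0`, and then `f p > 0` by continuity.

Suppose now `f x > 0` and `f` has zeros. Let `p` be a zero maximizing `⟪x, ·⟫`, so that `f > 0` on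
the cap `{y | ⟪x, p⟫ < ⟪x, y⟫}`, which has `p` in its closure. Rotating the segment from `x` to `p`
by a right angle about its midpoint, in a direction orthogonal to both, gives `u, v` on the sphere
with `u + v = x + p` and both in the cap. As `p = u + v + (-x)` and `f (-x) = f x > 0`, it follows
that `f p > 0`, a contradiction.
-/

open Set Module Topology
open scoped NNReal

section Submersion

variable {E F : Type*} [NormedAddCommGroup E] [NormedSpace ℝ E] [NormedAddCommGroup F]
  [NormedSpace ℝ F]

lemma exists_surjective_prod_ker (f : E →L[ℝ] F) [FiniteDimensional ℝ f.range]
    (hf : Function.Surjective f) :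
    ∃ p : E →L[ℝ] f.ker, Function.Surjective (f.prod p) := by
  obtain ⟨p, hp⟩ := f.ker_closedComplemented_of_finiteDimensional_range
  refine ⟨p, fun ⟨y, k⟩ => ?_⟩
  obtain ⟨x, rfl⟩ := hf y
  refine ⟨x - p x + k, Prod.ext ?_ ?_⟩
  · have hpx : f (p x) = 0 := (p x).2
    have hk : f k = 0 := k.2
    simp [hpx, hk]
  · simp [hp]

variable [FiniteDimensional ℝ E] [MeasurableSpace E] [BorelSpace E] (μ : Measure E)
  [μ.IsAddHaarMeasure] [FiniteDimensional ℝ F] [MeasurableSpace F] [BorelSpace F]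
  (ν : Measure F) [ν.IsAddHaarMeasure]

lemma exists_addHaar_image_le_of_lipschitzOnWith (hEF : finrank ℝ E = finrank ℝ F) {f : E → F}
    {K : ℝ≥0} {s : Set E} (hf : LipschitzOnWith K f s) :
    ∃ C : ℝ≥0∞, C ≠ ∞ ∧ ∀ t ⊆ s, ν (f '' t) ≤ C * μ t := by
  set d : ℝ := ((finrank ℝ E : ℕ) : ℝ)
  have : (μH[d] : Measure F).IsAddHaarMeasure := by
    rw [show d = (finrank ℝ F : ℕ) from congrArg Nat.cast hEF]; infer_instance
  set a := ν.addHaarScalarFactor (μH[d] : Measure F)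
  set b := (μH[d] : Measure E).addHaarScalarFactor μ
  refine ⟨a * K ^ d * b, by finiteness, fun t ht => ?_⟩
  calc ν (f '' t) = a * μH[d] (f '' t) := by
        rw [Measure.isAddLeftInvariant_eq_smul ν μH[d]]; rfl
    _ ≤ a * (K ^ d * μH[d] t) := by
        gcongr; exact (hf.mono ht).hausdorffMeasure_image_le (Nat.cast_nonneg _)
    _ = a * (K ^ d * (b * μ t)) := by
        rw [Measure.isAddLeftInvariant_eq_smul (μH[d] : Measure E) μ]; rfl
    _ = a * K ^ d * b * μ t := by ring

lemma exists_mul_addHaar_le_addHaar_inter_preimage {f : E → F} {f' : E →L[ℝ] F} {a : E}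
    (hf : HasStrictFDerivAt f f' a) (hf' : Function.Surjective f') {s : Set E} (hs : s ∈ 𝓝 a) :
    ∃ k : ℝ≥0, 0 < k ∧ ∃ B ∈ 𝓝 (f a), ∀ N ⊆ B, k * ν N ≤ μ (s ∩ f ⁻¹' N) := by
  obtain ⟨p, hp⟩ := exists_surjective_prod_ker f' hf'
  set g : E → F × f'.ker := fun x => (f x, p x)
  have hg : HasStrictFDerivAt g (f'.prod p) a := hf.prodMk p.hasStrictFDerivAt
  obtain ⟨K, u, hu, hgu⟩ := hg.exists_lipschitzOnWith
  have hdim : finrank ℝ E = finrank ℝ (F × f'.ker) := by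
    rw [finrank_prod, ← f'.toLinearMap.finrank_range_add_finrank_ker,
      LinearMap.range_eq_top.2 hf', finrank_top]
  let κ : Measure f'.ker := Measure.addHaar
  obtain ⟨C, hC, hle⟩ := exists_addHaar_image_le_of_lipschitzOnWith μ (ν.prod κ) hdim
    (hgu.mono (inter_subset_right (s := s)))
  obtain ⟨B, hB, T, hT, hBT⟩ := mem_nhds_prod_iff.1 <| by
    rw [← hg.map_nhds_eq_of_surj (LinearMap.range_eq_top.2 hp)]
    exact image_mem_map (inter_mem hs hu)
  obtain ⟨k, hk0, hk⟩ := ENNReal.lt_iff_exists_nnreal_btwn.1 <|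
    ENNReal.div_pos (Measure.measure_pos_of_mem_nhds κ hT).ne' hC
  refine ⟨k, ENNReal.coe_pos.1 hk0, B, hB, fun N hN => ?_⟩
  have hsub : N ×ˢ T ⊆ g '' (s ∩ u ∩ f ⁻¹' N) := by
    rintro ⟨y, k⟩ ⟨hy, hk⟩
    obtain ⟨x, hx, hxy⟩ := hBT ⟨hN hy, hk⟩
    exact ⟨x, ⟨hx, by rwa [mem_preimage, show f x = y from congrArg Prod.fst hxy]⟩, hxy⟩
  have key : κ T * ν N ≤ C * μ (s ∩ f ⁻¹' N) := calc
    κ T * ν N = ν.prod κ (N ×ˢ T) := by rw [Measure.prod_prod, mul_comm]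
    _ ≤ C * μ (s ∩ u ∩ f ⁻¹' N) := (measure_mono hsub).trans (hle _ inter_subset_left)
    _ ≤ C * μ (s ∩ f ⁻¹' N) := by gcongr; exact inter_subset_left
  calc k * ν N ≤ κ T / C * ν N := by gcongr
    _ = κ T * ν N / C := ENNReal.mul_div_right_comm.symm
    _ ≤ μ (s ∩ f ⁻¹' N) := ENNReal.div_le_of_le_mul' key

end Submersion

section Density

lemma ae_le_of_withDensity_le {X : Type*} [MeasurableSpace X] {μ : Measure X} [SigmaFinite μ]
    {f g : X → ℝ≥0∞} (hf : AEMeasurable f μ) (h : μ.withDensity f ≤ μ.withDensity g) :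
    f ≤ᵐ[μ] g :=
  ae_le_of_forall_setLIntegral_le_of_sigmaFinite₀ hf fun s hs _ => by
    simpa only [withDensity_apply _ hs] using h s

lemma smul_restrict_le_withDensity_iff {X : Type*} [MeasurableSpace X] {μ : Measure X}
    [SigmaFinite μ] {q : X → ℝ≥0∞} {c : ℝ≥0∞} {s : Set X} (hs : MeasurableSet s) :
    c • μ.restrict s ≤ μ.withDensity q ↔ ∀ᵐ x ∂μ, x ∈ s → c ≤ q x := by
  rw [← withDensity_const, ← withDensity_indicator hs]
  have hiff : (s.indicator fun _ => c) ≤ᵐ[μ] q ↔ ∀ᵐ x ∂μ, x ∈ s → c ≤ q x :=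
    eventually_congr <| ae_of_all _ fun x => by by_cases hx : x ∈ s <;> simp [hx]
  rw [← hiff]
  exact ⟨ae_le_of_withDensity_le (by fun_prop (disch := exact hs)), withDensity_mono⟩

lemma integral_withDensity_ofReal {X F : Type*} [MeasurableSpace X] [NormedAddCommGroup F]
    [NormedSpace ℝ F] {μ : Measure X} {q : X → ℝ} (hq : AEMeasurable q μ) (φ : X → F) :
    ∫ x, φ x ∂μ.withDensity (fun x => ENNReal.ofReal (q x)) = ∫ x, max (q x) 0 • φ x ∂μ := by
  rw [integral_withDensity_eq_integral_toReal_smul₀ hq.ennreal_ofReal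
    (ae_of_all _ fun _ => ENNReal.ofReal_lt_top)]
  simp only [ENNReal.toReal_ofReal']

lemma integral_withDensity_ofReal_of_nonneg {X F : Type*} [MeasurableSpace X]
    [NormedAddCommGroup F] [NormedSpace ℝ F] {μ : Measure X} {q : X → ℝ} (hq : AEMeasurable q μ)
    (hq0 : 0 ≤ᵐ[μ] q) (φ : X → F) :
    ∫ x, φ x ∂μ.withDensity (fun x => ENNReal.ofReal (q x)) = ∫ x, q x • φ x ∂μ := by
  rw [integral_withDensity_ofReal hq]
  refine integral_congr_ae ?_
  filter_upwards [hq0] with x hx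
  rw [max_eq_left (show 0 ≤ q x from hx)]

lemma eq_withDensity_ofReal_of_integral_eq {X : Type*} [TopologicalSpace X] [T2Space X]
    [LocallyCompactSpace X] [SecondCountableTopology X] [MeasurableSpace X] [BorelSpace X]
    {μ ρ : Measure X} [SigmaFinite μ] [IsFiniteMeasure ρ] {q : X → ℝ} (hq : Integrable q μ)
    (h : ∀ φ : X → ℝ, Continuous φ → HasCompactSupport φ → ∫ x, φ x * q x ∂μ = ∫ x, φ x ∂ρ) :
    ρ = μ.withDensity (fun x => ENNReal.ofReal (q x)) ∧ 0 ≤ᵐ[μ] q := by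
  have hqneg : Integrable (fun x => -q x) μ := hq.neg
  have : IsFiniteMeasure (μ.withDensity fun x => ENNReal.ofReal (q x)) :=
    isFiniteMeasure_withDensity_ofReal hq.2
  have : IsFiniteMeasure (μ.withDensity fun x => ENNReal.ofReal (-q x)) :=
    isFiniteMeasure_withDensity_ofReal hqneg.2
  have hsum : ρ + μ.withDensity (fun x => ENNReal.ofReal (-q x)) =
      μ.withDensity (fun x => ENNReal.ofReal (q x)) := by
    refine Measure.ext_of_integral_eq_on_compactlySupported fun φ => ?_
    have hφ {q : X → ℝ} (hq : Integrable q μ) : Integrable (fun x => φ x * q x) μ := by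
      obtain ⟨c, hc⟩ := φ.hasCompactSupport.exists_bound_of_continuous φ.continuous
      exact hq.bdd_mul φ.continuous.aestronglyMeasurable (ae_of_all _ hc)
    rw [integral_add_measure φ.integrable φ.integrable,
      integral_withDensity_ofReal hq.1.aemeasurable,
      integral_withDensity_ofReal hqneg.1.aemeasurable, ← h φ φ.continuous φ.hasCompactSupport]
    simp only [smul_eq_mul, mul_comm (max _ _)]
    rw [← integral_add (hφ hq) (hφ hqneg.pos_part)]
    congr! 2 with x
    linear_combination -φ x * max_zero_sub_max_neg_zero_eq_self (q x)
  have hnonneg : 0 ≤ᵐ[μ] q := by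
    filter_upwards [ae_le_of_withDensity_le hqneg.1.aemeasurable.ennreal_ofReal
      (hsum ▸ Measure.le_add_left le_rfl)] with x hx
    by_contra! hlt
    exact (ENNReal.ofReal_pos.2 (neg_pos.2 hlt)).ne' <|
      le_zero_iff.1 <| hx.trans_eq (ENNReal.ofReal_of_nonpos hlt.le)
  have hzero : μ.withDensity (fun x => ENNReal.ofReal (-q x)) = 0 := by
    rw [withDensity_eq_zero_iff hqneg.1.aemeasurable.ennreal_ofReal]
    filter_upwards [hnonneg] with x hx using ENNReal.ofReal_of_nonpos (neg_nonpos.2 hx)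
  rw [← hsum, hzero, add_zero]
  exact ⟨rfl, hnonneg⟩

lemma le_of_ae_le_of_mem_support {X : Type*} [TopologicalSpace X] [MeasurableSpace X]
    {τ : Measure X} {g f : X → ℝ} {S P : Set X} {p : X} (hS : ∀ᵐ x ∂τ, x ∈ S)
    (hp : p ∈ τ.support) (hg : LowerSemicontinuousWithinAt g S p)
    (hf : UpperSemicontinuousWithinAt f S p) (hP : P ∈ 𝓝 p)
    (hgf : ∀ᵐ x ∂τ, x ∈ P → g x ≤ f x) : g p ≤ f p := by
  by_contra! hlt
  obtain ⟨b, hfb, hbg⟩ := exists_between hlt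
  have hnhds : {x | x ∈ S → b < g x ∧ f x < b} ∈ 𝓝 p :=
    mem_nhdsWithin_iff_eventually.1 ((hg b hbg).and (hf b hfb))
  have hpos := (Measure.mem_support_iff_forall p).1 hp _ (inter_mem hnhds hP)
  obtain ⟨x, ⟨hx, hxP⟩, hxS, hxle⟩ :=
    ((frequently_ae_mem_iff.2 hpos.ne').and_eventually (hS.and hgf)).exists
  exact ((hx hxS).2.trans (hx hxS).1).not_ge (hxle hxP)

lemma integrable_re_and_eq_mul_integral_withDensity {X : Type*} [MeasurableSpace X]
    {σ : Measure X} {f : X → ℝ} (hf : AEMeasurable f σ) (hf0 : 0 ≤ᵐ[σ] f) {h : X → ℂ} {t s : ℝ}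
    (hts : (t : ℂ) = s * ∫ y, f y * h y ∂σ) (ht : t ≠ 0) :
    Integrable (fun y => (h y).re) (σ.withDensity fun y => ENNReal.ofReal (f y)) ∧
      t = s * ∫ y, (h y).re ∂σ.withDensity fun y => ENNReal.ofReal (f y) := by
  have hint : Integrable (fun y => f y * h y) σ := by
    by_contra hint
    rw [integral_undef hint, mul_zero] at hts
    exact ht (Complex.ofReal_eq_zero.1 hts)
  constructor
  · rw [integrable_withDensity_iff_integrable_smul₀' hf.ennreal_ofReal (by simp)]
    refine hint.re.congr ?_
    filter_upwards [hf0] with y hy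
    simp [ENNReal.toReal_ofReal hy]
  · have hint_re : (∫ y, f y * h y ∂σ).re = ∫ y, f y * (h y).re ∂σ := by
      simpa only [RCLike.re_eq_complex_re, Complex.re_ofReal_mul] using (integral_re hint).symm
    rw [integral_withDensity_ofReal_of_nonneg hf hf0]
    simpa only [Complex.ofReal_re, Complex.re_ofReal_mul, hint_re, smul_eq_mul]
      using congrArg Complex.re hts

variable {E : Type*} [NormedAddCommGroup E] [MeasurableSpace E]

/-- `Q` represents the density with respect to `μ` of the convolution of the measures
`f dσ` and `g dσ`, tested against compactly supported continuous functions. It extends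
`IsConvPairDensity` to arbitrary `μ` and `σ`. -/
def IsConvDensity (μ σ : Measure E) (f g Q : E → ℂ) : Prop :=
  Integrable Q μ ∧
  ∀ φ : E → ℂ, Continuous φ → HasCompactSupport φ →
    ∫ z, φ z * Q z ∂μ = ∫ x, ∫ y, φ (x + y) * (f x * g y) ∂σ ∂σ

lemma IsConvDensity.conv_withDensity_eq [ProperSpace E] [BorelSpace E] {μ σ : Measure E}
    [SigmaFinite μ] {f g : E → ℝ} {Q : E → ℂ} (hf : Integrable f σ) (hf0 : 0 ≤ᵐ[σ] f)
    (hg : Integrable g σ) (hg0 : 0 ≤ᵐ[σ] g)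
    (h : IsConvDensity μ σ (fun x => f x) (fun x => g x) Q) :
    (σ.withDensity fun x => ENNReal.ofReal (f x)) ∗ (σ.withDensity fun x => ENNReal.ofReal (g x)) =
      μ.withDensity (fun z => ENNReal.ofReal (Q z).re) ∧ 0 ≤ᵐ[μ] fun z => (Q z).re := by
  have := isFiniteMeasure_withDensity_ofReal hf.2
  have := isFiniteMeasure_withDensity_ofReal hg.2
  refine eq_withDensity_ofReal_of_integral_eq h.1.re fun φ hφ hφc => ?_
  rw [integral_conv (hφ.integrable_of_hasCompactSupport hφc),
    integral_withDensity_ofReal_of_nonneg hf.1.aemeasurable hf0]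
  simp_rw [integral_withDensity_ofReal_of_nonneg hg.1.aemeasurable hg0, smul_eq_mul,
    ← integral_const_mul]
  have hφQ : Integrable (fun z => (φ z : ℂ) * Q z) μ := by
    obtain ⟨c, hc⟩ := hφc.exists_bound_of_continuous hφ
    exact h.1.bdd_mul (c := c) (by fun_prop) (ae_of_all _ fun z => by simpa using hc z)
  have hreal := h.2 (fun z => φ z) (by fun_prop) (hφc.comp_left Complex.ofReal_zero)
  simp only [← Complex.ofReal_mul, integral_complex_ofReal] at hreal
  calc ∫ z, φ z * (Q z).re ∂μ = ∫ z, RCLike.re ((φ z : ℂ) * Q z) ∂μ := by simp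
    _ = (∫ z, (φ z : ℂ) * Q z ∂μ).re := integral_re hφQ
    _ = ∫ x, ∫ y, f x * (g y * φ (x + y)) ∂σ ∂σ := by
      rw [hreal, Complex.ofReal_re]
      simp only [mul_comm (φ _), mul_assoc]

lemma conv_mono {G : Type*} [AddMonoid G] [MeasurableSpace G] [MeasurableAdd₂ G]
    {μ μ' ν ν' : Measure G} [SFinite ν'] (hμ : μ ≤ μ') (hν : ν ≤ ν') : μ ∗ ν ≤ μ' ∗ ν' :=
  Measure.map_mono (Measure.prod_mono hμ hν) measurable_add

lemma conv_map_map {X Y G : Type*} [MeasurableSpace X] [MeasurableSpace Y] [AddMonoid G]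
    [MeasurableSpace G] [MeasurableAdd₂ G] {α : Measure X} {β : Measure Y} [SFinite α] [SFinite β]
    {f : X → G} {g : Y → G} (hf : Measurable f) (hg : Measurable g) :
    α.map f ∗ β.map g = (α.prod β).map fun w => f w.1 + g w.2 := by
  rw [Measure.conv, Measure.map_prod_map _ _ hf hg,
    Measure.map_map measurable_add (hf.prodMap hg)]
  rfl

lemma isNegInvariant_withDensity {G : Type*} [InvolutiveNeg G] [MeasurableSpace G]
    [MeasurableNeg G] {σ : Measure G} [σ.IsNegInvariant] {g : G → ℝ≥0∞}
    (hg : (fun x => g (-x)) =ᵐ[σ] g) : (σ.withDensity g).IsNegInvariant where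
  neg_eq_self := by
    ext s hs
    rw [Measure.neg, Measure.map_apply measurable_neg hs,
      withDensity_apply _ (measurable_neg hs), withDensity_apply _ hs]
    calc ∫⁻ x in Neg.neg ⁻¹' s, g x ∂σ = ∫⁻ x in Neg.neg ⁻¹' s, g (-x) ∂σ :=
          setLIntegral_congr_fun_ae (measurable_neg hs) (hg.mono fun _ hx _ => hx.symm)
      _ = ∫⁻ x in s, g x ∂σ :=
        (Measure.measurePreserving_neg σ).setLIntegral_comp_preimage_emb
          (MeasurableEquiv.neg G).measurableEmbedding g s

lemma ae_ae_sub_of_conv_absolutelyContinuous {G : Type*} [AddGroup G] [MeasurableSpace G]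
    [MeasurableAdd₂ G] [MeasurableNeg G] {μ τ : Measure G} [SFinite τ] [τ.IsNegInvariant]
    (hτ : τ ∗ τ ≪ μ) {P : G → Prop} (hP : ∀ᵐ z ∂μ, P z) : ∀ᵐ x ∂τ, ∀ᵐ y ∂τ, P (x - y) := by
  have hadd : ∀ᵐ x ∂τ, ∀ᵐ y ∂τ, P (x + y) :=
    Measure.ae_ae_of_ae_prod <| ae_of_ae_map measurable_add.aemeasurable (hτ.ae_le hP)
  filter_upwards [hadd] with x hx
  simpa only [sub_eq_add_neg] using
    (Measure.measurePreserving_neg τ).quasiMeasurePreserving.ae hx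

lemma ae_mul_measureReal_le_integral_sub {G : Type*} [AddGroup G] [MeasurableSpace G]
    [MeasurableAdd₂ G] [MeasurableNeg G] {μ τ : Measure G} [SigmaFinite μ] [IsFiniteMeasure τ]
    [τ.IsNegInvariant] {q : G → ℝ} (hq : τ ∗ τ = μ.withDensity fun z => ENNReal.ofReal (q z))
    (hq0 : 0 ≤ᵐ[μ] q) {c : ℝ≥0} {B W : Set G} (hB : MeasurableSet B) (hW : MeasurableSet W)
    (hcB : (c : ℝ≥0∞) • μ.restrict B ≤ τ ∗ τ) :
    ∀ᵐ x ∂τ, (∀ y ∈ W, x - y ∈ B) → Integrable (fun y => q (x - y)) τ →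
      c * τ.real W ≤ ∫ y, q (x - y) ∂τ := by
  have hτ : τ ∗ τ ≪ μ := hq ▸ withDensity_absolutelyContinuous _ _
  filter_upwards [ae_ae_sub_of_conv_absolutelyContinuous hτ hq0,
    ae_ae_sub_of_conv_absolutelyContinuous hτ
      ((smul_restrict_le_withDensity_iff hB).1 (hcB.trans_eq hq))] with x hx0 hxB hWB hint
  calc c * τ.real W ≤ ∫ y in W, q (x - y) ∂τ := by
        rw [mul_comm, ← smul_eq_mul, ← setIntegral_const]
        refine setIntegral_mono_on_ae (integrableOn_const (measure_ne_top _ _)) hint.integrableOn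
          hW ?_
        filter_upwards [hx0, hxB] with y hy0 hyB hyW
        exact (ENNReal.le_ofReal_iff_toReal_le ENNReal.coe_ne_top hy0).1 (hyB (hWB y hyW))
    _ ≤ ∫ y, q (x - y) ∂τ := setIntegral_le_integral hint hx0

lemma exists_pos_ae_le_integral_sub {G : Type*} [AddGroup G] [TopologicalSpace G]
    [IsTopologicalAddGroup G] [MeasurableSpace G] [BorelSpace G] [MeasurableAdd₂ G]
    {μ τ : Measure G} [SigmaFinite μ] [IsFiniteMeasure τ] [τ.IsNegInvariant] {q : G → ℝ}
    (hq : τ ∗ τ = μ.withDensity fun z => ENNReal.ofReal (q z)) (hq0 : 0 ≤ᵐ[μ] q)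
    {c : ℝ≥0} (hc : 0 < c) {b w : G} {B : Set G} (hB : B ∈ 𝓝 b)
    (hcB : (c : ℝ≥0∞) • μ.restrict B ≤ τ ∗ τ) (hw : w ∈ τ.support) :
    ∃ r > 0, ∃ P ∈ 𝓝 (b + w), ∀ᵐ x ∂τ, x ∈ P → Integrable (fun y => q (x - y)) τ →
      r ≤ ∫ y, q (x - y) ∂τ := by
  have hsub : (fun z : G × G => z.1 - z.2) ⁻¹' interior B ∈ 𝓝 (b + w, w) :=
    continuous_sub.continuousAt.preimage_mem_nhds <| by
      simpa only [add_sub_cancel_right] using interior_mem_nhds.2 hB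
  obtain ⟨P, W, hP, hbP, hW, hwW, hPW⟩ := mem_nhds_prod_iff'.1 hsub
  have hτW : 0 < τ.real W :=
    ENNReal.toReal_pos ((Measure.mem_support_iff_forall w).1 hw W (hW.mem_nhds hwW)).ne'
      (measure_ne_top _ _)
  refine ⟨c * τ.real W, by positivity, P, hP.mem_nhds hbP, ?_⟩
  have hcB' : (c : ℝ≥0∞) • μ.restrict (interior B) ≤ τ ∗ τ := by
    refine le_trans ?_ hcB
    gcongr
    exact interior_subset
  filter_upwards [ae_mul_measureReal_le_integral_sub hq hq0 isOpen_interior.measurableSet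
    hW.measurableSet hcB'] with x hx hxP
  exact hx fun y hy => hPW (mk_mem_prod hxP hy)

end Density

section Sphere

open Submodule

variable {E : Type*} [NormedAddCommGroup E] [InnerProductSpace ℝ E]

/-- The parametrization of the hemisphere centred at `x` by the unit ball of the tangent
hyperplane `xᗮ`. -/
def hyperplaneLift (x : E) (w : (ℝ ∙ x)ᗮ) : E := w + √(1 - ‖w‖ ^ 2) • x

lemma hyperplaneLift_zero (x : E) : hyperplaneLift x 0 = x := by simp [hyperplaneLift]

lemma continuous_hyperplaneLift (x : E) : Continuous (hyperplaneLift x) := by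
  unfold hyperplaneLift
  fun_prop

lemma preimage_hyperplaneLift_inter_closedBall_mem_nhds {x : E} {V : Set E} (hV : V ∈ 𝓝 x) :
    hyperplaneLift x ⁻¹' V ∩ closedBall 0 1 ∈ 𝓝 0 :=
  inter_mem ((continuous_hyperplaneLift x).continuousAt.preimage_mem_nhds
    (by rwa [hyperplaneLift_zero])) (closedBall_mem_nhds 0 one_pos)

lemma norm_hyperplaneLift {x : E} (hx : ‖x‖ = 1) {w : (ℝ ∙ x)ᗮ} (hw : ‖w‖ ≤ 1) :
    ‖hyperplaneLift x w‖ = 1 := by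
  have horth : ⟪(w : E), √(1 - ‖w‖ ^ 2) • x⟫ = 0 := by
    rw [inner_smul_right, mem_orthogonal_singleton_iff_inner_left.1 w.2, mul_zero]
  have hsq : 0 ≤ 1 - ‖w‖ ^ 2 := by nlinarith [norm_nonneg w]
  rw [← sq_eq_sq₀ (norm_nonneg _) zero_le_one, hyperplaneLift, sq,
    norm_add_sq_eq_norm_sq_add_norm_sq_real horth, norm_smul, hx, ← sq, mul_one, ← sq,
    Real.norm_eq_abs, sq_abs, Real.sq_sqrt hsq]
  simp

lemma orthogonalProjectionOnto_hyperplaneLift (x : E) (w : (ℝ ∙ x)ᗮ) :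
    (ℝ ∙ x)ᗮ.orthogonalProjectionOnto (hyperplaneLift x w) = w := by
  simp [hyperplaneLift, orthogonalProjectionOnto_orthogonalComplement_singleton_eq_zero]

lemma hyperplaneLift_orthogonalProjectionOnto {x y : E} (hx : ‖x‖ = 1) (hy : ‖y‖ = 1)
    (hxy : 0 ≤ ⟪x, y⟫) : hyperplaneLift x ((ℝ ∙ x)ᗮ.orthogonalProjectionOnto y) = y := by
  have hproj : ((ℝ ∙ x)ᗮ.orthogonalProjectionOnto y : E) = y - ⟪x, y⟫ • x := by
    rw [← starProjection_apply, eq_sub_iff_add_eq', ← starProjection_unit_singleton ℝ hx,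
      starProjection_add_starProjection_orthogonal]
  have hpyth : 1 - ‖(ℝ ∙ x)ᗮ.orthogonalProjectionOnto y‖ ^ 2 = ⟪x, y⟫ ^ 2 := by
    rw [← Submodule.norm_coe, hproj, norm_sub_sq_real, norm_smul, inner_smul_right,
      real_inner_comm, hx, hy, Real.norm_eq_abs, mul_one, sq_abs]
    ring
  rw [hyperplaneLift, hpyth, Real.sqrt_sq hxy, hproj, sub_add_cancel]

lemma hasStrictFDerivAt_hyperplaneLift_zero (x : E) :
    HasStrictFDerivAt (hyperplaneLift x) ((ℝ ∙ x)ᗮ.subtypeL) 0 := by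
  have hnorm : HasStrictFDerivAt (fun w : (ℝ ∙ x)ᗮ => 1 - ‖w‖ ^ 2)
      (0 : (ℝ ∙ x)ᗮ →L[ℝ] ℝ) 0 := by
    simpa using (hasStrictFDerivAt_norm_sq (0 : (ℝ ∙ x)ᗮ)).const_sub 1
  have hsqrt : HasStrictFDerivAt (fun w : (ℝ ∙ x)ᗮ => √(1 - ‖w‖ ^ 2))
      (0 : (ℝ ∙ x)ᗮ →L[ℝ] ℝ) 0 := by
    simpa using hnorm.sqrt (by simp)
  refine ((ℝ ∙ x)ᗮ.subtypeL.hasStrictFDerivAt.add (hsqrt.smul_const x)).congr_fderiv ?_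
  ext w
  simp

lemma hasStrictFDerivAt_hyperplaneLift_add_hyperplaneLift (u v : E) :
    HasStrictFDerivAt (fun w : (ℝ ∙ u)ᗮ × (ℝ ∙ v)ᗮ => hyperplaneLift u w.1 + hyperplaneLift v w.2)
      ((ℝ ∙ u)ᗮ.subtypeL.coprod (ℝ ∙ v)ᗮ.subtypeL) (0, 0) := by
  have hfst := (hasStrictFDerivAt_hyperplaneLift_zero u).comp (f := Prod.fst) (0, (0 : (ℝ ∙ v)ᗮ))
    hasStrictFDerivAt_fst
  have hsnd := (hasStrictFDerivAt_hyperplaneLift_zero v).comp (f := Prod.snd) ((0 : (ℝ ∙ u)ᗮ), 0)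
    hasStrictFDerivAt_snd
  exact (hfst.fun_add hsnd).congr_fderiv (by ext <;> simp)

lemma coe_finrank_orthogonal_span_singleton [FiniteDimensional ℝ E] {x : E} (hx : x ≠ 0) :
    ((finrank ℝ (ℝ ∙ x)ᗮ : ℕ) : ℝ) = finrank ℝ E - 1 := by
  rw [eq_sub_iff_add_eq', ← finrank_add_finrank_orthogonal (ℝ ∙ x), finrank_span_singleton hx]
  push_cast
  rfl

variable [MeasurableSpace E] [BorelSpace E]

variable (E) in
/-- The surface measure of the unit sphere of a Euclidean space, realized as its
Hausdorff measure of codimension one. -/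
def unitSphereMeasure : Measure E := (μH[finrank ℝ E - 1]).restrict (sphere 0 1)

lemma ae_mem_sphere_unitSphereMeasure : ∀ᵐ x ∂unitSphereMeasure E, x ∈ sphere (0 : E) 1 :=
  ae_restrict_mem isClosed_sphere.measurableSet

variable [FiniteDimensional ℝ E]

lemma map_hyperplaneLift_le_unitSphereMeasure {x : E} (hx : ‖x‖ = 1) :
    ((μH[finrank ℝ E - 1] : Measure (ℝ ∙ x)ᗮ).restrict (closedBall 0 1)).map (hyperplaneLift x) ≤
      unitSphereMeasure E := by
  have hd : (0 : ℝ) ≤ finrank ℝ E - 1 := by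
    rw [← coe_finrank_orthogonal_span_singleton (ne_zero_of_norm_ne_zero (hx.trans_ne one_ne_zero))]
    positivity
  have hmeas : Measurable (hyperplaneLift x) := (continuous_hyperplaneLift x).measurable
  refine Measure.le_iff.2 fun t ht => ?_
  rw [Measure.map_apply hmeas ht, Measure.restrict_apply (hmeas ht), unitSphereMeasure,
    Measure.restrict_apply ht]
  calc μH[finrank ℝ E - 1] (hyperplaneLift x ⁻¹' t ∩ closedBall 0 1)
    _ ≤ μH[finrank ℝ E - 1] ((ℝ ∙ x)ᗮ.orthogonalProjectionOnto '' (t ∩ sphere 0 1)) := by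
      refine measure_mono fun w ⟨hwt, hw⟩ => ⟨hyperplaneLift x w, ⟨hwt, ?_⟩,
        orthogonalProjectionOnto_hyperplaneLift x w⟩
      exact mem_sphere_zero_iff_norm.2 <| norm_hyperplaneLift hx <| mem_closedBall_zero_iff.1 hw
    _ ≤ μH[finrank ℝ E - 1] (t ∩ sphere 0 1) := by
      simpa using
        (lipschitzWith_orthogonalProjectionOnto _).hausdorffMeasure_image_le hd (t ∩ sphere 0 1)

lemma isAddHaarMeasure_hausdorffMeasure_orthogonal_span_singleton {x : E} (hx : x ≠ 0) :
    (μH[finrank ℝ E - 1] : Measure (ℝ ∙ x)ᗮ).IsAddHaarMeasure := by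
  rw [← coe_finrank_orthogonal_span_singleton hx]
  infer_instance

lemma mem_support_unitSphereMeasure {x : E} (hx : ‖x‖ = 1) :
    x ∈ (unitSphereMeasure E).support := by
  have := isAddHaarMeasure_hausdorffMeasure_orthogonal_span_singleton
    (ne_zero_of_norm_ne_zero (hx.trans_ne one_ne_zero))
  refine (Measure.mem_support_iff_forall x).2 fun V hV => ?_
  calc 0 < μH[finrank ℝ E - 1] (hyperplaneLift x ⁻¹' V ∩ closedBall 0 1) :=
        Measure.measure_pos_of_mem_nhds _
          (preimage_hyperplaneLift_inter_closedBall_mem_nhds hV)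
    _ ≤ _ := Measure.le_restrict_apply _ _
    _ ≤ _ := Measure.le_map_apply (continuous_hyperplaneLift x).aemeasurable V
    _ ≤ unitSphereMeasure E V := map_hyperplaneLift_le_unitSphereMeasure hx V

lemma finiteAtFilter_unitSphereMeasure_nhds {x : E} (hx : ‖x‖ = 1) :
    (unitSphereMeasure E).FiniteAtFilter (𝓝 x) := by
  have hx0 : x ≠ 0 := ne_zero_of_norm_ne_zero (hx.trans_ne one_ne_zero)
  have := isAddHaarMeasure_hausdorffMeasure_orthogonal_span_singleton hx0
  have hd : (0 : ℝ) ≤ finrank ℝ E - 1 := by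
    rw [← coe_finrank_orthogonal_span_singleton hx0]
    positivity
  obtain ⟨K, u, hu, hK⟩ := (hasStrictFDerivAt_hyperplaneLift_zero x).exists_lipschitzOnWith
  set P := (ℝ ∙ x)ᗮ.orthogonalProjectionOnto
  have hPx : P x = 0 := orthogonalProjectionOnto_orthogonalComplement_singleton_eq_zero x
  set t := u ∩ closedBall 0 1
  refine ⟨P ⁻¹' t ∩ {y | 0 < ⟪x, y⟫}, inter_mem ?_ ?_, ?_⟩
  · refine P.continuous.continuousAt.preimage_mem_nhds ?_
    rw [hPx]
    exact inter_mem hu (closedBall_mem_nhds 0 one_pos)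
  · exact (isOpen_lt continuous_const (by fun_prop)).mem_nhds (by simp [hx])
  calc unitSphereMeasure E (P ⁻¹' t ∩ {y | 0 < ⟪x, y⟫})
    _ = μH[finrank ℝ E - 1] (P ⁻¹' t ∩ {y | 0 < ⟪x, y⟫} ∩ sphere 0 1) :=
      Measure.restrict_apply' isClosed_sphere.measurableSet
    _ ≤ μH[finrank ℝ E - 1] (hyperplaneLift x '' t) := by
      refine measure_mono fun y ⟨⟨hyt, hxy⟩, hy⟩ => ⟨P y, hyt, ?_⟩
      exact hyperplaneLift_orthogonalProjectionOnto hx (mem_sphere_zero_iff_norm.1 hy) hxy.le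
    _ ≤ K ^ (finrank ℝ E - 1 : ℝ) * μH[finrank ℝ E - 1] t :=
      (hK.mono inter_subset_left).hausdorffMeasure_image_le hd
    _ < ∞ := ENNReal.mul_lt_top (by finiteness) <|
      (measure_mono inter_subset_right).trans_lt measure_closedBall_lt_top

instance isFiniteMeasure_unitSphereMeasure : IsFiniteMeasure (unitSphereMeasure E) where
  measure_univ_lt_top := by
    rw [unitSphereMeasure, Measure.restrict_apply_univ, ← Measure.restrict_apply_self]
    exact (isCompact_sphere 0 1).measure_lt_top_of_nhdsWithin fun x hx =>
      (finiteAtFilter_unitSphereMeasure_nhds (mem_sphere_zero_iff_norm.1 hx)).filter_mono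
        nhdsWithin_le_nhds

instance isNegInvariant_unitSphereMeasure : (unitSphereMeasure E).IsNegInvariant where
  neg_eq_self := by
    have h := ((IsometryEquiv.neg E).measurePreserving_hausdorffMeasure
      (finrank ℝ E - 1)).restrict_preimage (s := sphere 0 1) isClosed_sphere.measurableSet
    have hpre : IsometryEquiv.neg E ⁻¹' sphere 0 1 = sphere 0 1 := by ext; simp
    rw [hpre] at h
    exact h.map_eq

end Sphere

section SphereConvolution

open Submodule

variable {E : Type*} [NormedAddCommGroup E] [InnerProductSpace ℝ E] [FiniteDimensional ℝ E]

lemma surjective_coprod_subtypeL_orthogonal {u v : E} (huv : LinearIndependent ℝ ![u, v]) :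
    Function.Surjective ((ℝ ∙ u)ᗮ.subtypeL.coprod (ℝ ∙ v)ᗮ.subtypeL) := by
  have hu : u ≠ 0 := huv.ne_zero 0
  have hv : v ≠ 0 := huv.ne_zero 1
  have hdisj : (ℝ ∙ u) ⊓ (ℝ ∙ v) = ⊥ := by
    rw [← disjoint_iff, disjoint_span_singleton' hv, mem_span_singleton, not_exists]
    exact (LinearIndependent.pair_iff' hu).1 huv
  have hsup : (ℝ ∙ u)ᗮ ⊔ (ℝ ∙ v)ᗮ = ⊤ := by
    rw [← orthogonal_eq_bot_iff, ← inf_orthogonal, orthogonal_orthogonal, orthogonal_orthogonal,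
      hdisj]
  intro y
  obtain ⟨a, ha, b, hb, rfl⟩ := mem_sup.1 (hsup ▸ mem_top : y ∈ (ℝ ∙ u)ᗮ ⊔ (ℝ ∙ v)ᗮ)
  exact ⟨(⟨a, ha⟩, ⟨b, hb⟩), by simp⟩

variable [MeasurableSpace E] [BorelSpace E]

lemma map_restrict_hyperplaneLift_le_unitSphereMeasure_restrict {x : E} (hx : ‖x‖ = 1)
    {V : Set E} (hV : MeasurableSet V) :
    ((μH[finrank ℝ E - 1] : Measure (ℝ ∙ x)ᗮ).restrict
      (hyperplaneLift x ⁻¹' V ∩ closedBall 0 1)).map (hyperplaneLift x) ≤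
      (unitSphereMeasure E).restrict V := by
  have hmeas := (continuous_hyperplaneLift x).measurable
  rw [← Measure.restrict_restrict (hmeas hV), ← Measure.restrict_map hmeas hV]
  gcongr
  exact map_hyperplaneLift_le_unitSphereMeasure hx

lemma exists_smul_restrict_le_conv_unitSphereMeasure (μ : Measure E) [μ.IsAddHaarMeasure]
    {u v : E} (hu : ‖u‖ = 1) (hv : ‖v‖ = 1) (huv : LinearIndependent ℝ ![u, v]) {U V : Set E}
    (hU : MeasurableSet U) (hUu : U ∈ 𝓝 u) (hV : MeasurableSet V) (hVv : V ∈ 𝓝 v) :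
    ∃ c : ℝ≥0, 0 < c ∧ ∃ B ∈ 𝓝 (u + v), (c : ℝ≥0∞) • μ.restrict B ≤
      (unitSphereMeasure E).restrict U ∗ (unitSphereMeasure E).restrict V := by
  have : (μH[finrank ℝ E - 1] : Measure (ℝ ∙ u)ᗮ).IsAddHaarMeasure :=
    isAddHaarMeasure_hausdorffMeasure_orthogonal_span_singleton (huv.ne_zero 0)
  have : (μH[finrank ℝ E - 1] : Measure (ℝ ∙ v)ᗮ).IsAddHaarMeasure :=
    isAddHaarMeasure_hausdorffMeasure_orthogonal_span_singleton (huv.ne_zero 1)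
  set α : Measure (ℝ ∙ u)ᗮ := μH[finrank ℝ E - 1]
  set β : Measure (ℝ ∙ v)ᗮ := μH[finrank ℝ E - 1]
  set S : Set (ℝ ∙ u)ᗮ := hyperplaneLift u ⁻¹' U ∩ closedBall 0 1
  set T : Set (ℝ ∙ v)ᗮ := hyperplaneLift v ⁻¹' V ∩ closedBall 0 1
  have hST : S ×ˢ T ∈ 𝓝 (0, 0) := prod_mem_nhds
    (preimage_hyperplaneLift_inter_closedBall_mem_nhds hUu)
    (preimage_hyperplaneLift_inter_closedBall_mem_nhds hVv)
  obtain ⟨c, hc, B, hB, hcB⟩ := exists_mul_addHaar_le_addHaar_inter_preimage (α.prod β) μ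
    (hasStrictFDerivAt_hyperplaneLift_add_hyperplaneLift u v)
    (surjective_coprod_subtypeL_orthogonal huv) hST
  simp only [hyperplaneLift_zero] at hB
  refine ⟨c, hc, B, hB, ?_⟩
  have hu' := (continuous_hyperplaneLift u).measurable
  have hv' := (continuous_hyperplaneLift v).measurable
  calc (c : ℝ≥0∞) • μ.restrict B
    _ ≤ ((α.prod β).restrict (S ×ˢ T)).map
        (fun w => hyperplaneLift u w.1 + hyperplaneLift v w.2) := by
      refine Measure.le_iff.2 fun N hN => ?_
      rw [Measure.smul_apply, Measure.restrict_apply hN, smul_eq_mul,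
        Measure.map_apply (by fun_prop) hN, Measure.restrict_apply (by measurability),
        inter_comm _ (S ×ˢ T)]
      exact (hcB _ inter_subset_right).trans (measure_mono (by gcongr; exact inter_subset_left))
    _ = (α.restrict S).map (hyperplaneLift u) ∗ (β.restrict T).map (hyperplaneLift v) := by
      rw [conv_map_map hu' hv', Measure.prod_restrict]
    _ ≤ _ := conv_mono (map_restrict_hyperplaneLift_le_unitSphereMeasure_restrict hu hU)
      (map_restrict_hyperplaneLift_le_unitSphereMeasure_restrict hv hV)

end SphereConvolution

section WeightedSphere

variable {E : Type*} [NormedAddCommGroup E] [InnerProductSpace ℝ E] [MeasurableSpace E]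
  [BorelSpace E] {f : E → ℝ}

/-- The measure `f dσ` on the unit sphere, where `σ` is the surface measure; negative values of
`f` are truncated to `0`. -/
def weightedSphereMeasure (f : E → ℝ) : Measure E :=
  (unitSphereMeasure E).withDensity fun x => ENNReal.ofReal (f x)

lemma ae_mem_sphere_weightedSphereMeasure (f : E → ℝ) :
    ∀ᵐ x ∂weightedSphereMeasure f, x ∈ sphere (0 : E) 1 :=
  (withDensity_absolutelyContinuous _ _).ae_le ae_mem_sphere_unitSphereMeasure

lemma isNegInvariant_weightedSphereMeasure (hfeven : ∀ x ∈ sphere (0 : E) 1, f (-x) = f x) :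
    (weightedSphereMeasure f).IsNegInvariant :=
  isNegInvariant_withDensity <| ae_mem_sphere_unitSphereMeasure.mono fun x hx =>
    congrArg ENNReal.ofReal (hfeven x hx)

variable [FiniteDimensional ℝ E]

lemma integrable_unitSphereMeasure_of_continuousOn (hf : ContinuousOn f (sphere 0 1)) :
    Integrable f (unitSphereMeasure E) := by
  have h := hf.integrableOn_compact (μ := unitSphereMeasure E) (isCompact_sphere 0 1)
  rwa [IntegrableOn, Measure.restrict_eq_self_of_ae_mem ae_mem_sphere_unitSphereMeasure] at h

lemma isFiniteMeasure_weightedSphereMeasure (hf : ContinuousOn f (sphere 0 1)) :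
    IsFiniteMeasure (weightedSphereMeasure f) :=
  isFiniteMeasure_withDensity_ofReal (integrable_unitSphereMeasure_of_continuousOn hf).2

lemma ae_pos_weightedSphereMeasure (hf : ContinuousOn f (sphere 0 1)) :
    ∀ᵐ x ∂weightedSphereMeasure f, 0 < f x := by
  refine (ae_withDensity_iff' (integrable_unitSphereMeasure_of_continuousOn
    hf).1.aemeasurable.ennreal_ofReal).2 <| ae_of_all _ fun x hx => ?_
  exact ENNReal.ofReal_pos.1 (pos_iff_ne_zero.2 hx)

lemma IsConvDensity.conv_weightedSphereMeasure_eq {μ : Measure E} [SigmaFinite μ] {Q : E → ℂ}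
    (hf : ContinuousOn f (sphere 0 1)) (hfnn : ∀ x ∈ sphere (0 : E) 1, 0 ≤ f x)
    (hQ : IsConvDensity μ (unitSphereMeasure E) (fun x => f x) (fun x => f x) Q) :
    weightedSphereMeasure f ∗ weightedSphereMeasure f =
      μ.withDensity (fun z => ENNReal.ofReal (Q z).re) ∧ 0 ≤ᵐ[μ] fun z => (Q z).re :=
  have hint := integrable_unitSphereMeasure_of_continuousOn hf
  have hf0 : 0 ≤ᵐ[unitSphereMeasure E] f := ae_mem_sphere_unitSphereMeasure.mono hfnn
  hQ.conv_withDensity_eq hint hf0 hint hf0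

lemma exists_smul_restrict_le_weightedSphereMeasure (hf : ContinuousOn f (sphere 0 1)) {u : E}
    (hu : u ∈ sphere 0 1) (hfu : 0 < f u) :
    ∃ r : ℝ≥0, 0 < r ∧ ∃ V, IsOpen V ∧ u ∈ V ∧
      (r : ℝ≥0∞) • (unitSphereMeasure E).restrict V ≤ weightedSphereMeasure f := by
  obtain ⟨r, hr, hrf⟩ := exists_between (Real.toNNReal_pos.2 hfu)
  have hev : ∀ᶠ x in 𝓝[sphere 0 1] u, r < (f x).toNNReal :=
    (continuous_real_toNNReal.continuousAt.comp_continuousWithinAt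
      (hf u hu)).eventually_const_lt hrf
  obtain ⟨V, hV, huV, hVf⟩ := mem_nhdsWithin.1 hev
  refine ⟨r, hr, V, hV, huV, (smul_restrict_le_withDensity_iff hV.measurableSet).2 ?_⟩
  filter_upwards [ae_mem_sphere_unitSphereMeasure] with x hx hxV
  exact ENNReal.coe_le_coe.2 (hVf ⟨hxV, hx⟩).le

lemma mem_support_weightedSphereMeasure (hf : ContinuousOn f (sphere 0 1)) {u : E}
    (hu : u ∈ sphere 0 1) (hfu : 0 < f u) : u ∈ (weightedSphereMeasure f).support := by
  obtain ⟨r, hr, V, hV, huV, hle⟩ := exists_smul_restrict_le_weightedSphereMeasure hf hu hfu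
  refine (Measure.mem_support_iff_forall u).2 fun W hW => ?_
  have hpos : 0 < unitSphereMeasure E (W ∩ V) := (Measure.mem_support_iff_forall u).1
    (mem_support_unitSphereMeasure (mem_sphere_zero_iff_norm.1 hu)) _
      (inter_mem hW (hV.mem_nhds huV))
  calc 0 < r * unitSphereMeasure E (W ∩ V) :=
        ENNReal.mul_pos (ENNReal.coe_ne_zero.2 hr.ne') hpos.ne'
    _ = ((r : ℝ≥0∞) • (unitSphereMeasure E).restrict V) W := by
      rw [Measure.smul_apply, Measure.restrict_apply' hV.measurableSet, smul_eq_mul]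
    _ ≤ weightedSphereMeasure f W := hle W

lemma exists_smul_restrict_le_conv_weightedSphereMeasure (μ : Measure E) [μ.IsAddHaarMeasure]
    (hf : ContinuousOn f (sphere 0 1)) {u v : E} (huv : LinearIndependent ℝ ![u, v])
    (hu : u ∈ sphere 0 1) (hv : v ∈ sphere 0 1) (hfu : 0 < f u) (hfv : 0 < f v) :
    ∃ c : ℝ≥0, 0 < c ∧ ∃ B ∈ 𝓝 (u + v), (c : ℝ≥0∞) • μ.restrict B ≤
      weightedSphereMeasure f ∗ weightedSphereMeasure f := by
  obtain ⟨r, hr, U, hU, huU, hrU⟩ := exists_smul_restrict_le_weightedSphereMeasure hf hu hfu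
  obtain ⟨s, hs, V, hV, hvV, hsV⟩ := exists_smul_restrict_le_weightedSphereMeasure hf hv hfv
  obtain ⟨c, hc, B, hB, hcB⟩ := exists_smul_restrict_le_conv_unitSphereMeasure μ
    (mem_sphere_zero_iff_norm.1 hu) (mem_sphere_zero_iff_norm.1 hv) huv
    hU.measurableSet (hU.mem_nhds huU) hV.measurableSet (hV.mem_nhds hvV)
  have := isFiniteMeasure_weightedSphereMeasure hf
  refine ⟨r * (s * c), by positivity, B, hB, ?_⟩
  calc ((r * (s * c) : ℝ≥0) : ℝ≥0∞) • μ.restrict B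
    _ = (r : ℝ≥0∞) • (s : ℝ≥0∞) • (c : ℝ≥0∞) • μ.restrict B := by
      simp only [ENNReal.coe_mul, smul_smul]
    _ ≤ (r : ℝ≥0∞) • (s : ℝ≥0∞) •
        ((unitSphereMeasure E).restrict U ∗ (unitSphereMeasure E).restrict V) := by gcongr
    _ = ((r : ℝ≥0∞) • (unitSphereMeasure E).restrict U) ∗
        ((s : ℝ≥0∞) • (unitSphereMeasure E).restrict V) := by
      rw [Measure.conv_smul_left, Measure.conv_smul_right]
    _ ≤ weightedSphereMeasure f ∗ weightedSphereMeasure f := conv_mono hrU hsV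

lemma exists_pos_ae_mul_le_of_eq_mul_conv {μ : Measure E} [μ.IsAddHaarMeasure] {a : E → ℝ}
    {Q : E → ℂ} (hf : ContinuousOn f (sphere 0 1)) (hfnn : ∀ x ∈ sphere (0 : E) 1, 0 ≤ f x)
    (hfeven : ∀ x ∈ sphere (0 : E) 1, f (-x) = f x)
    (ha : ∀ x ∈ sphere (0 : E) 1, 0 ≤ a x)
    (hQ : IsConvDensity μ (unitSphereMeasure E) (fun x => f x) (fun x => f x) Q)
    (heq : ∀ x ∈ sphere (0 : E) 1,
      (f x : ℂ) = a x * ∫ y, f y * Q (x - y) ∂unitSphereMeasure E)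
    {u v w : E} (huv : LinearIndependent ℝ ![u, v]) (hu : u ∈ sphere 0 1) (hv : v ∈ sphere 0 1)
    (hw : w ∈ sphere 0 1) (hfu : 0 < f u) (hfv : 0 < f v) (hfw : 0 < f w) :
    ∃ r > 0, ∃ P ∈ 𝓝 (u + v + w), ∀ᵐ x ∂weightedSphereMeasure f, x ∈ P → a x * r ≤ f x := by
  have hint := integrable_unitSphereMeasure_of_continuousOn hf
  have hf0 : 0 ≤ᵐ[unitSphereMeasure E] f := ae_mem_sphere_unitSphereMeasure.mono hfnn
  have := isFiniteMeasure_weightedSphereMeasure hf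
  have := isNegInvariant_weightedSphereMeasure hfeven
  obtain ⟨hconv, hQ0⟩ := hQ.conv_weightedSphereMeasure_eq hf hfnn
  obtain ⟨c, hc, B, hB, hcB⟩ :=
    exists_smul_restrict_le_conv_weightedSphereMeasure μ hf huv hu hv hfu hfv
  obtain ⟨r, hr, P, hP, hrP⟩ := exists_pos_ae_le_integral_sub hconv hQ0 hc hB hcB
    (mem_support_weightedSphereMeasure hf hw hfw)
  refine ⟨r, hr, P, hP, ?_⟩
  filter_upwards [hrP, ae_mem_sphere_weightedSphereMeasure f, ae_pos_weightedSphereMeasure hf]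
    with x hx hxS hfx hxP
  obtain ⟨hintQ, hfxQ⟩ := integrable_re_and_eq_mul_integral_withDensity hint.1.aemeasurable hf0
    (heq x hxS) hfx.ne'
  rw [hfxQ]
  exact mul_le_mul_of_nonneg_left (hx hxP hintQ) (ha x hxS)

lemma pos_of_mem_closure_pos_of_eq_mul_conv {μ : Measure E} [μ.IsAddHaarMeasure] {a : E → ℝ}
    {Q : E → ℂ} (hf : ContinuousOn f (sphere 0 1)) (hfnn : ∀ x ∈ sphere (0 : E) 1, 0 ≤ f x)
    (hfeven : ∀ x ∈ sphere (0 : E) 1, f (-x) = f x)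
    (ha : LowerSemicontinuousOn a (sphere 0 1)) (hapos : ∀ x ∈ sphere (0 : E) 1, 0 < a x)
    (hQ : IsConvDensity μ (unitSphereMeasure E) (fun x => f x) (fun x => f x) Q)
    (heq : ∀ x ∈ sphere (0 : E) 1,
      (f x : ℂ) = a x * ∫ y, f y * Q (x - y) ∂unitSphereMeasure E)
    {u v w p : E} (hp : u + v + w = p) (huv : LinearIndependent ℝ ![u, v])
    (hu : u ∈ sphere 0 1) (hv : v ∈ sphere 0 1) (hw : w ∈ sphere 0 1)
    (hfu : 0 < f u) (hfv : 0 < f v) (hfw : 0 < f w)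
    (hcl : p ∈ closure {x ∈ sphere 0 1 | 0 < f x}) : 0 < f p := by
  obtain ⟨r, hr, P, hP, hrP⟩ := exists_pos_ae_mul_le_of_eq_mul_conv hf hfnn hfeven
    (fun x hx => (hapos x hx).le) hQ heq huv hu hv hw hfu hfv hfw
  rw [hp] at hP
  have hS : p ∈ sphere 0 1 := closure_minimal (fun x hx => hx.1) isClosed_sphere hcl
  have hsupp : p ∈ (weightedSphereMeasure f).support :=
    closure_minimal (fun x hx => mem_support_weightedSphereMeasure hf hx.1 hx.2)
      Measure.isClosed_support hcl
  have har : LowerSemicontinuousOn (fun x => a x * r) (sphere 0 1) :=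
    (continuous_mul_const r).comp_lowerSemicontinuousOn ha (monotone_mul_right_of_nonneg hr.le)
  exact (mul_pos (hapos _ hS) hr).trans_le <| le_of_ae_le_of_mem_support
    (ae_mem_sphere_weightedSphereMeasure f) hsupp (har _ hS)
    (hf _ hS).upperSemicontinuousWithinAt hP hrP

end WeightedSphere

section Geometry

variable {E : Type*} [NormedAddCommGroup E]

lemma linearIndependent_pair_of_mem_sphere [NormedSpace ℝ E] {x y : E} (hx : x ∈ sphere 0 1)
    (hy : y ∈ sphere 0 1) (hxy : x ≠ y) (hxy' : x ≠ -y) : LinearIndependent ℝ ![x, y] := by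
  refine (LinearIndependent.pair_iff' (ne_of_mem_sphere hx one_ne_zero)).2 ?_
  rintro c rfl
  rw [mem_sphere_zero_iff_norm] at hx hy
  rw [norm_smul, hx, mul_one, Real.norm_eq_abs] at hy
  rcases eq_or_eq_neg_of_abs_eq hy with rfl | rfl
  · exact hxy (one_smul ℝ x).symm
  · exact hxy' (by simp)

variable [InnerProductSpace ℝ E]

lemma exists_norm_eq_one_inner_eq_zero_inner_eq_zero [FiniteDimensional ℝ E]
    (hE : 2 < finrank ℝ E) (x y : E) : ∃ e : E, ‖e‖ = 1 ∧ ⟪x, e⟫ = 0 ∧ ⟪y, e⟫ = 0 := by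
  set K : Submodule ℝ E := Submodule.span ℝ {x, y}
  have hK : K ≠ ⊤ := by
    intro htop
    have hle : finrank ℝ K ≤ 2 := by
      classical
      have hcard := finrank_span_le_card (R := ℝ) ({x, y} : Set E)
      rw [toFinset_insert, toFinset_singleton] at hcard
      exact hcard.trans Finset.card_le_two
    rw [htop, finrank_top] at hle
    exact hE.not_ge hle
  have : Nontrivial Kᗮ := Submodule.nontrivial_iff_ne_bot.2 <|
    mt Submodule.orthogonal_eq_bot_iff.1 hK
  obtain ⟨⟨e, heK⟩, he⟩ := exists_norm_eq Kᗮ zero_le_one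
  exact ⟨e, he, heK x (Submodule.subset_span (by simp)), heK y (Submodule.subset_span (by simp))⟩

lemma norm_inv_two_smul_add_add_smul_eq_one {x y e : E} {c : ℝ} (hx : ‖x‖ = 1) (hy : ‖y‖ = 1)
    (he : ‖e‖ = 1) (hxe : ⟪x, e⟫ = 0) (hye : ⟪y, e⟫ = 0) (hc : |c| = 2⁻¹ * ‖x - y‖) :
    ‖(2⁻¹ : ℝ) • (x + y) + c • e‖ = 1 := by
  have horth : ⟪(2⁻¹ : ℝ) • (x + y), c • e⟫ = 0 := by
    simp only [inner_smul_left, inner_smul_right, inner_add_left, hxe, hye, add_zero, mul_zero]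
  have hpar := parallelogram_law_with_norm ℝ x y
  rw [hx, hy] at hpar
  rw [← sq_eq_sq₀ (norm_nonneg _) zero_le_one, norm_add_sq_real, horth, norm_smul, norm_smul,
    Real.norm_eq_abs c, he, hc, Real.norm_of_nonneg (by norm_num)]
  linear_combination 4⁻¹ * hpar

lemma exists_linearIndependent_add_eq_add_inner_lt [FiniteDimensional ℝ E] (hE : 2 < finrank ℝ E)
    {x y : E} (hx : x ∈ sphere 0 1) (hy : y ∈ sphere 0 1) (hxy : x ≠ y) (hxy' : x ≠ -y) :
    ∃ u ∈ sphere (0 : E) 1, ∃ v ∈ sphere (0 : E) 1, LinearIndependent ℝ ![u, v] ∧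
      u + v = x + y ∧ ⟪x, y⟫ < ⟪x, u⟫ ∧ ⟪x, y⟫ < ⟪x, v⟫ := by
  rw [mem_sphere_zero_iff_norm] at hx hy
  obtain ⟨e, he, hxe, hye⟩ := exists_norm_eq_one_inner_eq_zero_inner_eq_zero hE x y
  set d : ℝ := 2⁻¹ * ‖x - y‖
  have hd : 0 < d := mul_pos (by norm_num) (norm_pos_iff.2 (sub_ne_zero.2 hxy))
  have hu := mem_sphere_zero_iff_norm.2 <|
    norm_inv_two_smul_add_add_smul_eq_one hx hy he hxe hye (c := d) (abs_of_pos hd)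
  have hv := mem_sphere_zero_iff_norm.2 <|
    norm_inv_two_smul_add_add_smul_eq_one hx hy he hxe hye (c := -d)
    (by rw [abs_neg, abs_of_pos hd])
  have hinner (c : ℝ) : ⟪x, y⟫ < ⟪x, (2⁻¹ : ℝ) • (x + y) + c • e⟫ := by
    have hlt : ⟪x, y⟫ < 1 := (inner_lt_one_iff_real_of_norm_eq_one hx hy).2 hxy
    rw [inner_add_right, inner_smul_right, inner_smul_right, hxe, inner_add_right,
      real_inner_self_eq_norm_sq, hx]
    linarith
  refine ⟨_, hu, _, hv, linearIndependent_pair_of_mem_sphere hu hv ?_ ?_, by module,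
    hinner d, hinner (-d)⟩
  · intro huv
    have hde : (2 * d) • e = 0 := by linear_combination (norm := module) huv
    exact smul_ne_zero (by positivity) (ne_zero_of_norm_ne_zero (he.trans_ne one_ne_zero)) hde
  · intro huv
    exact hxy' (by linear_combination (norm := module) huv)

lemma not_isLocalMaxOn_inner_sphere [CompleteSpace E] {x p : E} {r : ℝ}
    (hxp : LinearIndependent ℝ ![x, p]) (hp : p ∈ sphere 0 r) :
    ¬ IsLocalMaxOn (fun y => ⟪x, y⟫) (sphere 0 r) p := by
  intro hmax
  obtain rfl : ‖p‖ = r := mem_sphere_zero_iff_norm.1 hp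
  have hset : {y : E | ‖y‖ ^ 2 = ‖p‖ ^ 2} = sphere 0 ‖p‖ := by ext; simp
  rw [← hset] at hmax
  obtain ⟨s, t, hst, h⟩ := IsLocalExtrOn.exists_multipliers_of_hasStrictFDerivAt_1d
    (.inr hmax) (hasStrictFDerivAt_norm_sq p) (innerSL ℝ x).hasStrictFDerivAt
  have hcomb : t • x + (2 * s) • p = 0 := by
    refine ext_inner_right ℝ fun y => ?_
    have hy := DFunLike.congr_fun h y
    simp only [add_apply, smul_apply, innerSL_apply_apply, zero_apply,
      smul_eq_mul, nsmul_eq_mul, Nat.cast_ofNat] at hy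
    rw [inner_add_left, real_inner_smul_left, real_inner_smul_left, inner_zero_left]
    linear_combination hy
  obtain ⟨rfl, hs⟩ := LinearIndependent.pair_iff.1 hxp _ _ hcomb
  exact hst (by simpa using hs)

lemma mem_closure_setOf_lt_of_not_isLocalMaxOn {X : Type*} [TopologicalSpace X] {g : X → ℝ}
    {S : Set X} {p : X} (h : ¬ IsLocalMaxOn g S p) : p ∈ closure {y ∈ S | g p < g y} := by
  rw [IsLocalMaxOn, IsMaxFilter, not_eventually, frequently_nhdsWithin_iff] at h
  exact mem_closure_iff_frequently.2 <| h.mono fun y hy => ⟨hy.2, not_le.1 hy.1⟩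

end Geometry

section Positivity

variable {E : Type*} [NormedAddCommGroup E] [InnerProductSpace ℝ E] [FiniteDimensional ℝ E]

lemma exists_eq_zero_forall_inner_lt_imp_pos {f : E → ℝ} (hf : ContinuousOn f (sphere 0 1))
    (hfnn : ∀ x ∈ sphere (0 : E) 1, 0 ≤ f x) (hz : ∃ z ∈ sphere (0 : E) 1, f z = 0) (x : E) :
    ∃ p ∈ sphere (0 : E) 1, f p = 0 ∧ ∀ y ∈ sphere (0 : E) 1, ⟪x, p⟫ < ⟪x, y⟫ → 0 < f y := by
  have hcompact : IsCompact (sphere 0 1 ∩ f ⁻¹' {0}) := (isCompact_sphere 0 1).of_isClosed_subset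
    (hf.preimage_isClosed_of_isClosed isClosed_sphere isClosed_singleton) inter_subset_left
  obtain ⟨p, ⟨hp, hfp⟩, hmax⟩ := hcompact.exists_isMaxOn hz
    (continuous_const.inner continuous_id : Continuous fun y => ⟪x, y⟫).continuousOn
  exact ⟨p, hp, hfp, fun y hy hxy =>
    (hfnn y hy).lt_of_ne' fun hfy => hxy.not_ge (hmax ⟨hy, hfy⟩)⟩

theorem even_nonneg_solution_strictly_positive_general [MeasurableSpace E] [BorelSpace E]
    (hE : 2 < finrank ℝ E) (μ : Measure E) [μ.IsAddHaarMeasure]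
    (a : E → ℝ) (ha : LowerSemicontinuousOn a (sphere 0 1))
    (hapos : ∀ x ∈ sphere (0 : E) 1, 0 < a x)
    (f : E → ℝ) (hf : ContinuousOn f (sphere 0 1)) (hfnn : ∀ x ∈ sphere (0 : E) 1, 0 ≤ f x)
    (hfeven : ∀ x ∈ sphere (0 : E) 1, f (-x) = f x)
    (hfne : ∃ x ∈ sphere (0 : E) 1, f x ≠ 0)
    (heq : ∃ Q : E → ℂ,
      IsConvDensity μ (unitSphereMeasure E) (fun x => f x) (fun x => f x) Q ∧
      ∀ x ∈ sphere (0 : E) 1,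
        (f x : ℂ) = a x * ∫ y, f y * Q (x - y) ∂unitSphereMeasure E) :
    ∀ x ∈ sphere (0 : E) 1, 0 < f x := by
  obtain ⟨Q, hQ, heq⟩ := heq
  obtain ⟨x, hx, hfx⟩ := hfne
  by_contra! ⟨z, hz, hfz⟩
  obtain ⟨p, hp, hfp, hpos⟩ := exists_eq_zero_forall_inner_lt_imp_pos hf hfnn
    ⟨z, hz, hfz.antisymm (hfnn z hz)⟩ x
  have hxp : x ≠ p := by rintro rfl; exact hfx hfp
  have hxp' : x ≠ -p := by rintro rfl; exact hfx ((hfeven p hp).trans hfp)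
  obtain ⟨u, hu, v, hv, huv, hadd, hxu, hxv⟩ :=
    exists_linearIndependent_add_eq_add_inner_lt hE hx hp hxp hxp'
  have hsub : {y ∈ sphere (0 : E) 1 | ⟪x, p⟫ < ⟪x, y⟫} ⊆ {y ∈ sphere 0 1 | 0 < f y} :=
    fun y hy => ⟨hy.1, hpos y hy.1 hy.2⟩
  have hcl : p ∈ closure {y ∈ sphere 0 1 | 0 < f y} :=
    closure_mono hsub <| mem_closure_setOf_lt_of_not_isLocalMaxOn <|
      not_isLocalMaxOn_inner_sphere (linearIndependent_pair_of_mem_sphere hx hp hxp hxp') hp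
  have hsum : u + v + -x = p := by rw [hadd, add_neg_cancel_comm]
  have hfx' : 0 < f (-x) := (hfeven x hx).symm ▸ (hfnn x hx).lt_of_ne' hfx
  exact hfp.not_gt <| pos_of_mem_closure_pos_of_eq_mul_conv hf hfnn hfeven ha hapos hQ heq hsum
    huv hu hv (by simpa using hx) (hpos u hu hxu) (hpos v hv hxv) hfx' hcl

end Positivity

lemma sphMeasure_eq_unitSphereMeasure : sphMeasure = unitSphereMeasure E3 := by
  have hdim : (finrank ℝ E3 : ℝ) - 1 = 2 := by
    rw [finrank_euclideanSpace_fin]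
    norm_num
  rw [unitSphereMeasure, hdim, sphMeasure, sph]

/-- **Strict positivity.** Let `a ∈ C⁰(S²)` be strictly positive and let `f ∈ C⁰(S²)` be a
continuous, nonnegative, even solution of `f = a · (fσ*fσ*fσ)|_{S²}` (pointwise on `S²`,
with `(fσ*fσ*fσ)(x) = ∫ f(y) Q(x-y) dσ(y)` and `Q` the density of `fσ*fσ`) which does not
vanish identically.  Then `f(x) > 0` for every `x ∈ S²`. -/
theorem even_nonneg_solution_strictly_positive
    (a : E3 → ℝ) (ha : ContinuousOn a sph) (hapos : ∀ x ∈ sph, 0 < a x)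
    (f : E3 → ℝ) (hf : ContinuousOn f sph) (hfnn : ∀ x ∈ sph, 0 ≤ f x)
    (hfeven : ∀ x ∈ sph, f (-x) = f x)
    (hfne : ∃ x ∈ sph, f x ≠ 0)
    (heq : ∃ Q : E3 → ℂ, IsConvPairDensity (fun x => (f x : ℂ)) (fun x => (f x : ℂ)) Q ∧
      ∀ x ∈ sph, (f x : ℂ) = (a x : ℂ) * ∫ y, (f y : ℂ) * Q (x - y) ∂sphMeasure) :
    ∀ x ∈ sph, 0 < f x := by
  simp only [IsConvPairDensity, sphMeasure_eq_unitSphereMeasure] at heq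
  exact even_nonneg_solution_strictly_positive_general (by simp) volume a ha.lowerSemicontinuousOn
    hapos f hf hfnn hfeven hfne heq

end
end

section
/- Let ψ : B(0,2) → ℝ be a measurable function on the open ball B(0,2) ⊂ ℝ³. Let z̄₁, z̄₂, z̄₃ ∈ ℝ³ be such that z̄₄ := z̄₁ + z̄₂ − z̄₃ and z̄₁, z̄₂, z̄₃, z̄₄ all lie in B(0,2). Suppose there is a neighborhood U of (z̄₁, z̄₂, z̄₃) in (ℝ³)³ such that for Lebesgue-almost every (z₁, z₂, z₃) ∈ U, setting z₄ := z₁ + z₂ − z₃, one has e^{i[ψ(z₁)+ψ(z₂)]} = e^{i[ψ(z₃)+ψ(z₄)]}. Then there exist ξ ∈ ℝ³, a constant c ∈ ℂ with |c| = 1, and a neighborhood V ⊂ ℝ³ of z̄₁ such that e^{iψ(w)} = c e^{iw·ξ} for Lebesgue-almost every w ∈ V. -/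
open MeasureTheory Metric Filter
open scoped ENNReal RealInnerProductSpace

noncomputable section

/-!
Multiplicatively, `f = e^{iψ}` satisfies `f z₁ * f z₂ = f z₃ * f (z₁ + z₂ - z₃)`, and freezing a
generic `z₃` turns this into a local Pexider equation `f x * g y = h (x + y)`. Integrating against
a bump function in `y` exhibits `f` as a multiple of a mollification of `h`, so `f`, and
symmetrically `g`, is smooth up to a null set. By continuity `f x * g y` then depends only on
`x + y` at every point, so its derivatives in `x` and `y` agree: the logarithmic derivative of `f`
at `x` equals that of `g` at `y`, whence it is a constant `L` and `f = c * exp L`. Since `f` is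
unimodular, `L` is purely imaginary.
-/

open Set
open scoped ContDiff Topology

section FactorsThrough

variable {G G' Z : Type*} [AddGroup G] [TopologicalSpace G] [ContinuousAdd G] [MeasurableSpace G]
  [OpensMeasurableSpace G] [MeasurableAdd G] [AddGroup G'] [TopologicalSpace Z] [T2Space Z]
  {ν : Measure G} [ν.IsAddRightInvariant] [ν.IsOpenPosMeasure]

theorem eq_of_map_eq_of_ae_eq_comp {u : Set G} (hu : IsOpen u) (σ : G →+ G') {Φ : G → Z}
    {h : G' → Z} (hΦ : ContinuousOn Φ u) (hae : Φ =ᵐ[ν.restrict u] h ∘ σ) {p q : G} (hp : p ∈ u)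
    (hq : q ∈ u) (hpq : σ p = σ q) : Φ p = Φ q := by
  rw [EventuallyEq, ae_restrict_iff' hu.measurableSet] at hae
  obtain ⟨d, rfl⟩ : ∃ d, q = p + d := ⟨-p + q, by simp⟩
  have hd : σ d = 0 := by simpa using hpq
  have hw : IsOpen (u ∩ (· + d) ⁻¹' u) := hu.inter (hu.preimage (continuous_add_const d))
  have hshift : ∀ᵐ x ∂ν, x + d ∈ u → Φ (x + d) = (h ∘ σ) (x + d) :=
    (measurePreserving_add_right ν d).quasiMeasurePreserving.ae hae
  have hEqOn : EqOn Φ (fun x => Φ (x + d)) (u ∩ (· + d) ⁻¹' u) := by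
    refine Measure.eqOn_open_of_ae_eq (μ := ν) ?_ hw (hΦ.mono inter_subset_left)
      (hΦ.comp (continuous_add_const d).continuousOn fun x hx => hx.2)
    rw [EventuallyEq, ae_restrict_iff' hw.measurableSet]
    filter_upwards [hae, hshift] with x hx hxd hxw
    simp [hx hxw.1, hxd hxw.2, hd]
  exact hEqOn ⟨hp, hq⟩

end FactorsThrough

theorem smul_fderiv_eq_of_mul_eq_of_add_eq {𝕜 E 𝔸 : Type*} [NontriviallyNormedField 𝕜]
    [NormedAddCommGroup E] [NormedSpace 𝕜 E] [NormedCommRing 𝔸] [NormedAlgebra 𝕜 𝔸] {f g : E → 𝔸}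
    {f' g' : E →L[𝕜] 𝔸} {x y : E} (hf : HasFDerivAt f f' x) (hg : HasFDerivAt g g' y)
    {s t : Set E} (hs : s ∈ 𝓝 x) (ht : t ∈ 𝓝 y)
    (hfg : ∀ x' ∈ s, ∀ y' ∈ t, x' + y' = x + y → f x' * g y' = f x * g y) :
    g y • f' = f x • g' := by
  have hf₀ : HasFDerivAt (fun k => f (x + k)) f' 0 := by
    simpa [hasFDerivAt_comp_add_left] using hf
  have hg₀ : HasFDerivAt (fun k => g (y - k)) (-g') 0 := by
    have hsub : HasFDerivAt (fun k : E => y - k) (-ContinuousLinearMap.id 𝕜 E) 0 :=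
      (hasFDerivAt_id (0 : E)).const_sub y
    have hg' : HasFDerivAt g g' (y - 0) := by simpa using hg
    simpa [Function.comp_def] using hg'.comp (0 : E) hsub
  have hconst : (fun k => f (x + k) * g (y - k)) =ᶠ[𝓝 0] fun _ => f x * g y := by
    have hs₀ : ∀ᶠ k in 𝓝 (0 : E), x + k ∈ s :=
      (continuous_const_add x).continuousAt.eventually_mem (by simpa using hs)
    have ht₀ : ∀ᶠ k in 𝓝 (0 : E), y - k ∈ t :=
      (continuous_const.sub continuous_id).continuousAt.eventually_mem (by simpa using ht)
    filter_upwards [hs₀, ht₀] with k hks hkt using hfg _ hks _ hkt (by abel)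
  have hzero := (hf₀.mul hg₀).unique
    ((hasFDerivAt_const (f x * g y) 0).congr_of_eventuallyEq hconst)
  simp only [add_zero, sub_zero, smul_neg] at hzero
  exact (neg_add_eq_zero.1 hzero).symm

section Exponential

variable {E : Type*} [NormedAddCommGroup E]

theorem exists_eq_mul_exp_of_hasFDerivAt_smul [NormedSpace ℝ E] {f : E → ℂ} {L : E →L[ℝ] ℂ}
    {s : Set E} (hs : IsOpen s) (hs' : IsPreconnected s)
    (hf : ∀ x ∈ s, HasFDerivAt f (f x • L) x) : ∃ c : ℂ, ∀ x ∈ s, f x = c * Complex.exp (L x) := by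
  have hquot : ∀ x ∈ s, HasFDerivAt (fun x => f x * Complex.exp (-L x)) (0 : E →L[ℝ] ℂ) x := by
    intro x hx
    refine ((hf x hx).mul L.hasFDerivAt.neg.cexp).congr_fderiv ?_
    rw [smul_neg, smul_neg, smul_comm (f x), neg_add_cancel]
  obtain ⟨c, hc⟩ := hs.exists_is_const_of_fderiv_eq_zero hs'
    (fun x hx => (hquot x hx).differentiableAt.differentiableWithinAt)
    (fun x hx => (hquot x hx).fderiv)
  refine ⟨c, fun x hx => ?_⟩
  rw [← hc x hx, mul_assoc, ← Complex.exp_add, neg_add_cancel, Complex.exp_zero, mul_one]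

theorem re_apply_eq_zero_of_norm_mul_exp_eq_one [NormedSpace ℝ E] {c : ℂ} {L : E →L[ℝ] ℂ} {a : E}
    (h : ∀ᶠ x in 𝓝 a, ‖c * Complex.exp (L x)‖ = 1) (v : E) : (L v).re = 0 := by
  have hconst : (fun x => (Complex.reCLM ∘L L) x) =ᶠ[𝓝 a] fun _ => (L a).re := by
    filter_upwards [h] with x hx
    have hxa := hx.trans h.self_of_nhds.symm
    have hc : ‖c‖ ≠ 0 := fun hc => by simp [norm_eq_zero.1 hc] at hx
    simpa [Complex.norm_exp, hc] using hxa
  have hL : Complex.reCLM ∘L L = 0 := (Complex.reCLM ∘L L).hasFDerivAt.unique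
    ((hasFDerivAt_const (L a).re a).congr_of_eventuallyEq hconst)
  exact DFunLike.congr_fun hL v

theorem exists_eq_I_mul_inner_of_re_eq_zero [InnerProductSpace ℝ E] [CompleteSpace E]
    {L : E →L[ℝ] ℂ} (hL : ∀ v, (L v).re = 0) :
    ∃ ξ : E, ∀ v, L v = Complex.I * ((⟪v, ξ⟫ : ℝ) : ℂ) := by
  refine ⟨(InnerProductSpace.toDual ℝ E).symm (Complex.imCLM ∘L L), fun v => ?_⟩
  rw [real_inner_comm, InnerProductSpace.toDual_symm_apply]
  apply Complex.ext <;> simp [hL]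

theorem exists_mul_exp_eq_mul_exp_I_mul_inner [InnerProductSpace ℝ E] [CompleteSpace E] {c : ℂ}
    {L : E →L[ℝ] ℂ} {a : E} (h : ∀ᶠ x in 𝓝 a, ‖c * Complex.exp (L x)‖ = 1) :
    ‖c‖ = 1 ∧ ∃ ξ : E, ∀ x, L x = Complex.I * ((⟪x, ξ⟫ : ℝ) : ℂ) := by
  have hre := re_apply_eq_zero_of_norm_mul_exp_eq_one h
  exact ⟨by simpa [Complex.norm_exp, hre] using h.self_of_nhds,
    exists_eq_I_mul_inner_of_re_eq_zero hre⟩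

end Exponential

theorem exists_mem_ae_prod_of_ae_prod_prod {X Y Z : Type*} [MeasurableSpace X] [MeasurableSpace Y]
    [MeasurableSpace Z] [TopologicalSpace Z] {μ : Measure X} {ν : Measure Y} {ρ : Measure Z}
    [SFinite μ] [SFinite ν] [SFinite ρ] [ρ.IsOpenPosMeasure] {P : X × Y × Z → Prop}
    (hP : ∀ᵐ p ∂μ.prod (ν.prod ρ), P p) {u : Set Z} (hu : IsOpen u) (hu' : u.Nonempty) :
    ∃ z ∈ u, ∀ᵐ p ∂μ.prod ν, P (p.1, p.2, z) := by
  have hcycle : MeasurePreserving (fun q : Z × X × Y => (q.2.1, q.2.2, q.1))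
      (ρ.prod (μ.prod ν)) (μ.prod (ν.prod ρ)) :=
    (measurePreserving_prodAssoc μ ν ρ).comp Measure.measurePreserving_swap
  have hslices := Measure.ae_ae_of_ae_prod (hcycle.quasiMeasurePreserving.ae hP)
  obtain ⟨z, hz, hzu⟩ := (Measure.dense_of_ae hslices).exists_mem_open hu hu'
  exact ⟨z, hzu, hz⟩

theorem locallyIntegrable_of_norm_eq_one {X F : Type*} [TopologicalSpace X] [MeasurableSpace X]
    [NormedAddCommGroup F] {μ : Measure X} [IsLocallyFiniteMeasure μ] {f : X → F}
    (hf : AEStronglyMeasurable f μ) (hnorm : ∀ x, ‖f x‖ = 1) : LocallyIntegrable f μ :=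
  (memLp_top_of_bound hf 1 (.of_forall fun x => (hnorm x).le)).locallyIntegrable le_top

section Pexider

variable {E : Type*} [NormedAddCommGroup E] [NormedSpace ℝ E] [FiniteDimensional ℝ E]
  [MeasurableSpace E] [BorelSpace E] {μ : Measure E} [μ.IsAddHaarMeasure]

theorem contDiff_integral_smul_comp_add {F : Type*} [NormedAddCommGroup F] [NormedSpace ℝ F]
    {n : ℕ∞} {φ : E → ℝ} {h : E → F} (hφ : ContDiff ℝ n φ) (hφc : HasCompactSupport φ)
    (hh : LocallyIntegrable h μ) : ContDiff ℝ n fun x => ∫ y, φ y • h (x + y) ∂μ := by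
  have hneg : HasCompactSupport fun y => φ (-y) := hφc.comp_homeomorph (Homeomorph.neg E)
  convert hneg.contDiff_convolution_left (ContinuousLinearMap.lsmul ℝ ℝ)
    (hφ.comp contDiff_neg) hh using 2 with x
  rw [← integral_neg_eq_self (fun y => φ y • h (x + y)) μ]
  simp [convolution_def, sub_eq_add_neg]

theorem exists_contDiff_ae_eq_of_mul_ae_eq {𝕜 : Type*} [RCLike 𝕜] {f g h : E → 𝕜} {s t : Set E}
    (ht : IsOpen t) (hg : LocallyIntegrableOn g t μ) (hg₀ : ¬ g =ᵐ[μ.restrict t] 0)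
    (hh : LocallyIntegrable h μ)
    (hmul : ∀ᵐ x ∂μ.restrict s, ∀ᵐ y ∂μ.restrict t, f x * g y = h (x + y)) :
    ∃ F : E → 𝕜, ContDiff ℝ ∞ F ∧ f =ᵐ[μ.restrict s] F := by
  obtain ⟨φ, hφ, hφc, hφt, hφg⟩ : ∃ φ : E → ℝ, ContDiff ℝ ∞ φ ∧ HasCompactSupport φ ∧
      tsupport φ ⊆ t ∧ ∫ y, φ y • g y ∂μ ≠ 0 := by
    by_contra! hzero
    exact hg₀ ((ae_restrict_iff' ht.measurableSet).2
      (ht.ae_eq_zero_of_integral_contDiff_smul_eq_zero hg hzero))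
  refine ⟨fun x => (∫ y, φ y • h (x + y) ∂μ) * (∫ y, φ y • g y ∂μ)⁻¹,
    (contDiff_integral_smul_comp_add hφ hφc hh).mul contDiff_const, ?_⟩
  filter_upwards [hmul] with x hx
  rw [ae_restrict_iff' ht.measurableSet] at hx
  have hint : ∫ y, φ y • h (x + y) ∂μ = f x * ∫ y, φ y • g y ∂μ := by
    rw [← integral_const_mul]
    refine integral_congr_ae ?_
    filter_upwards [hx] with y hy
    by_cases hyt : y ∈ t
    · rw [← hy hyt, mul_smul_comm]
    · simp [image_eq_zero_of_notMem_tsupport fun hyφ => hyt (hφt hyφ)]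
  rw [hint, mul_inv_cancel_right₀ hφg]

theorem exists_eq_mul_exp_of_mul_ae_eq {f g h : E → ℂ} {s t : Set E} (hs : IsOpen s)
    (hs' : IsPreconnected s) (ht : IsOpen t) (hf : DifferentiableOn ℝ f s)
    (hg : DifferentiableOn ℝ g t) (hg₀ : ∃ y ∈ t, g y ≠ 0)
    (hmul : ∀ᵐ p ∂(μ.restrict s).prod (μ.restrict t), f p.1 * g p.2 = h (p.1 + p.2)) :
    ∃ (c : ℂ) (L : E →L[ℝ] ℂ), ∀ x ∈ s, f x = c * Complex.exp (L x) := by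
  obtain ⟨y, hy, hgy⟩ := hg₀
  rw [Measure.prod_restrict] at hmul
  have hfdiff : ∀ x ∈ s, DifferentiableAt ℝ f x := fun x hx =>
    hf.differentiableAt (hs.mem_nhds hx)
  have hfg : ∀ p ∈ s ×ˢ t, ∀ q ∈ s ×ˢ t, p.1 + p.2 = q.1 + q.2 →
      f p.1 * g p.2 = f q.1 * g q.2 := by
    have hcont : ContinuousOn (fun p : E × E => f p.1 * g p.2) (s ×ˢ t) :=
      (hf.continuousOn.comp continuousOn_fst fun p hp => hp.1).mul
        (hg.continuousOn.comp continuousOn_snd fun p hp => hp.2)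
    exact fun p hp q hq hpq => eq_of_map_eq_of_ae_eq_comp (hs.prod ht)
      (AddMonoidHom.fst E E + AddMonoidHom.snd E E) hcont hmul hp hq hpq
  have hlog : ∀ x ∈ s, fderiv ℝ f x = f x • (g y)⁻¹ • fderiv ℝ g y := by
    intro x hx
    have hderiv := smul_fderiv_eq_of_mul_eq_of_add_eq (hfdiff x hx).hasFDerivAt
      (hg.differentiableAt (ht.mem_nhds hy)).hasFDerivAt (hs.mem_nhds hx) (ht.mem_nhds hy)
      fun x' hx' y' hy' hsum => hfg (x', y') ⟨hx', hy'⟩ (x, y) ⟨hx, hy⟩ hsum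
    rw [smul_comm, ← hderiv, inv_smul_smul₀ hgy]
  obtain ⟨c, hc⟩ := exists_eq_mul_exp_of_hasFDerivAt_smul hs hs'
    fun x hx => hlog x hx ▸ (hfdiff x hx).hasFDerivAt
  exact ⟨c, _, hc⟩

theorem exists_ae_eq_mul_exp_of_mul_ae_eq {f g h : E → ℂ} {s t : Set E} (hs : IsOpen s)
    (hs' : IsPreconnected s) (ht : IsOpen t) (hf : LocallyIntegrableOn f s μ)
    (hg : LocallyIntegrableOn g t μ) (hg₀ : ¬ g =ᵐ[μ.restrict t] 0) (hh : LocallyIntegrable h μ)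
    (hmul : ∀ᵐ p ∂(μ.restrict s).prod (μ.restrict t), f p.1 * g p.2 = h (p.1 + p.2)) :
    ∃ (c : ℂ) (L : E →L[ℝ] ℂ), f =ᵐ[μ.restrict s] fun x => c * Complex.exp (L x) := by
  by_cases hf₀ : f =ᵐ[μ.restrict s] 0
  · exact ⟨0, 0, hf₀.trans (.of_forall fun x => by simp)⟩
  have hswap : ∀ᵐ p ∂(μ.restrict t).prod (μ.restrict s), g p.1 * f p.2 = h (p.1 + p.2) := by
    filter_upwards [Measure.measurePreserving_swap.quasiMeasurePreserving.ae hmul] with p hp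
    simpa only [Prod.fst_swap, Prod.snd_swap, mul_comm, add_comm] using hp
  obtain ⟨F, hF, hfF⟩ :=
    exists_contDiff_ae_eq_of_mul_ae_eq ht hg hg₀ hh (Measure.ae_ae_of_ae_prod hmul)
  obtain ⟨G, hG, hgG⟩ :=
    exists_contDiff_ae_eq_of_mul_ae_eq hs hf hf₀ hh (Measure.ae_ae_of_ae_prod hswap)
  have hG₀ : ∃ y ∈ t, G y ≠ 0 := by
    by_contra! hzero
    exact hg₀ (hgG.trans (ae_restrict_of_forall_mem ht.measurableSet hzero))
  have hFG : ∀ᵐ p ∂(μ.restrict s).prod (μ.restrict t), F p.1 * G p.2 = h (p.1 + p.2) := by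
    filter_upwards [hmul, Measure.quasiMeasurePreserving_fst.ae hfF,
      Measure.quasiMeasurePreserving_snd.ae hgG] with p hp hpF hpG
    rw [← hpF, ← hpG, hp]
  obtain ⟨c, L, hc⟩ := exists_eq_mul_exp_of_mul_ae_eq hs hs' ht
    (hF.differentiable (by simp)).differentiableOn
    (hG.differentiable (by simp)).differentiableOn hG₀ hFG
  exact ⟨c, L, hfF.trans (ae_restrict_of_forall_mem hs.measurableSet hc)⟩

end Pexider

section Unimodular

variable {E : Type*} [NormedAddCommGroup E] [InnerProductSpace ℝ E] [FiniteDimensional ℝ E]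
  [MeasurableSpace E] [BorelSpace E] {μ : Measure E} [μ.IsAddHaarMeasure]

theorem exists_ae_eq_mul_exp_I_mul_inner_of_mul_ae_eq {f g h : E → ℂ} {s t : Set E}
    (hs : IsOpen s) (hs' : IsConnected s) (ht : IsOpen t) (ht' : t.Nonempty)
    (hf : AEStronglyMeasurable f μ) (hg : AEStronglyMeasurable g μ) (hh : AEStronglyMeasurable h μ)
    (hf₁ : ∀ x, ‖f x‖ = 1) (hg₁ : ∀ x, ‖g x‖ = 1) (hh₁ : ∀ x, ‖h x‖ = 1)
    (hmul : ∀ᵐ p ∂(μ.restrict s).prod (μ.restrict t), f p.1 * g p.2 = h (p.1 + p.2)) :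
    ∃ (ξ : E) (c : ℂ), ‖c‖ = 1 ∧
      f =ᵐ[μ.restrict s] fun x => c * Complex.exp (Complex.I * ((⟪x, ξ⟫ : ℝ) : ℂ)) := by
  have hg₀ : ¬ g =ᵐ[μ.restrict t] 0 := by
    intro hzero
    have : NeZero (μ.restrict t) := ⟨by simpa using (ht.measure_pos μ ht').ne'⟩
    obtain ⟨y, hy⟩ := hzero.exists
    simpa [hy] using hg₁ y
  obtain ⟨c, L, hfL⟩ := exists_ae_eq_mul_exp_of_mul_ae_eq hs hs'.isPreconnected ht
    ((locallyIntegrable_of_norm_eq_one hf hf₁).locallyIntegrableOn s)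
    ((locallyIntegrable_of_norm_eq_one hg hg₁).locallyIntegrableOn t) hg₀
    (locallyIntegrable_of_norm_eq_one hh hh₁) hmul
  have hnorm : EqOn (fun x => ‖c * Complex.exp (L x)‖) (fun _ => 1) s := by
    refine Measure.eqOn_open_of_ae_eq (μ := μ) ?_ hs (by fun_prop) continuousOn_const
    filter_upwards [hfL] with x hx
    rw [← hx, hf₁]
  obtain ⟨a, ha⟩ := hs'.nonempty
  obtain ⟨hc, ξ, hξ⟩ := exists_mul_exp_eq_mul_exp_I_mul_inner
    (hnorm.eventuallyEq_of_mem (hs.mem_nhds ha))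
  exact ⟨ξ, c, hc, by simpa only [hξ] using hfL⟩

theorem exists_ae_eq_mul_exp_I_mul_inner_of_mul_ae_eq_mul {f : E → ℂ}
    (hf : AEStronglyMeasurable f μ) (hf₁ : ∀ x, ‖f x‖ = 1) {z₁ z₂ z₃ : E} {U : Set (E × E × E)}
    (hU : U ∈ 𝓝 (z₁, z₂, z₃))
    (hmul : ∀ᵐ p ∂μ.prod (μ.prod μ), p ∈ U →
      f p.1 * f p.2.1 = f p.2.2 * f (p.1 + p.2.1 - p.2.2)) :
    ∃ (ξ : E) (c : ℂ), ‖c‖ = 1 ∧ ∃ V ∈ 𝓝 z₁, ∀ᵐ w ∂μ, w ∈ V →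
      f w = c * Complex.exp (Complex.I * ((⟪w, ξ⟫ : ℝ) : ℂ)) := by
  obtain ⟨r, hr, hrU⟩ := Metric.mem_nhds_iff.1 hU
  obtain ⟨z, hz, hslice⟩ :=
    exists_mem_ae_prod_of_ae_prod_prod hmul isOpen_ball ⟨z₃, mem_ball_self hr⟩
  have hh : AEStronglyMeasurable (fun s => f z * f (s - z)) μ :=
    (hf.comp_measurePreserving (measurePreserving_sub_right μ z)).const_mul (f z)
  have hpexider : ∀ᵐ p ∂(μ.restrict (ball z₁ r)).prod (μ.restrict (ball z₂ r)),
      f p.1 * f p.2 = f z * f (p.1 + p.2 - z) := by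
    rw [Measure.prod_restrict, ae_restrict_iff' (measurableSet_ball.prod measurableSet_ball)]
    filter_upwards [hslice] with p hp hp_mem
    exact hp (hrU (by simpa only [← ball_prod_same] using ⟨hp_mem.1, hp_mem.2, hz⟩))
  obtain ⟨ξ, c, hc, hexp⟩ := exists_ae_eq_mul_exp_I_mul_inner_of_mul_ae_eq isOpen_ball
    (isConnected_ball hr) isOpen_ball (nonempty_ball.2 hr) hf hf hh hf₁ hf₁ (by simp [hf₁]) hpexider
  exact ⟨ξ, c, hc, ball z₁ r, ball_mem_nhds z₁ hr, (ae_restrict_iff' measurableSet_ball).1 hexp⟩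

theorem separate_variables_general {ψ : E → ℝ} (hψ : AEMeasurable ψ μ) {z₁ z₂ z₃ : E}
    {U : Set (E × E × E)} (hU : U ∈ 𝓝 (z₁, z₂, z₃))
    (h : ∀ᵐ p ∂μ.prod (μ.prod μ), p ∈ U →
      Complex.exp (Complex.I * ((ψ p.1 + ψ p.2.1 : ℝ) : ℂ))
        = Complex.exp (Complex.I * ((ψ p.2.2 + ψ (p.1 + p.2.1 - p.2.2) : ℝ) : ℂ))) :
    ∃ (ξ : E) (c : ℂ), ‖c‖ = 1 ∧ ∃ V ∈ 𝓝 z₁, ∀ᵐ w ∂μ, w ∈ V →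
      Complex.exp (Complex.I * ((ψ w : ℝ) : ℂ))
        = c * Complex.exp (Complex.I * ((⟪w, ξ⟫ : ℝ) : ℂ)) := by
  have hexp : Continuous fun t : ℝ => Complex.exp (Complex.I * t) := by fun_prop
  refine exists_ae_eq_mul_exp_I_mul_inner_of_mul_ae_eq_mul
    (hexp.comp_aestronglyMeasurable hψ.aestronglyMeasurable)
    (fun x => Complex.norm_exp_I_mul_ofReal (ψ x)) hU ?_
  filter_upwards [h] with p hp hpU
  simpa only [Complex.ofReal_add, mul_add, Complex.exp_add] using hp hpU

end Unimodular

/-- **Separation of variables.** Let `ψ : B(0,2) → ℝ` be measurable and let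
`z̄₁, z̄₂, z̄₃ ∈ ℝ³` with `z̄₄ := z̄₁ + z̄₂ - z̄₃` be such that all four points lie in `B(0,2)`.
If on some neighborhood `U` of `(z̄₁, z̄₂, z̄₃)` one has
`e^{i[ψ(z₁)+ψ(z₂)]} = e^{i[ψ(z₃)+ψ(z₄)]}` (with `z₄ := z₁+z₂-z₃`) for Lebesgue-almost every
`(z₁,z₂,z₃) ∈ U`, then there exist `ξ ∈ ℝ³`, `c ∈ ℂ` with `|c| = 1`, and a neighborhood `V`
of `z̄₁` such that `e^{iψ(w)} = c e^{i w·ξ}` for Lebesgue-almost every `w ∈ V`. -/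
theorem separate_variables (ψ : E3 → ℝ) (hψ : Measurable ψ)
    (z₁ z₂ z₃ : E3) (hz₁ : z₁ ∈ ball (0 : E3) 2) (hz₂ : z₂ ∈ ball (0 : E3) 2)
    (hz₃ : z₃ ∈ ball (0 : E3) 2) (hz₄ : z₁ + z₂ - z₃ ∈ ball (0 : E3) 2)
    (hU : ∃ U ∈ nhds (z₁, z₂, z₃),
      ∀ᵐ p : E3 × E3 × E3 ∂volume, p ∈ U →
        Complex.exp (Complex.I * ((ψ p.1 + ψ p.2.1 : ℝ) : ℂ))
          = Complex.exp (Complex.I * ((ψ p.2.2 + ψ (p.1 + p.2.1 - p.2.2) : ℝ) : ℂ))) :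
    ∃ (ξ : E3) (c : ℂ), ‖c‖ = 1 ∧ ∃ V ∈ nhds z₁,
      ∀ᵐ w ∂(volume : Measure E3), w ∈ V →
        Complex.exp (Complex.I * ((ψ w : ℝ) : ℂ))
          = c * Complex.exp (Complex.I * ((⟪w, ξ⟫ : ℝ) : ℂ)) := by
  obtain ⟨U, hU, h⟩ := hU
  exact separate_variables_general hψ.aemeasurable hU h

end
end

section
/- Let x₁,…,x₄, y₁,…,y₄ ∈ S² satisfy x_j ≠ ±y_j for all j ∈ {1,2,3,4}, and suppose span{x₁,y₁}^⊥ + span{x₂,y₂}^⊥ + span{x₃,y₃}^⊥ + span{x₄,y₄}^⊥ = ℝ³. Then for every (w₁,w₂,w₃,w₄) ∈ (ℝ³)⁴ with w₁ + w₂ = w₃ + w₄, there exist u₁,…,u₄, v₁,…,v₄ ∈ ℝ³ such that u_j ⊥ x_j and v_j ⊥ y_j for all j, u_j + v_j = w_j for all j, u₁ + u₂ = v₃ + v₄, and v₁ + v₂ = u₃ + u₄. -/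
open MeasureTheory Metric Filter
open scoped ENNReal RealInnerProductSpace

noncomputable section

/-!
As `w` is balanced and `u j + v j = w j`, the two balance equations on the `u j` and `v j` amount
to prescribing the single sum of all the `u j`. As `x j` and `y j` are independent, each `w j`
splits as `a j + b j` with `a j ⊥ x j` and `b j ⊥ y j`. Moving `n j ⊥ x j, y j` from `b j` to
`a j` leaves `w j` unchanged, and the spanning hypothesis says that `∑ j, n j` can be made any
prescribed vector.
-/

section Submodule

variable {ι R M : Type*} [Fintype ι] [Ring R] [AddCommGroup M] [Module R M]

lemma exists_mem_sum_eq_of_iSup_eq_top {N : ι → Submodule R M} (hN : ⨆ i, N i = ⊤) (m : M) :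
    ∃ n : ι → M, (∀ i, n i ∈ N i) ∧ ∑ i, n i = m := by
  have hm : m ∈ ⨆ i ∈ Finset.univ, N i := by
    simp only [Finset.mem_univ, iSup_pos, hN, Submodule.mem_top]
  obtain ⟨n, hn⟩ := (Submodule.mem_iSup_finset_iff_exists_sum N m).1 hm
  exact ⟨fun i => n i, fun i => (n i).2, hn⟩

lemma exists_mem_add_eq_and_sum_eq {U V : ι → Submodule R M} (hsup : ∀ i, U i ⊔ V i = ⊤)
    (hinf : ⨆ i, U i ⊓ V i = ⊤) (w : ι → M) (m : M) :
    ∃ u v : ι → M, (∀ i, u i ∈ U i) ∧ (∀ i, v i ∈ V i) ∧ (∀ i, u i + v i = w i) ∧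
      ∑ i, u i = m := by
  have hsplit : ∀ i, ∃ a ∈ U i, ∃ b ∈ V i, a + b = w i := fun i =>
    Submodule.mem_sup.1 (hsup i ▸ Submodule.mem_top)
  choose a ha b hb hab using hsplit
  obtain ⟨n, hn, hsum⟩ := exists_mem_sum_eq_of_iSup_eq_top hinf (m - ∑ i, a i)
  refine ⟨a + n, b - n, fun i => add_mem (ha i) (hn i).1, fun i => sub_mem (hb i) (hn i).2,
    fun i => ?_, ?_⟩
  · rw [← hab i, Pi.add_apply, Pi.sub_apply, add_add_sub_cancel]
  · simp only [Pi.add_apply, Finset.sum_add_distrib, hsum, add_sub_cancel]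

lemma exists_mem_add_eq_and_sum_eq_sum_compl [DecidableEq ι] {U V : ι → Submodule R M}
    (hsup : ∀ i, U i ⊔ V i = ⊤) (hinf : ⨆ i, U i ⊓ V i = ⊤) (s : Finset ι) {w : ι → M}
    (hw : ∑ i ∈ s, w i = ∑ i ∈ sᶜ, w i) :
    ∃ u v : ι → M, (∀ i, u i ∈ U i) ∧ (∀ i, v i ∈ V i) ∧ (∀ i, u i + v i = w i) ∧
      ∑ i ∈ s, u i = ∑ i ∈ sᶜ, v i ∧ ∑ i ∈ s, v i = ∑ i ∈ sᶜ, u i := by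
  obtain ⟨u, v, hu, hv, huv, hsum⟩ := exists_mem_add_eq_and_sum_eq hsup hinf w (∑ i ∈ sᶜ, w i)
  have hadd : ∀ t : Finset ι, ∑ i ∈ t, u i + ∑ i ∈ t, v i = ∑ i ∈ t, w i := fun t => by
    simp only [← Finset.sum_add_distrib, huv]
  have huv_compl : ∑ i ∈ s, u i = ∑ i ∈ sᶜ, v i := by
    rw [← Finset.sum_add_sum_compl s u, ← hadd sᶜ, add_comm] at hsum
    exact add_left_cancel hsum
  refine ⟨u, v, hu, hv, huv, huv_compl, ?_⟩
  rw [← hadd s, ← hadd sᶜ, huv_compl, add_comm] at hw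
  exact add_right_cancel hw

end Submodule

section InnerProductSpace

variable {𝕜 E : Type*} [RCLike 𝕜] [NormedAddCommGroup E] [InnerProductSpace 𝕜 E]

lemma isCoatom_orthogonal_span_singleton {x : E} (hx : x ≠ 0) :
    IsCoatom (Submodule.span 𝕜 {x})ᗮ := by
  have hker : (Submodule.span 𝕜 {x})ᗮ = (innerSL 𝕜 x).toLinearMap.ker := by
    ext v
    exact Submodule.mem_orthogonal_singleton_iff_inner_right
  rw [hker]
  refine LinearMap.isCoatom_ker_of_surjective (LinearMap.surjective fun h => hx ?_)
  exact inner_self_eq_zero.1 (LinearMap.congr_fun h x)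

lemma orthogonal_span_singleton_sup_orthogonal_eq_top {K : Submodule 𝕜 E}
    [K.HasOrthogonalProjection] {x : E} (hx : x ∉ K) : (Submodule.span 𝕜 {x})ᗮ ⊔ Kᗮ = ⊤ := by
  have hx₀ : x ≠ 0 := fun h => hx (h ▸ K.zero_mem)
  refine codisjoint_iff.1 ((isCoatom_orthogonal_span_singleton hx₀).not_le_iff_codisjoint.1 ?_)
  intro hle
  refine hx ?_
  rw [← K.orthogonal_orthogonal, ← Submodule.span_singleton_le_iff_mem,
    ← (Submodule.span 𝕜 {x}).orthogonal_orthogonal]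
  exact Submodule.orthogonal_le hle

theorem submersion_linear_algebra_general {ι : Type*} [Fintype ι] [DecidableEq ι]
    {x y : ι → E} (hxy : ∀ j, x j ∉ Submodule.span 𝕜 {y j})
    (hspan : ⨆ j, (Submodule.span 𝕜 {x j, y j})ᗮ = ⊤)
    (s : Finset ι) {w : ι → E} (hw : ∑ j ∈ s, w j = ∑ j ∈ sᶜ, w j) :
    ∃ u v : ι → E,
      (∀ j, inner 𝕜 (u j) (x j) = 0) ∧ (∀ j, inner 𝕜 (v j) (y j) = 0) ∧
      (∀ j, u j + v j = w j) ∧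
      ∑ j ∈ s, u j = ∑ j ∈ sᶜ, v j ∧ ∑ j ∈ s, v j = ∑ j ∈ sᶜ, u j := by
  simp only [Submodule.span_insert, ← Submodule.inf_orthogonal] at hspan
  simpa only [Submodule.mem_orthogonal_singleton_iff_inner_left] using
    exists_mem_add_eq_and_sum_eq_sum_compl
      (fun j => orthogonal_span_singleton_sup_orthogonal_eq_top (hxy j)) hspan s hw

end InnerProductSpace

lemma mem_span_singleton_iff_eq_or_eq_neg_of_norm_eq {E : Type*} [NormedAddCommGroup E]
    [NormedSpace ℝ E] {x y : E} (h : ‖x‖ = ‖y‖) :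
    x ∈ Submodule.span ℝ {y} ↔ x = y ∨ x = -y := by
  refine ⟨fun hxy => ?_, ?_⟩
  · obtain ⟨c, rfl⟩ := Submodule.mem_span_singleton.1 hxy
    rcases eq_or_ne y 0 with rfl | hy
    · exact Or.inl (smul_zero c)
    have hc : |c| = 1 := by
      rwa [norm_smul, Real.norm_eq_abs, mul_eq_right₀ (norm_ne_zero_iff.2 hy)] at h
    rcases eq_or_eq_neg_of_abs_eq hc with rfl | rfl
    · exact Or.inl (one_smul ℝ y)
    · exact Or.inr (neg_one_smul ℝ y)
  · rintro (rfl | rfl)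
    · exact Submodule.mem_span_singleton_self x
    · exact neg_mem (Submodule.mem_span_singleton_self y)

lemma iSup_fin_four {α : Type*} [CompleteLattice α] {f : Fin 4 → α} :
    ⨆ i, f i = f 0 ⊔ f 1 ⊔ f 2 ⊔ f 3 := by
  rw [← Finset.sup_univ_eq_iSup]
  simp [Fin.univ_succ, sup_assoc]

/-- **Surjectivity of the linearization (submersion property).** Let
`x₁,…,x₄, y₁,…,y₄ ∈ S²` satisfy `x_j ≠ ±y_j` for all `j`, and suppose
`span{x₁,y₁}^⊥ + span{x₂,y₂}^⊥ + span{x₃,y₃}^⊥ + span{x₄,y₄}^⊥ = ℝ³`.  Then for every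
`(w₁,…,w₄) ∈ (ℝ³)⁴` with `w₁ + w₂ = w₃ + w₄` there exist `u₁,…,u₄, v₁,…,v₄ ∈ ℝ³` with
`u_j ⊥ x_j`, `v_j ⊥ y_j`, `u_j + v_j = w_j` for all `j`, `u₁+u₂ = v₃+v₄`, and
`v₁+v₂ = u₃+u₄`. -/
theorem submersion_linear_algebra (x y : Fin 4 → E3)
    (hx : ∀ j, x j ∈ sph) (hy : ∀ j, y j ∈ sph)
    (hne : ∀ j, x j ≠ y j ∧ x j ≠ -y j)
    (hspan : (Submodule.span ℝ {x 0, y 0})ᗮ ⊔ (Submodule.span ℝ {x 1, y 1})ᗮ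
        ⊔ (Submodule.span ℝ {x 2, y 2})ᗮ ⊔ (Submodule.span ℝ {x 3, y 3})ᗮ = ⊤)
    (w : Fin 4 → E3) (hw : w 0 + w 1 = w 2 + w 3) :
    ∃ u v : Fin 4 → E3,
      (∀ j, ⟪u j, x j⟫ = 0) ∧ (∀ j, ⟪v j, y j⟫ = 0) ∧
      (∀ j, u j + v j = w j) ∧
      u 0 + u 1 = v 2 + v 3 ∧ v 0 + v 1 = u 2 + u 3 := by
  have hxy : ∀ j, x j ∉ Submodule.span ℝ {y j} := fun j => by
    have hnorm : ‖x j‖ = ‖y j‖ :=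
      (mem_sphere_zero_iff_norm.1 (hx j)).trans (mem_sphere_zero_iff_norm.1 (hy j)).symm
    rw [mem_span_singleton_iff_eq_or_eq_neg_of_norm_eq hnorm, not_or]
    exact hne j
  have hcompl : ({0, 1} : Finset (Fin 4))ᶜ = {2, 3} := by decide
  simpa [hcompl] using submersion_linear_algebra_general hxy (iSup_fin_four.trans hspan) {0, 1}
    (by simpa [hcompl] using hw)

end
end

section
/- For any w₁, w₂ ∈ ℝ³ with 0 < |w₁| < 2 and 0 < |w₂| < 2, there exist points x₁,…,x₄, y₁,…,y₄ ∈ S² such that x₁ + y₁ = w₁, x₂ + y₂ = w₂, x₁ + x₂ = y₃ + y₄, x₃ + x₄ = y₁ + y₂, no two of the eight points x₁,…,x₄,y₁,…,y₄ are equal or antipodal, and span{x₁,y₁}^⊥ + span{x₂,y₂}^⊥ + span{x₃,y₃}^⊥ + span{x₄,y₄}^⊥ = ℝ³. -/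
open MeasureTheory Metric Filter
open scoped ENNReal RealInnerProductSpace

noncomputable section

/-!
The ways of writing a vector `c` with `0 < ‖c‖ < 2` as a sum of two unit vectors are parametrized
by `sphere 0 1 ∩ sphere c 1`, which is infinite in dimension at least three. Any three of its points
are affinely independent, being on a sphere, hence linearly independent, since `⟪c, ·⟫` is a nonzero
constant on it. So a plane through the origin contains at most two of them, and both summands can be
chosen outside any finite set of planes.

Choosing the pairs `(x₁, y₁)`, `(x₂, y₂)`, `(y₃, y₄)`, `(x₃, x₄)` in this order, each avoiding the
planes spanned by the earlier pairs, makes the eight points distinct up to sign. By duality the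
spanning condition follows once the planes `span {xⱼ, yⱼ}`, `j = 1, 2, 3`, have trivial
intersection, and this only asks `x₃` to avoid one more plane.
-/

open Module Submodule

section LinearAlgebra

variable {K V : Type*} [DivisionRing K] [AddCommGroup V] [Module K V]

theorem linearIndependent_of_affineIndependent_of_forall_eq {ι : Type*} {p : ι → V}
    (hp : AffineIndependent K p) (φ : V →ₗ[K] K) {a : K} (ha : a ≠ 0) (hφ : ∀ i, φ (p i) = a) :
    LinearIndependent K p := by
  refine linearIndependent_iff'.2 fun s w hw => affineIndependent_iff.1 hp s w ?_ hw
  have h : (∑ i ∈ s, w i) * a = 0 := by simpa [hφ, Finset.sum_mul] using congrArg φ hw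
  exact (mul_eq_zero.1 h).resolve_right ha

theorem finrank_span_pair_le (x y : V) : finrank K (span K {x, y}) ≤ 2 := by
  classical
  exact (finrank_span_le_card _).trans (by simpa using Finset.card_le_two)

theorem finrank_span_singleton_le (x : V) : finrank K (span K {x}) ≤ 1 := by
  simpa using finrank_span_le_card (R := K) ({x} : Set V)

theorem finrank_inf_sup_span_singleton_le {P Q : Submodule K V} [FiniteDimensional K Q]
    {n : ℕ} (hQ : finrank K Q ≤ n) (hQP : ¬ Q ≤ P) (y : V) :
    finrank K ↥(P ⊓ Q ⊔ span K {y}) ≤ n := by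
  have hlt : finrank K ↥(P ⊓ Q) < finrank K Q :=
    finrank_lt_finrank_of_lt (inf_le_right.lt_of_not_ge fun h => hQP (h.trans inf_le_left))
  have hadd := finrank_add_le_finrank_add_finrank (P ⊓ Q) (span K {y})
  have hy := finrank_span_singleton_le (K := K) y
  lia

theorem disjoint_span_pair {L : Submodule K V} {x y : V} (hy : y ∉ L)
    (hx : x ∉ L ⊔ span K {y}) : Disjoint L (span K {x, y}) := by
  have disjoint_singleton {M : Submodule K V} {z : V} (hz : z ∉ M) : Disjoint M (span K {z}) :=
    disjoint_span_singleton.2 fun h => absurd h hz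
  rw [span_insert, sup_comm]
  exact (disjoint_singleton hy).disjoint_sup_right_of_disjoint_sup_left (disjoint_singleton hx)

end LinearAlgebra

section DistinctUpToSign

variable {E : Type*}

/-- Neither equal nor antipodal: the genericity required of any two points of a configuration. -/
def DistinctUpToSign [Neg E] (x y : E) : Prop := x ≠ y ∧ x ≠ -y

theorem DistinctUpToSign.symm [InvolutiveNeg E] {x y : E} (h : DistinctUpToSign x y) :
    DistinctUpToSign y x :=
  ⟨h.1.symm, fun hyx => h.2 (by rw [hyx, neg_neg])⟩

theorem distinctUpToSign_of_notMem {S : Type*} [InvolutiveNeg E] [SetLike S E] [NegMemClass S E]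
    {P : S} {x y : E} (hx : x ∈ P) (hy : y ∉ P) : DistinctUpToSign x y :=
  ⟨fun h => hy (h ▸ hx), fun h => hy (neg_mem_iff.1 (h ▸ hx))⟩

theorem pairwise_distinctUpToSign {ι K : Type*} [LinearOrder ι] [Ring K] [AddCommGroup E]
    [Module K E] {z : ι → Fin 2 → E} (hz : ∀ k, DistinctUpToSign (z k 0) (z k 1))
    (hlt : ∀ k l, k < l → ∀ i, z l i ∉ span K {z k 0, z k 1}) :
    Pairwise fun p q : ι × Fin 2 => DistinctUpToSign (z p.1 p.2) (z q.1 q.2) := by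
  have mem_span (k : ι) (i : Fin 2) : z k i ∈ span K {z k 0, z k 1} :=
    subset_span (by fin_cases i <;> simp)
  rintro ⟨k, i⟩ ⟨l, j⟩ hne
  rcases lt_trichotomy k l with hkl | rfl | hlk
  · exact distinctUpToSign_of_notMem (mem_span k i) (hlt k l hkl j)
  · fin_cases i <;> fin_cases j
    exacts [absurd rfl hne, hz k, (hz k).symm, absurd rfl hne]
  · exact (distinctUpToSign_of_notMem (mem_span l j) (hlt l k hlk i)).symm

theorem distinctUpToSign_iff_norm_add_mem_Ioo [NormedAddCommGroup E] [NormedSpace ℝ E]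
    [StrictConvexSpace ℝ E] {x y : E} (h : ‖x‖ = ‖y‖) :
    DistinctUpToSign x y ↔ ‖x + y‖ ∈ Set.Ioo 0 (‖x‖ + ‖y‖) := by
  rw [DistinctUpToSign, and_comm, Set.mem_Ioo, norm_pos_iff, ← not_sameRay_iff_of_norm_eq h,
    not_sameRay_iff_norm_add_lt, Ne, eq_neg_iff_add_eq_zero]

end DistinctUpToSign

section SphereIntersection

variable {E : Type*} [NormedAddCommGroup E] [InnerProductSpace ℝ E]

theorem inner_eq_of_mem_sphere_inter_sphere {c x : E} {r : ℝ}
    (hx : x ∈ sphere 0 r ∩ sphere c r) : ⟪c, x⟫ = ‖c‖ ^ 2 / 2 := by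
  have h := norm_sub_sq_real c x
  rw [← dist_eq_norm, mem_sphere'.1 hx.2, mem_sphere_zero_iff_norm.1 hx.1] at h
  linarith

theorem linearIndependent_of_mem_sphere_inter_sphere {c : E} (hc : c ≠ 0) {r : ℝ} {p : Fin 3 → E}
    (hp : ∀ i, p i ∈ sphere 0 r ∩ sphere c r) (hinj : p.Injective) : LinearIndependent ℝ p := by
  have hcosph : EuclideanGeometry.Cospherical (sphere (0 : E) r) := ⟨0, r, fun _ => id⟩
  exact linearIndependent_of_affineIndependent_of_forall_eq (a := ‖c‖ ^ 2 / 2)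
    (hcosph.affineIndependent (Set.range_subset_iff.2 fun i => (hp i).1) hinj) (innerₗ E c)
    (by positivity) fun i => inner_eq_of_mem_sphere_inter_sphere (hp i)

theorem finite_sphere_inter_sphere_inter {c : E} (hc : c ≠ 0) (r : ℝ)
    {P : Submodule ℝ E} [FiniteDimensional ℝ P] (hP : finrank ℝ P ≤ 2) :
    (sphere 0 r ∩ sphere c r ∩ (P : Set E)).Finite := by
  by_contra hinf
  obtain ⟨p⟩ : Nonempty (Fin 3 ↪ ↥(sphere 0 r ∩ sphere c r ∩ (P : Set E))) :=
    ⟨Fin.valEmbedding.trans (Set.Infinite.natEmbedding _ hinf)⟩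
  have hli : LinearIndependent ℝ fun i => (p i : E) :=
    linearIndependent_of_mem_sphere_inter_sphere hc (fun i => (p i).2.1)
      (Subtype.val_injective.comp p.injective)
  have hliP : LinearIndependent ℝ fun i => (⟨p i, (p i).2.2⟩ : P) :=
    LinearIndependent.of_comp P.subtype hli
  have hcard := hliP.fintype_card_le_finrank
  rw [Fintype.card_fin] at hcard
  lia

theorem infinite_sphere (hE : 1 < Module.rank ℝ E) (x : E) {r : ℝ} (hr : 0 < r) :
    (sphere x r).Infinite := by
  have : Nontrivial E := rank_pos_iff_nontrivial.1 (zero_lt_one.trans hE)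
  obtain ⟨v, hv⟩ := (NormedSpace.sphere_nonempty (x := (0 : E))).2 hr.le
  have hv' := mem_sphere_zero_iff_norm.1 hv
  refine (isPreconnected_sphere hE x r).infinite_of_nontrivial
    ⟨x + v, by simp [hv'], x - v, by simp [hv'], fun h => ?_⟩
  rw [sub_eq_add_neg, add_right_inj] at h
  exact ne_neg_of_mem_sphere ℝ hr.ne' ⟨v, hv⟩ (Subtype.ext h)

theorem half_smul_add_mem_sphere_inter_sphere {c v : E} {r : ℝ} (hr : 0 ≤ r) (hcv : ⟪c, v⟫ = 0)
    (hv : ‖v‖ ^ 2 = r ^ 2 - ‖c‖ ^ 2 / 4) :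
    (2⁻¹ : ℝ) • c + v ∈ sphere 0 r ∩ sphere c r := by
  have hhalf : ‖(2⁻¹ : ℝ) • c‖ ^ 2 = ‖c‖ ^ 2 / 4 := by
    rw [norm_smul, mul_pow, Real.norm_eq_abs, sq_abs]; ring
  have hadd := norm_add_sq_real ((2⁻¹ : ℝ) • c) v
  have hsub := norm_sub_sq_real ((2⁻¹ : ℝ) • c) v
  rw [real_inner_smul_left, hcv, hhalf, hv] at hadd hsub
  have hc : c - ((2⁻¹ : ℝ) • c + v) = (2⁻¹ : ℝ) • c - v := by module
  rw [Set.mem_inter_iff, mem_sphere_zero_iff_norm, mem_sphere', dist_eq_norm, hc,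
    ← sq_eq_sq₀ (norm_nonneg _) hr, ← sq_eq_sq₀ (norm_nonneg _) hr]
  constructor <;> linarith

theorem infinite_sphere_inter_sphere (hE : 2 < finrank ℝ E) {c : E} {r : ℝ}
    (hc : ‖c‖ < 2 * r) : (sphere 0 r ∩ sphere c r).Infinite := by
  have hr : 0 < r := by linarith [norm_nonneg c]
  have hrank : 1 < Module.rank ℝ (ℝ ∙ c)ᗮ := by
    have : FiniteDimensional ℝ E := .of_finrank_pos (by lia)
    have hsum := finrank_add_finrank_orthogonal (ℝ ∙ c)
    have hspan := finrank_span_singleton_le (K := ℝ) c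
    exact one_lt_rank_of_one_lt_finrank (by lia)
  have hρ : 0 < r ^ 2 - ‖c‖ ^ 2 / 4 := by nlinarith [norm_nonneg c]
  have hinj : Set.InjOn (fun v : (ℝ ∙ c)ᗮ => (2⁻¹ : ℝ) • c + (v : E))
      (sphere 0 √(r ^ 2 - ‖c‖ ^ 2 / 4)) :=
    ((add_right_injective _).comp Subtype.val_injective).injOn
  refine ((infinite_sphere hrank 0 (Real.sqrt_pos.2 hρ)).image hinj).mono ?_
  rintro _ ⟨v, hv, rfl⟩
  refine half_smul_add_mem_sphere_inter_sphere hr.le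
    (mem_orthogonal_singleton_iff_inner_right.1 v.2) ?_
  rw [← coe_norm, mem_sphere_zero_iff_norm.1 hv, Real.sq_sqrt hρ.le]

theorem exists_add_eq_forall_notMem (hE : 2 < finrank ℝ E) {c : E} (h₀ : 0 < ‖c‖) (h₂ : ‖c‖ < 2)
    {S : Set (Submodule ℝ E)} (hS : S.Finite) (hrank : ∀ P ∈ S, finrank ℝ P ≤ 2) :
    ∃ x ∈ sphere (0 : E) 1, ∃ y ∈ sphere (0 : E) 1, x + y = c ∧ DistinctUpToSign x y ∧
      ∀ P ∈ S, x ∉ P ∧ y ∉ P := by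
  have : FiniteDimensional ℝ E := .of_finrank_pos (by lia)
  let C : Set E := sphere 0 1 ∩ sphere c 1
  have sub_mem {x : E} (hx : x ∈ C) : c - x ∈ C := by
    simpa [C, dist_eq_norm, norm_sub_rev, and_comm] using hx
  let bad : Set E := ⋃ P ∈ S, C ∩ P ∪ (c - ·) ⁻¹' (C ∩ P)
  have hbad : bad.Finite := hS.biUnion fun P hP =>
    have hfin := finite_sphere_inter_sphere_inter (norm_pos_iff.1 h₀) 1 (hrank P hP)
    hfin.union (hfin.preimage sub_right_injective.injOn)
  have hinf : C.Infinite := infinite_sphere_inter_sphere hE (by linarith)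
  obtain ⟨x, hx, hx_good⟩ := (hinf.sdiff hbad).nonempty
  have hy := sub_mem hx
  refine ⟨x, hx.1, c - x, hy.1, add_sub_cancel x c, ?_, fun P hP => ⟨fun hxP => ?_, fun hyP => ?_⟩⟩
  · have hx1 := mem_sphere_zero_iff_norm.1 hx.1
    have hy1 := mem_sphere_zero_iff_norm.1 hy.1
    rw [distinctUpToSign_iff_norm_add_mem_Ioo (hx1.trans hy1.symm), add_sub_cancel, hx1, hy1]
    exact ⟨h₀, by linarith⟩
  · exact hx_good (Set.mem_biUnion hP (.inl ⟨hx, hxP⟩))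
  · exact hx_good (Set.mem_biUnion hP (.inr ⟨hy, hyP⟩))

theorem exists_add_eq_add_forall_notMem (hE : 2 < finrank ℝ E) {u v : E} (hu : u ∈ sphere 0 1)
    (hv : v ∈ sphere 0 1) (huv : DistinctUpToSign u v)
    {S : Set (Submodule ℝ E)} (hS : S.Finite) (hrank : ∀ P ∈ S, finrank ℝ P ≤ 2) :
    ∃ x ∈ sphere (0 : E) 1, ∃ y ∈ sphere (0 : E) 1, x + y = u + v ∧ DistinctUpToSign x y ∧
      ∀ P ∈ S, x ∉ P ∧ y ∉ P := by
  rw [mem_sphere_zero_iff_norm] at hu hv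
  rw [distinctUpToSign_iff_norm_add_mem_Ioo (hu.trans hv.symm), hu, hv, one_add_one_eq_two] at huv
  exact exists_add_eq_forall_notMem hE huv.1 huv.2 hS hrank

end SphereIntersection

section Orthogonal

variable {𝕜 E : Type*} [RCLike 𝕜] [NormedAddCommGroup E] [InnerProductSpace 𝕜 E]
  [FiniteDimensional 𝕜 E]

theorem sup_orthogonal_eq_orthogonal_inf (P Q : Submodule 𝕜 E) : Pᗮ ⊔ Qᗮ = (P ⊓ Q)ᗮ := by
  rw [← orthogonal_orthogonal (Pᗮ ⊔ Qᗮ), ← inf_orthogonal, orthogonal_orthogonal,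
    orthogonal_orthogonal]

theorem sup_orthogonal_eq_top_of_disjoint {P Q R : Submodule 𝕜 E} (h : Disjoint (P ⊓ Q) R) :
    Pᗮ ⊔ Qᗮ ⊔ Rᗮ = ⊤ := by
  rw [sup_orthogonal_eq_orthogonal_inf, sup_orthogonal_eq_orthogonal_inf, h.eq_bot,
    bot_orthogonal_eq_top]

end Orthogonal

section Configuration

variable {E : Type*} [NormedAddCommGroup E] [InnerProductSpace ℝ E] {w₁ w₂ : E}

/-- In the order of construction, the pairs `z k` are `(x₁, y₁)`, `(x₂, y₂)`, `(y₃, y₄)`, `(x₃, x₄)`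
in the notation of the configuration, so `span {x₃, y₃}` reads `span {z 3 0, z 2 0}`. -/
theorem exists_generic_pairs (hE : 2 < finrank ℝ E)
    (hw₁ : 0 < ‖w₁‖) (hw₁' : ‖w₁‖ < 2) (hw₂ : 0 < ‖w₂‖) (hw₂' : ‖w₂‖ < 2) :
    ∃ z : Fin 4 → Fin 2 → E, (∀ k i, z k i ∈ sphere 0 1) ∧
      z 0 0 + z 0 1 = w₁ ∧ z 1 0 + z 1 1 = w₂ ∧
      z 2 0 + z 2 1 = z 0 0 + z 1 0 ∧ z 3 0 + z 3 1 = z 0 1 + z 1 1 ∧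
      (∀ k, DistinctUpToSign (z k 0) (z k 1)) ∧
      (∀ k l, k < l → ∀ i, z l i ∉ span ℝ {z k 0, z k 1}) ∧
      Disjoint (span ℝ {z 0 0, z 0 1} ⊓ span ℝ {z 1 0, z 1 1}) (span ℝ {z 3 0, z 2 0}) := by
  have : FiniteDimensional ℝ E := .of_finrank_pos (by lia)
  obtain ⟨x₀, hx₀, y₀, hy₀, hadd₀, hxy₀, -⟩ :=
    exists_add_eq_forall_notMem hE hw₁ hw₁' Set.finite_empty (by simp)
  obtain ⟨x₁, hx₁, y₁, hy₁, hadd₁, hxy₁, havoid₁⟩ :=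
    exists_add_eq_forall_notMem hE hw₂ hw₂' (Set.toFinite {span ℝ {x₀, y₀}})
      (by simp [finrank_span_pair_le])
  have hxx : DistinctUpToSign x₀ x₁ :=
    distinctUpToSign_of_notMem (mem_span_of_mem (by simp)) (havoid₁ _ rfl).1
  have hyy : DistinctUpToSign y₀ y₁ :=
    distinctUpToSign_of_notMem (mem_span_of_mem (by simp)) (havoid₁ _ rfl).2
  have hrank : ∀ y, finrank ℝ ↥(span ℝ {x₀, y₀} ⊓ span ℝ {x₁, y₁} ⊔ ℝ ∙ y) ≤ 2 :=
    finrank_inf_sup_span_singleton_le (finrank_span_pair_le x₁ y₁)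
      fun h => (havoid₁ _ rfl).1 (h (mem_span_of_mem (by simp)))
  obtain ⟨y₂, hy₂, y₃, hy₃, hadd₂, hyy₂, havoid₂⟩ :=
    exists_add_eq_add_forall_notMem hE hx₀ hx₁ hxx
      (Set.toFinite {span ℝ {x₀, y₀}, span ℝ {x₁, y₁}}) (by simp [finrank_span_pair_le])
  -- The last avoided subspace keeps `span {x₂, y₂}` away from the line common to the first two.
  obtain ⟨x₂, hx₂, x₃, hx₃, hadd₃, hxx₂, havoid₃⟩ :=
    exists_add_eq_add_forall_notMem hE hy₀ hy₁ hyy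
      (Set.toFinite {span ℝ {x₀, y₀}, span ℝ {x₁, y₁}, span ℝ {y₂, y₃},
        span ℝ {x₀, y₀} ⊓ span ℝ {x₁, y₁} ⊔ ℝ ∙ y₂}) (by simp [finrank_span_pair_le, hrank])
  simp only [Set.mem_insert_iff, Set.mem_singleton_iff, forall_eq_or_imp, forall_eq]
    at havoid₁ havoid₂ havoid₃
  refine
    ⟨![![x₀, y₀], ![x₁, y₁], ![y₂, y₃], ![x₂, x₃]], ?_, hadd₀, hadd₁, hadd₂, hadd₃, ?_, ?_,
      disjoint_span_pair (fun h => havoid₂.1.1 h.1) havoid₃.2.2.2.1⟩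
  · simp_all [Fin.forall_fin_succ]
  · simp [Fin.forall_fin_succ, *]
  · simp [Fin.forall_fin_succ, havoid₁, havoid₂, havoid₃]

theorem exists_good_configuration_general (hE : 2 < finrank ℝ E)
    (hw₁ : 0 < ‖w₁‖) (hw₁' : ‖w₁‖ < 2) (hw₂ : 0 < ‖w₂‖) (hw₂' : ‖w₂‖ < 2) :
    ∃ x y : Fin 4 → E,
      (∀ j, x j ∈ sphere 0 1) ∧ (∀ j, y j ∈ sphere 0 1) ∧
      x 0 + y 0 = w₁ ∧ x 1 + y 1 = w₂ ∧
      x 0 + x 1 = y 2 + y 3 ∧ x 2 + x 3 = y 0 + y 1 ∧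
      (∀ i j : Fin 4, i ≠ j → x i ≠ x j ∧ x i ≠ -x j) ∧
      (∀ i j : Fin 4, i ≠ j → y i ≠ y j ∧ y i ≠ -y j) ∧
      (∀ i j : Fin 4, x i ≠ y j ∧ x i ≠ -y j) ∧
      (span ℝ {x 0, y 0})ᗮ ⊔ (span ℝ {x 1, y 1})ᗮ
        ⊔ (span ℝ {x 2, y 2})ᗮ ⊔ (span ℝ {x 3, y 3})ᗮ = ⊤ := by
  have : FiniteDimensional ℝ E := .of_finrank_pos (by lia)
  obtain ⟨z, hz, h₁, h₂, hy, hx, hself, hlt, hdisj⟩ :=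
    exists_generic_pairs hE hw₁ hw₁' hw₂ hw₂'
  have hpair := pairwise_distinctUpToSign hself hlt
  let a : Fin 4 → Fin 4 × Fin 2 := ![(0, 0), (1, 0), (3, 0), (3, 1)]
  let b : Fin 4 → Fin 4 × Fin 2 := ![(0, 1), (1, 1), (2, 0), (2, 1)]
  have ha : a.Injective := by decide
  have hb : b.Injective := by decide
  have hab : ∀ i j, a i ≠ b j := by decide
  exact ⟨fun i => z (a i).1 (a i).2, fun i => z (b i).1 (b i).2, fun _ => hz _ _, fun _ => hz _ _,
    h₁, h₂, hy.symm, hx, fun i j hij => hpair (ha.ne hij), fun i j hij => hpair (hb.ne hij),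
    fun i j => hpair (hab i j),
    top_unique ((sup_orthogonal_eq_top_of_disjoint hdisj).ge.trans le_sup_left)⟩

end Configuration

/-- **Existence of good configurations above any pair of base points.** For any
`w₁, w₂ ∈ ℝ³` with `0 < |w₁| < 2` and `0 < |w₂| < 2` there exist
`x₁,…,x₄, y₁,…,y₄ ∈ S²` with `x₁+y₁ = w₁`, `x₂+y₂ = w₂`, `x₁+x₂ = y₃+y₄`,
`x₃+x₄ = y₁+y₂`, such that no two of the eight points are equal or antipodal and
`span{x₁,y₁}^⊥ + span{x₂,y₂}^⊥ + span{x₃,y₃}^⊥ + span{x₄,y₄}^⊥ = ℝ³`. -/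
theorem exists_good_configuration (w₁ w₂ : E3)
    (hw₁ : 0 < ‖w₁‖) (hw₁' : ‖w₁‖ < 2) (hw₂ : 0 < ‖w₂‖) (hw₂' : ‖w₂‖ < 2) :
    ∃ x y : Fin 4 → E3,
      (∀ j, x j ∈ sph) ∧ (∀ j, y j ∈ sph) ∧
      x 0 + y 0 = w₁ ∧ x 1 + y 1 = w₂ ∧
      x 0 + x 1 = y 2 + y 3 ∧ x 2 + x 3 = y 0 + y 1 ∧
      (∀ i j : Fin 4, i ≠ j → x i ≠ x j ∧ x i ≠ -x j) ∧
      (∀ i j : Fin 4, i ≠ j → y i ≠ y j ∧ y i ≠ -y j) ∧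
      (∀ i j : Fin 4, x i ≠ y j ∧ x i ≠ -y j) ∧
      (Submodule.span ℝ {x 0, y 0})ᗮ ⊔ (Submodule.span ℝ {x 1, y 1})ᗮ
        ⊔ (Submodule.span ℝ {x 2, y 2})ᗮ ⊔ (Submodule.span ℝ {x 3, y 3})ᗮ = ⊤ :=
  exists_good_configuration_general (by simp) hw₁ hw₁' hw₂ hw₂'

end
end
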